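/- Let {F_n} be the Fibonacci sequence with F_0 = F_1 = 1. Then the real number ξ1 = ∏_{n=1}^∞ (1 + 1/F_n) is transcendental over ℚ. -/

import Mathlib

open scoped BigOperators

noncomputable section

/-- Fibonacci sequence with `F 0 = F 1 = 1`. -/
def F : ℕ → ℕ
  | 0 => 1
  | 1 => 1
  | n + 2 => F (n + 1) + F n

/-- The golden ratio conjugate `β = (√5 - 1)/2`. -/
noncomputable def β : ℝ := (Real.sqrt 5 - 1) / 2

/-- Jacobi theta function `θ₂(q) = 2 q^{1/4} ∑_{n≥0} q^{n(n+1)}`. -/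
noncomputable def θ2 (q : ℝ) : ℝ := 2 * q ^ ((1 : ℝ) / 4) * ∑' n : ℕ, q ^ (n * (n + 1))

/-- Jacobi theta function `θ₃(q) = 1 + 2 ∑_{n≥1} q^{n²}`. -/
noncomputable def θ3 (q : ℝ) : ℝ := 1 + 2 * ∑' n : ℕ, q ^ ((n + 1) ^ 2)

/-- Jacobi theta function `θ₄(q) = 1 + 2 ∑_{n≥1} (-1)^n q^{n²}`. -/
noncomputable def θ4 (q : ℝ) : ℝ := 1 + 2 * ∑' n : ℕ, (-1 : ℝ) ^ (n + 1) * q ^ ((n + 1) ^ 2)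

/-! Put `Q = φ⁻²`, where `φ` is the golden ratio. By Binet's formula and Cassini's identity, four
consecutive factors of the product are, up to telescoping, a quotient of factors `1 + Q ^ n`, so
the product is an algebraic number times `f = ∏ (1 + Q ^ (2 n + 1)) (1 + Q ^ (2 n + 2)) ^ 2`. If
`f` were algebraic, the linear relation between the 24th powers of the three Weber functions would
become a cubic equation with algebraic coefficients, and the value of `Δ(2τ) / Δ(τ)` at the nome
`Q ^ 2` would be algebraic. Then so would be `j(τ)`, contradicting the theorem of Barré-Sirieix,
Diaz, Gramain and Philibert that an algebraic nome and an algebraic value of `j` never occur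
together.

For that theorem, Siegel's lemma gives a polynomial `P` with integer coefficients such that
`P(q, j(q))`, multiplied by a power of `Δ(2τ) / Δ(τ)`, vanishes to high order at `q = 0`. Hence
`P(q ^ p, j(pτ))` is very small for large `p`, but not zero for a suitable prime `p`. On the other
hand, the modular equation bounds the degree and the conjugates of `j(pτ)`, so that Liouville's
inequality bounds this number from below.
-/

namespace FibonacciProduct

open Filter Topology Metric PowerSeries UpperHalfPlane

/-- The nome `exp (2 π i τ)`. -/
local notation "𝕢" => Function.Periodic.qParam 1

/-! ### Power series with integer coefficients on the unit disc -/

section IntSeries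

/-- `h` is, on the open unit disc, the sum of the power series `a` with integer coefficients. The
values of `h` outside the disc are arbitrary. -/
def HasIntSeries (h : ℂ → ℂ) (a : ℤ⟦X⟧) : Prop :=
  ∀ z : ℂ, ‖z‖ < 1 → HasSum (fun n => ((coeff n a : ℤ) : ℂ) * z ^ n) (h z)

variable {h k : ℂ → ℂ} {a b : ℤ⟦X⟧}

lemma HasIntSeries.add (ha : HasIntSeries h a) (hb : HasIntSeries k b) :
    HasIntSeries (h + k) (a + b) := fun z hz => by
  simpa [add_mul] using (ha z hz).add (hb z hz)

lemma HasIntSeries.neg (ha : HasIntSeries h a) : HasIntSeries (-h) (-a) := fun z hz => by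
  simpa using (ha z hz).neg

lemma HasIntSeries.mul (ha : HasIntSeries h a) (hb : HasIntSeries k b) :
    HasIntSeries (h * k) (a * b) := by
  intro z hz
  have hsa := (ha z hz).summable.norm
  have hsb := (hb z hz).summable.norm
  have hsum := (summable_norm_sum_mul_antidiagonal_of_summable_norm hsa hsb).of_norm.hasSum
  rw [← tsum_mul_tsum_eq_tsum_sum_antidiagonal_of_summable_norm hsa hsb,
    (ha z hz).tsum_eq, (hb z hz).tsum_eq] at hsum
  refine hsum.congr_fun fun n => ?_
  rw [coeff_mul, Int.cast_sum, Finset.sum_mul]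
  refine Finset.sum_congr rfl fun x hx => ?_
  rw [← Finset.HasAntidiagonal.mem_antidiagonal.1 hx, pow_add, Int.cast_mul]
  ring

lemma hasIntSeries_monomial (m : ℕ) (c : ℤ) :
    HasIntSeries (fun z => c * z ^ m) (monomial m c) := by
  intro z _
  convert hasSum_single (f := fun n => ((coeff n (monomial m c) : ℤ) : ℂ) * z ^ n) m
    (fun n hn => by simp [coeff_monomial, hn]) using 1
  simp

lemma hasIntSeries_one : HasIntSeries 1 1 := by
  simpa [← Pi.one_def] using hasIntSeries_monomial 0 1

/-- The pairs of a function on the disc and its power series with integer coefficients. -/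
def intSeriesGraph : Subring ((ℂ → ℂ) × ℤ⟦X⟧) where
  carrier := {x | HasIntSeries x.1 x.2}
  mul_mem' := HasIntSeries.mul
  one_mem' := hasIntSeries_one
  add_mem' := HasIntSeries.add
  zero_mem' := by simpa [← Pi.zero_def] using hasIntSeries_monomial 0 0
  neg_mem' := HasIntSeries.neg

/-- The ring of functions that are given on the open unit disc by a power series with integer
coefficients. -/
def intSeriesRing : Subring (ℂ → ℂ) := intSeriesGraph.map (RingHom.fst _ _)

lemma mem_intSeriesRing : h ∈ intSeriesRing ↔ ∃ a, HasIntSeries h a :=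
  ⟨fun ⟨⟨_, a⟩, ha, hh⟩ => ⟨a, hh ▸ ha⟩, fun ⟨a, ha⟩ => ⟨(h, a), ha, rfl⟩⟩

lemma HasIntSeries.mem (ha : HasIntSeries h a) : h ∈ intSeriesRing := mem_intSeriesRing.2 ⟨a, ha⟩

lemma id_mem_intSeriesRing : (fun z : ℂ => z) ∈ intSeriesRing :=
  HasIntSeries.mem (by simpa using hasIntSeries_monomial 1 1)

lemma HasIntSeries.pow (ha : HasIntSeries h a) (n : ℕ) : HasIntSeries (h ^ n) (a ^ n) :=
  pow_mem (S := intSeriesGraph) (x := (h, a)) ha n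

lemma HasIntSeries.sum_zsmul {ι : Type*} (s : Finset ι) {h : ι → ℂ → ℂ} {a : ι → ℤ⟦X⟧}
    (ha : ∀ i, HasIntSeries (h i) (a i)) (c : ι → ℤ) :
    HasIntSeries (∑ i ∈ s, c i • h i) (∑ i ∈ s, c i • a i) := by
  have hsum : ∑ i ∈ s, c i • (h i, a i) ∈ intSeriesGraph :=
    sum_mem fun i _ => zsmul_mem (ha i) (c i)
  have hpair : HasIntSeries (∑ i ∈ s, c i • (h i, a i)).1 (∑ i ∈ s, c i • (h i, a i)).2 := hsum
  simpa only [Prod.fst_sum, Prod.snd_sum, Prod.smul_mk] using hpair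

lemma HasIntSeries.congr (ha : HasIntSeries h a) (hk : ∀ z, ‖z‖ < 1 → k z = h z) :
    HasIntSeries k a := fun z hz => hk z hz ▸ ha z hz

lemma HasIntSeries.hasFPowerSeriesOnBall (ha : HasIntSeries h a) :
    HasFPowerSeriesOnBall h
      (FormalMultilinearSeries.ofScalars ℂ (𝕜 := ℂ) fun n => ((coeff n a : ℤ) : ℂ)) 0 1 := by
  refine ⟨ENNReal.le_of_forall_nnreal_lt fun r hr => ?_, one_pos, fun {y} hy => ?_⟩
  · refine FormalMultilinearSeries.le_radius_of_summable _ ?_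
    simpa [FormalMultilinearSeries.ofScalars_norm] using
      (ha ((r : ℝ) : ℂ) (by simpa using hr)).summable.norm
  · have hy' : ‖y‖ < 1 := by simpa [enorm_eq_nnnorm, ← NNReal.coe_lt_coe] using hy
    simpa [FormalMultilinearSeries.ofScalars_apply_eq, mul_comm] using ha y hy'

lemma differentiableOn_of_mem_intSeriesRing (hh : h ∈ intSeriesRing) :
    DifferentiableOn ℂ h (ball 0 1) := by
  obtain ⟨a, ha⟩ := mem_intSeriesRing.1 hh
  simpa [← Metric.eball_ofReal] using ha.hasFPowerSeriesOnBall.differentiableOn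

lemma HasIntSeries.apply_zero (ha : HasIntSeries h a) : h 0 = (constantCoeff a : ℤ) := by
  have hconst := hasSum_single (f := fun n => ((coeff n a : ℤ) : ℂ) * (0 : ℂ) ^ n) 0
    (fun n hn => by simp [hn])
  simpa using (ha 0 (by simp)).unique hconst

lemma HasIntSeries.exists_of_X_pow_mul {m : ℕ} (ha : HasIntSeries h (X ^ m * b)) :
    ∃ k, HasIntSeries k b ∧ ∀ z : ℂ, ‖z‖ < 1 → h z = z ^ m * k z := by
  have hk : HasIntSeries (fun z => ∑' n, ((coeff n b : ℤ) : ℂ) * z ^ n) b := by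
    intro z hz
    refine Summable.hasSum ?_
    rcases eq_or_ne z 0 with rfl | hz0
    · exact (hasSum_single 0 fun n hn => by simp [hn]).summable
    · have hs := ((summable_nat_add_iff m).2 (ha z hz).summable).mul_left (z ^ m)⁻¹
      refine hs.congr fun n => ?_
      rw [add_comm, coeff_X_pow_mul', if_pos (Nat.le_add_right m n), Nat.add_sub_cancel_left,
        pow_add]
      field_simp
  refine ⟨_, hk, fun z hz => ?_⟩
  have hmul := (hasIntSeries_monomial m 1).mul hk
  rw [← X_pow_eq] at hmul
  simpa using (ha z hz).unique (hmul z hz)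

lemma HasIntSeries.comp_pow (ha : HasIntSeries h a) {p : ℕ} (hp : p ≠ 0) :
    HasIntSeries (fun z => h (z ^ p)) (a.expand p hp) := by
  intro z hz
  have hsum := ha (z ^ p) (by rw [norm_pow]; exact pow_lt_one₀ (norm_nonneg _) hz hp)
  refine ((mul_right_injective₀ hp).hasSum_iff fun n hn => ?_).1 (hsum.congr_fun fun n => ?_)
  · have hdvd : ¬ p ∣ n := fun ⟨c, hc⟩ => hn ⟨c, hc.symm⟩
    rw [coeff_expand_of_not_dvd p hp a hdvd, Int.cast_zero, zero_mul]
  · simp [coeff_expand_mul, pow_mul]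

lemma sum_pow_eq_zero_of_not_dvd {ζ : ℂ} {p n : ℕ} (hζ : IsPrimitiveRoot ζ p) (hn : ¬ p ∣ n) :
    ∑ b ∈ Finset.range p, (ζ ^ n) ^ b = 0 := by
  have hne : ζ ^ n ≠ 1 := fun h => hn ((hζ.pow_eq_one_iff_dvd n).1 h)
  rw [geom_sum_eq hne, pow_right_comm, hζ.pow_eq_one, one_pow, sub_self, zero_div]

/-- The series `∑ p * a (p n) X ^ n`, the trace of `a` under `z ↦ z ^ p`. -/
def rootSumSeries (p : ℕ) (a : ℤ⟦X⟧) : ℤ⟦X⟧ := PowerSeries.mk fun n => p * coeff (p * n) a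

lemma HasIntSeries.hasSum_sum_roots (ha : HasIntSeries h a) {p : ℕ} (hp : p ≠ 0) {ζ : ℂ}
    (hζ : IsPrimitiveRoot ζ p) {w : ℂ} (hw : ‖w‖ < 1) :
    HasSum (fun n => ((coeff n (rootSumSeries p a) : ℤ) : ℂ) * (w ^ p) ^ n)
      (∑ b ∈ Finset.range p, h (ζ ^ b * w)) := by
  have hζ1 : ‖ζ‖ = 1 := hζ.norm'_eq_one hp
  have hsum : HasSum (fun n => ∑ b ∈ Finset.range p, ((coeff n a : ℤ) : ℂ) * (ζ ^ b * w) ^ n)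
      (∑ b ∈ Finset.range p, h (ζ ^ b * w)) :=
    hasSum_sum fun b _ => ha _ (by simpa [hζ1] using hw)
  have hterm : ∀ n, ∑ b ∈ Finset.range p, ((coeff n a : ℤ) : ℂ) * (ζ ^ b * w) ^ n =
      (coeff n a : ℤ) * w ^ n * ∑ b ∈ Finset.range p, (ζ ^ n) ^ b := by
    intro n
    rw [Finset.mul_sum]
    exact Finset.sum_congr rfl fun b _ => by rw [mul_pow, pow_right_comm]; ring
  simp only [hterm] at hsum
  refine (((mul_right_injective₀ hp).hasSum_iff fun n hn => ?_).2 hsum).congr_fun fun n => ?_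
  · have hdvd : ¬ p ∣ n := fun ⟨c, hc⟩ => hn ⟨c, hc.symm⟩
    rw [sum_pow_eq_zero_of_not_dvd hζ hdvd, mul_zero]
  · simp only [rootSumSeries, coeff_mk, Function.comp_apply, pow_mul, hζ.pow_eq_one, one_pow,
      Finset.sum_const, Finset.card_range, nsmul_eq_mul, mul_one]
    push_cast
    ring

lemma HasIntSeries.exists_sum_roots (ha : HasIntSeries h a) {p : ℕ} (hp : p ≠ 0) {ζ : ℂ}
    (hζ : IsPrimitiveRoot ζ p) :
    ∃ k ∈ intSeriesRing, ∀ w : ℂ, ‖w‖ < 1 →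
      ∑ b ∈ Finset.range p, h (ζ ^ b * w) = k (w ^ p) := by
  refine ⟨fun z => ∑' n, ((coeff n (rootSumSeries p a) : ℤ) : ℂ) * z ^ n,
    HasIntSeries.mem (a := rootSumSeries p a) fun z hz => ?_,
    fun w hw => (ha.hasSum_sum_roots hp hζ hw).tsum_eq.symm⟩
  obtain ⟨w, rfl⟩ := IsAlgClosed.exists_pow_nat_eq z (Nat.pos_of_ne_zero hp)
  have hw : ‖w‖ < 1 := (pow_lt_one_iff_of_nonneg (norm_nonneg w) hp).1 (norm_pow w p ▸ hz)
  exact (ha.hasSum_sum_roots hp hζ hw).summable.hasSum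

lemma iteratedDeriv_aeval (P : Polynomial ℤ) (k : ℕ) :
    iteratedDeriv k (fun z : ℂ => Polynomial.aeval z P) =
      fun z => Polynomial.aeval z (Polynomial.derivative^[k] P) := by
  induction k with
  | zero => simp
  | succ k ih =>
    ext z
    rw [iteratedDeriv_succ, ih, Function.iterate_succ_apply', Polynomial.deriv_aeval]

lemma iteratedDeriv_aeval_zero (P : Polynomial ℤ) (k : ℕ) :
    iteratedDeriv k (fun z : ℂ => Polynomial.aeval z P) 0 = k.factorial * (P.coeff k : ℂ) := by
  rw [iteratedDeriv_aeval]
  beta_reduce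
  rw [← Polynomial.coeff_zero_eq_aeval_zero', Polynomial.coeff_iterate_derivative]
  simp [Nat.descFactorial_self]

section Limit

variable {f : ℂ → ℂ} {P : ℕ → Polynomial ℤ}

lemma tendsto_coeff_of_tendstoLocallyUniformlyOn
    (hf : TendstoLocallyUniformlyOn (fun N z => Polynomial.aeval z (P N)) f atTop (ball 0 1))
    (k : ℕ) :
    Tendsto (fun N => ((P N).coeff k : ℂ)) atTop
      (𝓝 ((k.factorial : ℂ)⁻¹ * iteratedDeriv k f 0)) := by
  have hderiv : TendstoLocallyUniformlyOn
      (fun N => iteratedDeriv k (fun z : ℂ => Polynomial.aeval z (P N)))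
      (iteratedDeriv k f) atTop (ball 0 1) := by
    induction k with
    | zero => simpa using hf
    | succ k ih =>
      simp only [iteratedDeriv_succ]
      refine ih.deriv (Eventually.of_forall fun N => ?_) isOpen_ball
      rw [iteratedDeriv_aeval]
      exact (Polynomial.differentiable_aeval _).differentiableOn
  have hlim := (hderiv.tendsto_at (a := 0) (by simp)).const_mul ((k.factorial : ℂ)⁻¹)
  have hk : (k.factorial : ℂ) ≠ 0 := by exact_mod_cast k.factorial_ne_zero
  simpa only [iteratedDeriv_aeval_zero, inv_mul_cancel_left₀ hk] using hlim

/-- A convergent sequence of integers is eventually constant, so the Taylor coefficients of a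
limit of integer polynomials are attained at finite stages. -/
theorem exists_hasIntSeries_of_tendsto
    (hf : TendstoLocallyUniformlyOn (fun N z => Polynomial.aeval z (P N)) f atTop (ball 0 1)) :
    ∃ a, HasIntSeries f a ∧ ∀ k, ∀ᶠ N in atTop, (P N).coeff k = coeff k a := by
  have hint : ∀ k, ∃ c : ℤ, (k.factorial : ℂ)⁻¹ * iteratedDeriv k f 0 = c ∧
      ∀ᶠ N in atTop, (P N).coeff k = c := by
    intro k
    have hlim := tendsto_coeff_of_tendstoLocallyUniformlyOn hf k
    obtain ⟨c, hc⟩ := Complex.isClosed_range_intCast.mem_of_tendsto hlim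
      (Eventually.of_forall fun N => ⟨(P N).coeff k, rfl⟩)
    rw [← hc] at hlim
    have hlimInt := Complex.isClosedEmbedding_intCast.tendsto_nhds_iff.2 hlim
    exact ⟨c, hc.symm, by simpa [nhds_discrete] using hlimInt⟩
  choose c hc hcP using hint
  refine ⟨PowerSeries.mk c, fun z hz => ?_, fun k => by simpa using hcP k⟩
  have hdiff : DifferentiableOn ℂ f (ball 0 1) :=
    hf.differentiableOn (Eventually.of_forall fun N =>
      (Polynomial.differentiable_aeval _).differentiableOn) isOpen_ball
  refine (Complex.hasSum_taylorSeries_on_ball (c := 0) (r := 1) (by simpa using hdiff)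
    (z := z) (by simpa using hz)).congr_fun fun n => ?_
  rw [coeff_mk, ← hc, sub_zero, smul_eq_mul, smul_eq_mul]
  ring

end Limit

end IntSeries

/-! ### Infinite products -/

section InfiniteProducts

/-- The product `∏ (1 + ε z ^ (e n))`, the common form of the three products below. -/
def intProd (ε : ℤ) (e : ℕ → ℕ) (z : ℂ) : ℂ := ∏' n, (1 + (ε : ℂ) * z ^ e n)

lemma summable_pow_succ {r : ℝ} (hr0 : 0 ≤ r) (hr : r < 1) : Summable fun n : ℕ => r ^ (n + 1) :=
  (summable_nat_add_iff 1).2 (summable_geometric_of_lt_one hr0 hr)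

variable {ε : ℤ} {e : ℕ → ℕ} {z : ℂ} {r : ℝ}

lemma norm_intCast_mul_pow_le (hε : |ε| ≤ 1) (he : ∀ n, n + 1 ≤ e n) (hz : ‖z‖ ≤ r) (hr : r < 1)
    (n : ℕ) : ‖(ε : ℂ) * z ^ e n‖ ≤ r ^ (n + 1) := by
  have hr0 : 0 ≤ r := (norm_nonneg _).trans hz
  have hε' : ‖(ε : ℂ)‖ ≤ 1 := by rw [Complex.norm_intCast]; exact_mod_cast hε
  calc ‖(ε : ℂ) * z ^ e n‖ = ‖(ε : ℂ)‖ * ‖z‖ ^ e n := by rw [norm_mul, norm_pow]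
    _ ≤ 1 * r ^ e n := by gcongr
    _ = r ^ e n := one_mul _
    _ ≤ r ^ (n + 1) := pow_le_pow_of_le_one hr0 hr.le (he n)

lemma summable_norm_intCast_mul_pow (hε : |ε| ≤ 1) (he : ∀ n, n + 1 ≤ e n) (hz : ‖z‖ < 1) :
    Summable fun n => ‖(ε : ℂ) * z ^ e n‖ :=
  (summable_pow_succ (norm_nonneg z) hz).of_nonneg_of_le (fun _ => norm_nonneg _)
    (norm_intCast_mul_pow_le hε he le_rfl hz)

lemma multipliable_intProd (hε : |ε| ≤ 1) (he : ∀ n, n + 1 ≤ e n) (hz : ‖z‖ < 1) :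
    Multipliable fun n => (1 + (ε : ℂ) * z ^ e n) :=
  multipliable_one_add_of_summable (summable_norm_intCast_mul_pow hε he hz)

lemma norm_intProd_le (hε : |ε| ≤ 1) (he : ∀ n, n + 1 ≤ e n) (hz : ‖z‖ ≤ r) (hr : r < 1) :
    ‖intProd ε e z‖ ≤ Real.exp (r / (1 - r)) := by
  have hr0 : 0 ≤ r := (norm_nonneg _).trans hz
  have hgeom : HasSum (fun n : ℕ => r ^ (n + 1)) (r / (1 - r)) := by
    simpa [pow_succ', div_eq_mul_inv] using (hasSum_geometric_of_lt_one hr0 hr).mul_left r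
  refine le_of_tendsto (multipliable_intProd hε he (hz.trans_lt hr)).hasProd.norm
    (Eventually.of_forall fun s => ?_)
  calc ∏ n ∈ s, ‖1 + (ε : ℂ) * z ^ e n‖ ≤ ∏ n ∈ s, Real.exp (r ^ (n + 1)) := by
        refine Finset.prod_le_prod (fun _ _ => norm_nonneg _) fun n _ => ?_
        calc ‖1 + (ε : ℂ) * z ^ e n‖ ≤ ‖(1 : ℂ)‖ + ‖(ε : ℂ) * z ^ e n‖ := norm_add_le _ _
          _ ≤ r ^ (n + 1) + 1 := by
            rw [norm_one, add_comm]; gcongr; exact norm_intCast_mul_pow_le hε he hz hr n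
          _ ≤ Real.exp (r ^ (n + 1)) := Real.add_one_le_exp _
    _ = Real.exp (∑ n ∈ s, r ^ (n + 1)) := (Real.exp_sum _ _).symm
    _ ≤ Real.exp (r / (1 - r)) :=
        Real.exp_le_exp.2 (sum_le_hasSum s (fun n _ => by positivity) hgeom)

lemma hasProdLocallyUniformlyOn_intProd (hε : |ε| ≤ 1) (he : ∀ n, n + 1 ≤ e n) :
    HasProdLocallyUniformlyOn (fun n (z : ℂ) => 1 + (ε : ℂ) * z ^ e n) (intProd ε e)
      (ball 0 1) := by
  refine hasProdLocallyUniformlyOn_of_forall_compact Metric.isOpen_ball fun K hK hcK => ?_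
  rcases K.eq_empty_or_nonempty with rfl | hN
  · simpa [hasProdUniformlyOn_iff_tendstoUniformlyOn] using tendstoUniformlyOn_empty
  · obtain ⟨z₀, hz₀, _, hmax⟩ := hcK.exists_sSup_image_eq_and_ge hN
      (show ContinuousOn (fun z : ℂ => ‖z‖) K by fun_prop)
    have hz₁ : ‖z₀‖ < 1 := by simpa using hK hz₀
    exact (summable_pow_succ (norm_nonneg z₀) hz₁).hasProdUniformlyOn_nat_one_add hcK
      (.of_forall fun n z hz => norm_intCast_mul_pow_le hε he (hmax z hz) hz₁ n)
      fun _ => by fun_prop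

lemma exists_hasIntSeries_intProd (hε : |ε| ≤ 1) (he : ∀ n, n + 1 ≤ e n) :
    ∃ a, HasIntSeries (intProd ε e) a ∧ ∀ k, ∀ᶠ N in atTop,
      (∏ n ∈ Finset.range N, (1 + Polynomial.C ε * Polynomial.X ^ e n)).coeff k = coeff k a := by
  have hlim := (hasProdLocallyUniformlyOn_intProd hε he).tendstoLocallyUniformlyOn_finsetRange
  exact exists_hasIntSeries_of_tendsto (hlim.congr fun N z _ => by simp [map_prod])

lemma intProd_zero (he : ∀ n, n + 1 ≤ e n) : intProd ε e 0 = 1 := by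
  have he0 : ∀ n, e n ≠ 0 := fun n => (Nat.succ_pos n).trans_le (he n) |>.ne'
  simp [intProd, he0]

/-- Euler's product `∏ (1 - z ^ (n + 1))`. -/
def eulerFun : ℂ → ℂ := intProd (-1) (fun n => n + 1)

/-- The product `∏ (1 + z ^ (n + 1))`, the generating function of partitions into distinct
parts. -/
def plusProd : ℂ → ℂ := intProd 1 (fun n => n + 1)

/-- The product `∏ (1 - z ^ (2 n + 1))`, the inverse of `plusProd`. -/
def oddProd : ℂ → ℂ := intProd (-1) (fun n => 2 * n + 1)

lemma oddProd_zero : oddProd 0 = 1 := intProd_zero fun _ => by omega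

lemma norm_plusProd_le (hz : ‖z‖ ≤ r) (hr : r < 1) : ‖plusProd z‖ ≤ Real.exp (r / (1 - r)) :=
  norm_intProd_le (by simp) (fun _ => le_rfl) hz hr

lemma norm_oddProd_le (hz : ‖z‖ ≤ r) (hr : r < 1) : ‖oddProd z‖ ≤ Real.exp (r / (1 - r)) :=
  norm_intProd_le (by simp) (fun _ => by omega) hz hr

lemma exists_hasIntSeries_plusProd : ∃ a, HasIntSeries plusProd a :=
  (exists_hasIntSeries_intProd (by simp) fun _ => le_rfl).imp fun _ h => h.1

lemma coeff_one_prod_one_sub_odd (N : ℕ) :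
    (∏ n ∈ Finset.range (N + 1), (1 + Polynomial.C (-1 : ℤ) * Polynomial.X ^ (2 * n + 1))).coeff 1 =
      -1 := by
  induction N with
  | zero => simp [Polynomial.coeff_one]
  | succ N ih =>
    rw [Finset.prod_range_succ, mul_add, mul_one, Polynomial.coeff_add, ih, ← mul_assoc,
      Polynomial.coeff_mul_X_pow', if_neg (by omega), add_zero]

lemma exists_hasIntSeries_oddProd :
    ∃ a, HasIntSeries oddProd a ∧ constantCoeff a = 1 ∧ coeff 1 a = -1 := by
  obtain ⟨a, ha, hcoeff⟩ := exists_hasIntSeries_intProd (ε := -1) (e := fun n => 2 * n + 1)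
    (by simp) fun _ => by omega
  obtain ⟨N, hN⟩ := ((tendsto_add_atTop_nat 1).eventually (hcoeff 1)).exists
  refine ⟨a, ha, ?_, hN ▸ coeff_one_prod_one_sub_odd N⟩
  exact_mod_cast ha.apply_zero.symm.trans oddProd_zero

lemma eulerFun_eq_tprod (z : ℂ) : eulerFun z = ∏' n : ℕ, (1 - z ^ (n + 1)) := by
  simp [eulerFun, intProd, sub_eq_add_neg]

lemma norm_sq_lt_one (hz : ‖z‖ < 1) : ‖z ^ 2‖ < 1 := by
  rw [norm_pow]; exact pow_lt_one₀ (norm_nonneg z) hz two_ne_zero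

lemma eulerFun_ne_zero (hz : ‖z‖ < 1) : eulerFun z ≠ 0 := by
  refine tprod_one_add_ne_zero_of_summable (f := fun n : ℕ => ((-1 : ℤ) : ℂ) * z ^ (n + 1))
    (fun n hzero => ?_) (summable_norm_intCast_mul_pow (by simp) (fun _ => le_rfl) hz)
  have hpow : z ^ (n + 1) = 1 := by push_cast at hzero; linear_combination -hzero
  have hlt := pow_lt_one₀ (norm_nonneg z) hz n.succ_ne_zero
  rw [← norm_pow, hpow, norm_one] at hlt
  exact lt_irrefl _ hlt

lemma eulerFun_sq (hz : ‖z‖ < 1) : eulerFun (z ^ 2) = eulerFun z * plusProd z := by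
  have hE := multipliable_intProd (ε := -1) (by simp) (e := fun n => n + 1) (fun _ => le_rfl) hz
  have hP := multipliable_intProd (ε := 1) (by simp) (e := fun n => n + 1) (fun _ => le_rfl) hz
  unfold eulerFun plusProd intProd
  rw [← hE.tprod_mul hP]
  refine tprod_congr fun n => ?_
  push_cast
  ring

lemma eulerFun_eq_oddProd_mul (hz : ‖z‖ < 1) : eulerFun z = oddProd z * eulerFun (z ^ 2) := by
  have hodd := multipliable_intProd (ε := -1) (by simp) (e := fun n => 2 * n + 1)
    (fun _ => by omega) hz
  have heven := multipliable_intProd (ε := -1) (by simp) (e := fun n => n + 1) (fun _ => le_rfl)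
    (norm_sq_lt_one hz)
  have hexp : ∀ n : ℕ, (1 + ((-1 : ℤ) : ℂ) * (z ^ 2) ^ (n + 1)) =
      1 + ((-1 : ℤ) : ℂ) * z ^ ((2 * n + 1) + 1) := fun n => by rw [← pow_mul]; ring_nf
  unfold eulerFun oddProd intProd
  simp only [hexp] at heven ⊢
  exact (tprod_even_mul_odd (f := fun n => 1 + ((-1 : ℤ) : ℂ) * z ^ (n + 1)) hodd heven).symm

/-- Euler's identity between partitions into distinct parts and partitions into odd parts. -/
lemma plusProd_mul_oddProd (hz : ‖z‖ < 1) : plusProd z * oddProd z = 1 := by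
  have h := eulerFun_eq_oddProd_mul hz
  rw [eulerFun_sq hz] at h
  exact mul_left_cancel₀ (eulerFun_ne_zero hz) (by linear_combination -h)

lemma plusProd_ne_zero (hz : ‖z‖ < 1) : plusProd z ≠ 0 :=
  left_ne_zero_of_mul_eq_one (plusProd_mul_oddProd hz)

lemma oddProd_ne_zero (hz : ‖z‖ < 1) : oddProd z ≠ 0 :=
  right_ne_zero_of_mul_eq_one (plusProd_mul_oddProd hz)

end InfiniteProducts

/-! ### Functions invariant under the modular group -/

section ModularInvariance

open ModularGroup MatrixGroups ModularForm

variable {f : ℂ → ℂ} {τ : ℂ}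

/-- Invariance of a function on the upper half plane under the two generators of the modular
group. The values off the upper half plane are arbitrary. -/
def IsModularInvariant (f : ℂ → ℂ) : Prop :=
  ∀ τ : ℂ, 0 < τ.im → f (τ + 1) = f τ ∧ f (-1 / τ) = f τ

lemma ne_zero_of_im_pos (hτ : 0 < τ.im) : τ ≠ 0 := by
  rintro rfl
  simp at hτ

lemma im_neg_one_div (hτ : 0 < τ.im) : 0 < (-1 / τ).im := by
  rw [neg_div, one_div, ← inv_neg]
  simpa using UpperHalfPlane.im_inv_neg_coe_pos ⟨τ, hτ⟩

lemma slash_S_eq_self {k : ℕ} (hS : ∀ τ : ℂ, 0 < τ.im → f (-1 / τ) = τ ^ k * f τ) :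
    (fun τ : ℍ => f τ) ∣[(k : ℤ)] S = fun τ : ℍ => f τ := by
  ext τ
  have hτ : (τ : ℂ) ≠ 0 := τ.ne_zero
  have hdenom : denom (S : GL (Fin 2) ℝ) τ = τ := by
    rw [ModularGroup.denom_apply]; simp [S]
  have hf : f (-(τ : ℂ))⁻¹ = (τ : ℂ) ^ k * f τ := by
    rw [← hS τ τ.im_pos, inv_neg, neg_div, one_div]
  rw [SL_slash_apply, modular_S_smul, hdenom, zpow_neg, zpow_natCast]
  change f (-(τ : ℂ))⁻¹ * _ = _
  rw [hf]
  field_simp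

lemma slash_T_eq_self {k : ℤ} (hT : ∀ τ : ℂ, 0 < τ.im → f (τ + 1) = f τ) :
    (fun τ : ℍ => f τ) ∣[k] T = fun τ : ℍ => f τ := by
  ext τ
  have hdenom : denom (T : GL (Fin 2) ℝ) τ = 1 := by
    rw [ModularGroup.denom_apply]; simp [T]
  have hf : f (1 + (τ : ℂ)) = f τ := by rw [add_comm]; exact hT τ τ.im_pos
  rw [SL_slash_apply, modular_T_smul, hdenom]
  simpa using hf

section Moebius

variable {a b c d : ℤ}

lemma exists_SL2_smul_eq (h : a * d - b * c = 1) (hτ : 0 < τ.im) :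
    ∃ γ : SL(2, ℤ), ((γ • (⟨τ, hτ⟩ : ℍ) : ℍ) : ℂ) = (a * τ + b) / (c * τ + d) ∧
      denom (γ : GL (Fin 2) ℝ) (⟨τ, hτ⟩ : ℍ) = c * τ + d := by
  let γ : SL(2, ℤ) := ⟨!![a, b; c, d], by simp [Matrix.det_fin_two, h]⟩
  refine ⟨γ, ?_, ?_⟩
  · rw [UpperHalfPlane.coe_specialLinearGroup_apply]; simp [γ]
  · rw [ModularGroup.denom_apply]; simp [γ]

lemma im_moebius_pos (h : a * d - b * c = 1) (hτ : 0 < τ.im) :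
    0 < ((a * τ + b) / (c * τ + d) : ℂ).im := by
  obtain ⟨γ, hγ, -⟩ := exists_SL2_smul_eq h hτ
  exact hγ ▸ (γ • (⟨τ, hτ⟩ : ℍ)).im_pos

lemma apply_moebius {k : ℕ} (hT : ∀ τ : ℂ, 0 < τ.im → f (τ + 1) = f τ)
    (hS : ∀ τ : ℂ, 0 < τ.im → f (-1 / τ) = τ ^ k * f τ) (h : a * d - b * c = 1) (hτ : 0 < τ.im) :
    f ((a * τ + b) / (c * τ + d)) = (c * τ + d) ^ k * f τ := by
  obtain ⟨γ, hγ, hdenom⟩ := exists_SL2_smul_eq h hτ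
  have hslash := congrFun (SlashInvariantForm.slash_action_generators_SL2Z (slash_S_eq_self hS)
    (slash_T_eq_self hT) γ) ⟨τ, hτ⟩
  have hne : (c * τ + d : ℂ) ≠ 0 := hdenom ▸ denom_ne_zero _ _
  simp only [SL_slash_apply, hγ, hdenom, zpow_neg, zpow_natCast] at hslash
  rw [← hslash, mul_left_comm, mul_inv_cancel₀ (pow_ne_zero k hne), mul_one]

lemma IsModularInvariant.apply_moebius (hf : IsModularInvariant f) (h : a * d - b * c = 1)
    (hτ : 0 < τ.im) : f ((a * τ + b) / (c * τ + d)) = f τ := by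
  simpa using FibonacciProduct.apply_moebius (k := 0) (fun τ hτ => (hf τ hτ).1)
    (fun τ hτ => by simpa using (hf τ hτ).2) h hτ

end Moebius

theorem IsModularInvariant.eq_of_tendsto (hf : IsModularInvariant f)
    (hd : DifferentiableOn ℂ f {z | 0 < z.im}) {ℓ : ℂ}
    (hlim : Tendsto (fun τ : ℍ => f τ) atImInfty (𝓝 ℓ)) (hτ : 0 < τ.im) : f τ = ℓ := by
  have hinv : ∀ γ : SL(2, ℤ), (fun τ : ℍ => f τ) ∣[(0 : ℤ)] γ = fun τ : ℍ => f τ :=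
    SlashInvariantForm.slash_action_generators_SL2Z
      (slash_S_eq_self (k := 0) fun τ hτ => by simpa using (hf τ hτ).2)
      (slash_T_eq_self fun τ hτ => (hf τ hτ).1)
  let M : ModularForm 𝒮ℒ 0 :=
    { toFun := fun τ : ℍ => f τ
      slash_action_eq' := by
        rintro γ ⟨A, rfl⟩
        exact hinv A
      holo' := by
        rw [UpperHalfPlane.mdifferentiable_iff]
        exact hd.congr fun z hz => congrArg f (ofComplex_apply_of_im_pos hz ▸ rfl)
      bdd_at_cusps' := by
        intro c hc
        rw [Subgroup.IsArithmetic.isCusp_iff_isCusp_SL2Z] at hc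
        rw [OnePoint.isBoundedAt_iff_forall_SL2Z hc]
        intro γ _
        rw [hinv γ]
        exact hlim.isBigO_one ℝ |>.trans (Asymptotics.isBigO_const_const _ one_ne_zero _) }
  obtain ⟨c, hc⟩ := ModularFormClass.levelOne_weight_zero_const M
  have hconst : ∀ τ : ℍ, f τ = c := fun τ => congrFun hc τ
  simp only [hconst] at hlim
  exact (hconst ⟨τ, hτ⟩).trans (tendsto_nhds_unique tendsto_const_nhds hlim)

end ModularInvariance

/-! ### The nome -/

section Nome

open ModularGroup MatrixGroups ModularForm

variable {τ : ℂ}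

lemma nome_ne_zero (τ : ℂ) : 𝕢 τ ≠ 0 := Function.Periodic.qParam_ne_zero τ

lemma norm_nome (τ : ℂ) : ‖𝕢 τ‖ = Real.exp (-(2 * Real.pi * τ.im)) := by
  rw [Function.Periodic.norm_qParam]; ring_nf

lemma norm_nome_lt_one (hτ : 0 < τ.im) : ‖𝕢 τ‖ < 1 :=
  Function.Periodic.norm_qParam_lt_one one_pos hτ

lemma nome_add (τ σ : ℂ) : 𝕢 (τ + σ) = 𝕢 τ * 𝕢 σ := by
  rw [Function.Periodic.qParam, Function.Periodic.qParam, Function.Periodic.qParam,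
    ← Complex.exp_add]
  ring_nf

lemma nome_one : 𝕢 1 = 1 := by simp [Function.Periodic.qParam, Complex.exp_two_pi_mul_I]

lemma nome_half : 𝕢 (1 / 2) = -1 := by
  rw [Function.Periodic.qParam, ← Complex.exp_pi_mul_I, Complex.ofReal_one]; ring_nf

lemma nome_nat_mul (n : ℕ) (τ : ℂ) : 𝕢 (n * τ) = 𝕢 τ ^ n := by
  rw [Function.Periodic.qParam, Function.Periodic.qParam, ← Complex.exp_nat_mul]; ring_nf

lemma exists_nome_eq {z : ℂ} (hz0 : z ≠ 0) (hz : ‖z‖ < 1) : ∃ τ : ℂ, 0 < τ.im ∧ 𝕢 τ = z := by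
  have hright := Function.Periodic.qParam_right_inv one_ne_zero hz0
  refine ⟨_, ?_, hright⟩
  have h := (Function.Periodic.norm_qParam_lt_iff one_pos 0 (Function.Periodic.invQParam 1 z)).1
  rw [hright] at h
  exact h (by simpa using hz)

lemma nome_eq_nome_half_sq (τ : ℂ) : 𝕢 τ = 𝕢 (τ / 2) ^ 2 := by
  rw [← nome_nat_mul]; congr 1; push_cast; ring

lemma nome_add_one_half (τ : ℂ) : 𝕢 ((τ + 1) / 2) = -𝕢 (τ / 2) := by
  rw [add_div, nome_add, nome_half]; ring

lemma differentiableOn_comp_nome {h : ℂ → ℂ} (hh : DifferentiableOn ℂ h (ball 0 1)) :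
    DifferentiableOn ℂ (fun τ => h (𝕢 τ)) {z | 0 < z.im} :=
  hh.comp Function.Periodic.differentiable_qParam.differentiableOn
    fun τ hτ => by simpa using norm_nome_lt_one hτ

lemma tendsto_comp_nome {h : ℂ → ℂ} (hh : ContinuousAt h 0) :
    Tendsto (fun τ : ℍ => h (𝕢 τ)) atImInfty (𝓝 (h 0)) :=
  hh.tendsto.comp (qParam_tendsto_atImInfty one_pos)

lemma continuousAt_zero_of_mem_intSeriesRing {h : ℂ → ℂ} (hh : h ∈ intSeriesRing) :
    ContinuousAt h 0 :=
  ((differentiableOn_of_mem_intSeriesRing hh).differentiableAt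
    (ball_mem_nhds _ one_pos)).continuousAt

lemma IsModularInvariant.eq_apply_zero {f h : ℂ → ℂ} (hf : IsModularInvariant f)
    (hh : h ∈ intSeriesRing) (hfh : ∀ τ : ℂ, 0 < τ.im → f τ = h (𝕢 τ)) (hτ : 0 < τ.im) :
    f τ = h 0 := by
  refine hf.eq_of_tendsto ((differentiableOn_comp_nome
    (differentiableOn_of_mem_intSeriesRing hh)).congr hfh) ?_ hτ
  exact (tendsto_comp_nome (continuousAt_zero_of_mem_intSeriesRing hh)).congr
    fun τ => (hfh τ τ.im_pos).symm

/-! ### The discriminant and the Weber functions -/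

/-- The modular discriminant `Δ` as a function of a complex variable. -/
def discr (τ : ℂ) : ℂ := 𝕢 τ * eulerFun (𝕢 τ) ^ 24

lemma discr_eq_discriminant (τ : ℍ) : discr τ = ModularForm.discriminant τ := by
  rw [ModularForm.discriminant_eq_q_prod, discr, eulerFun_eq_tprod]
  simp only [ModularForm.eta_q]
  rw [(ModularForm.multipliable_one_sub_pow (norm_nome_lt_one τ.im_pos)).tprod_pow]

lemma discr_add_one (τ : ℂ) : discr (τ + 1) = discr τ := by
  rw [discr, nome_add, nome_one, mul_one, discr]

lemma discr_neg_one_div (hτ : 0 < τ.im) : discr (-1 / τ) = τ ^ 12 * discr τ := by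
  have hslash := congrFun ModularForm.discriminant_S_invariant ⟨τ, hτ⟩
  rw [SL_slash_apply, modular_S_smul, ModularGroup.denom_S, ← discr_eq_discriminant,
    ← discr_eq_discriminant] at hslash
  change discr (-τ)⁻¹ * τ ^ (-(12 : ℤ)) = discr τ at hslash
  have h12 : τ ^ (12 : ℤ) = τ ^ 12 := zpow_natCast τ 12
  rw [neg_div, one_div, ← inv_neg, ← hslash, zpow_neg, mul_left_comm, h12,
    mul_inv_cancel₀ (pow_ne_zero _ (ne_zero_of_im_pos hτ)), mul_one]

lemma discr_ne_zero (hτ : 0 < τ.im) : discr τ ≠ 0 :=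
  mul_ne_zero (nome_ne_zero τ) (pow_ne_zero _ (eulerFun_ne_zero (norm_nome_lt_one hτ)))

/-- The function `t z = z ∏ (1 + z ^ n) ^ 24` of the nome `z`, which is `Δ(2τ) / Δ(τ)`. -/
def levelTwo (z : ℂ) : ℂ := z * plusProd z ^ 24

lemma levelTwo_mem_intSeriesRing : levelTwo ∈ intSeriesRing := by
  obtain ⟨a, ha⟩ := exists_hasIntSeries_plusProd
  exact mul_mem id_mem_intSeriesRing (pow_mem ha.mem 24)

lemma levelTwo_ne_zero {z : ℂ} (hz0 : z ≠ 0) (hz : ‖z‖ < 1) : levelTwo z ≠ 0 :=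
  mul_ne_zero hz0 (pow_ne_zero _ (plusProd_ne_zero hz))

lemma levelTwo_zero : levelTwo 0 = 0 := by simp [levelTwo]

lemma mul_inv_levelTwo {z : ℂ} (hz0 : z ≠ 0) (hz : ‖z‖ < 1) :
    z * (levelTwo z)⁻¹ = oddProd z ^ 24 := by
  rw [eq_inv_of_mul_eq_one_right (plusProd_mul_oddProd hz), levelTwo, mul_inv,
    mul_inv_cancel_left₀ hz0, inv_pow]

/-- The 24th power `𝔣₂²⁴` of Weber's third function. -/
def weberTwo (τ : ℂ) : ℂ := 2 ^ 12 * discr (2 * τ) / discr τ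

/-- The 24th power `𝔣₁²⁴` of Weber's second function. -/
def weberOne (τ : ℂ) : ℂ := discr (τ / 2) / discr τ

/-- The negative `-𝔣²⁴` of the 24th power of Weber's first function. -/
def weberZero (τ : ℂ) : ℂ := discr ((τ + 1) / 2) / discr τ

lemma weberTwo_add_one (τ : ℂ) : weberTwo (τ + 1) = weberTwo τ := by
  have h2 : 2 * (τ + 1) = 2 * τ + 1 + 1 := by ring
  simp only [weberTwo, h2, discr_add_one]

lemma weberOne_add_one (τ : ℂ) : weberOne (τ + 1) = weberZero τ := by
  rw [weberOne, weberZero, discr_add_one]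

lemma weberZero_add_one (τ : ℂ) : weberZero (τ + 1) = weberOne τ := by
  have h2 : (τ + 1 + 1) / 2 = τ / 2 + 1 := by ring
  rw [weberOne, weberZero, h2, discr_add_one, discr_add_one]

lemma im_two_mul_pos (hτ : 0 < τ.im) : 0 < (2 * τ).im := by simpa using hτ

lemma im_div_two_pos (hτ : 0 < τ.im) : 0 < (τ / 2).im := by simpa using hτ

lemma im_add_one_div_two_pos (hτ : 0 < τ.im) : 0 < ((τ + 1) / 2).im := by simpa using hτ

lemma weberTwo_neg_one_div (hτ : 0 < τ.im) : weberTwo (-1 / τ) = weberOne τ := by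
  have hτ0 := ne_zero_of_im_pos hτ
  have hD := discr_ne_zero hτ
  have h2 : 2 * (-1 / τ) = -1 / (τ / 2) := by field_simp
  rw [weberTwo, weberOne, discr_neg_one_div hτ, h2, discr_neg_one_div (im_div_two_pos hτ)]
  field_simp

lemma weberOne_neg_one_div (hτ : 0 < τ.im) : weberOne (-1 / τ) = weberTwo τ := by
  have hτ0 := ne_zero_of_im_pos hτ
  have hD := discr_ne_zero hτ
  have h2 : -1 / τ / 2 = -1 / (2 * τ) := by field_simp
  rw [weberTwo, weberOne, discr_neg_one_div hτ, h2, discr_neg_one_div (im_two_mul_pos hτ)]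
  field_simp

lemma weberZero_neg_one_div (hτ : 0 < τ.im) : weberZero (-1 / τ) = weberZero τ := by
  have hτ0 := ne_zero_of_im_pos hτ
  have hD := discr_ne_zero hτ
  have hdenom : ((2 : ℤ) : ℂ) * ((τ + 1) / 2) + ((-1 : ℤ) : ℂ) = τ := by push_cast; ring
  have hmoeb : (((1 : ℤ) : ℂ) * ((τ + 1) / 2) + ((-1 : ℤ) : ℂ)) / τ = (-1 / τ + 1) / 2 := by
    push_cast; field_simp; ring
  have h := apply_moebius (k := 12) (fun τ _ => discr_add_one τ) (fun τ => discr_neg_one_div)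
    (a := 1) (b := -1) (c := 2) (d := -1) (by norm_num) (im_add_one_div_two_pos hτ)
  rw [hdenom, hmoeb] at h
  rw [weberZero, weberZero, discr_neg_one_div hτ, h]
  field_simp

lemma weberTwo_eq (hτ : 0 < τ.im) : weberTwo τ = 2 ^ 12 * levelTwo (𝕢 τ) := by
  have hz := norm_nome_lt_one hτ
  have hE := eulerFun_ne_zero hz
  have hq := nome_ne_zero τ
  have h2 : 𝕢 (2 * τ) = 𝕢 τ ^ 2 := nome_nat_mul 2 τ
  rw [weberTwo, discr, discr, h2, eulerFun_sq hz, levelTwo]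
  field_simp

lemma discr_div_discr_of_nome_eq_sq {σ : ℂ} (hσ : 0 < σ.im) (h : 𝕢 τ = 𝕢 σ ^ 2) :
    discr σ / discr τ = oddProd (𝕢 σ) ^ 24 / 𝕢 σ := by
  have hz := norm_nome_lt_one hσ
  have hq := nome_ne_zero σ
  have hE : eulerFun (𝕢 σ ^ 2) ≠ 0 := eulerFun_ne_zero (norm_sq_lt_one hz)
  rw [discr, discr, h, eulerFun_eq_oddProd_mul hz]
  field_simp

lemma weberOne_eq (hτ : 0 < τ.im) :
    weberOne τ = oddProd (𝕢 (τ / 2)) ^ 24 / 𝕢 (τ / 2) :=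
  discr_div_discr_of_nome_eq_sq (im_div_two_pos hτ) (nome_eq_nome_half_sq τ)

lemma weberZero_eq (hτ : 0 < τ.im) :
    weberZero τ = -(oddProd (-𝕢 (τ / 2)) ^ 24 / 𝕢 (τ / 2)) := by
  rw [weberZero, discr_div_discr_of_nome_eq_sq (im_add_one_div_two_pos hτ), nome_add_one_half,
    div_neg]
  rw [nome_add_one_half, neg_sq, ← nome_eq_nome_half_sq]

lemma oddProd_mul_oddProd_neg {w : ℂ} (hw : ‖w‖ < 1) :
    oddProd w * oddProd (-w) = oddProd (w ^ 2) := by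
  have hpos := multipliable_intProd (ε := -1) (by simp) (e := fun n => 2 * n + 1)
    (fun _ => by omega) hw
  have hneg := multipliable_intProd (ε := -1) (by simp) (e := fun n => 2 * n + 1)
    (fun _ => by omega) (z := -w) (by simpa using hw)
  unfold oddProd intProd
  rw [← hpos.tprod_mul hneg]
  refine tprod_congr fun n => ?_
  rw [Odd.neg_pow ⟨n, rfl⟩]
  push_cast
  ring

lemma weberOne_mul_weberZero (hτ : 0 < τ.im) :
    weberOne τ * weberZero τ = -(levelTwo (𝕢 τ))⁻¹ := by
  have hw := norm_nome_lt_one (im_div_two_pos hτ)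
  have hq := nome_ne_zero τ
  have hodd := oddProd_mul_oddProd_neg hw
  rw [← nome_eq_nome_half_sq] at hodd
  rw [← inv_mul_cancel_left₀ hq (levelTwo _)⁻¹, mul_inv_levelTwo hq (norm_nome_lt_one hτ),
    weberOne_eq hτ, weberZero_eq hτ, ← hodd, nome_eq_nome_half_sq τ]
  ring

/-- Subtracting the constant term, the two square roots of the nome contribute an integral power
series in the nome itself, with constant coefficient twice the linear coefficient of the 24th
power of `oddProd`. -/
lemma exists_weberOne_add_weberZero_eq :
    ∃ K ∈ intSeriesRing, K 0 = -48 ∧ ∀ τ : ℂ, 0 < τ.im → weberOne τ + weberZero τ = K (𝕢 τ) := by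
  obtain ⟨a, ha, ha0, ha1⟩ := exists_hasIntSeries_oddProd
  obtain ⟨b, hb⟩ : X ∣ a ^ 24 - 1 := by
    rw [X_dvd_iff, map_sub, map_pow, ha0, one_pow, map_one, sub_self]
  have hb0 : constantCoeff b = -24 := by
    have hcoeff := congrArg (coeff 1) hb
    rw [map_sub, coeff_one_pow, coeff_succ_X_mul 0, coeff_zero_eq_constantCoeff, ha0, ha1] at hcoeff
    simpa [coeff_one] using hcoeff.symm
  obtain ⟨k, hk, hk_eq⟩ := HasIntSeries.exists_of_X_pow_mul (m := 1) (b := b)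
    (h := oddProd ^ 24 - 1) (by
      rw [pow_one, ← hb, sub_eq_add_neg, sub_eq_add_neg]
      exact (ha.pow 24).add hasIntSeries_one.neg)
  obtain ⟨K, hK, hKk⟩ := hk.exists_sum_roots two_ne_zero (IsPrimitiveRoot.neg_one 0 (by norm_num))
  simp only [Finset.sum_range_succ, Finset.sum_range_zero, zero_add, pow_zero, pow_one, one_mul,
    neg_one_mul] at hKk
  refine ⟨K, hK, ?_, fun τ hτ => ?_⟩
  · have hK0 := hKk 0 (by simp)
    rw [neg_zero, hk.apply_zero, hb0, zero_pow two_ne_zero] at hK0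
    rw [← hK0]
    norm_num
  · have hw := norm_nome_lt_one (im_div_two_pos hτ)
    have hq := nome_ne_zero (τ / 2)
    have hpos := hk_eq _ hw
    have hneg := hk_eq (-𝕢 (τ / 2)) (by simpa using hw)
    simp only [Pi.sub_apply, Pi.pow_apply, Pi.one_apply, pow_one] at hpos hneg
    rw [weberOne_eq hτ, weberZero_eq hτ, nome_eq_nome_half_sq τ, ← hKk _ hw]
    field_simp
    linear_combination hpos - hneg

lemma weberTwo_add_weberOne_add_weberZero (hτ : 0 < τ.im) :
    weberTwo τ + weberOne τ + weberZero τ = -48 := by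
  obtain ⟨K, hK, hK0, hKτ⟩ := exists_weberOne_add_weberZero_eq
  have hinv : IsModularInvariant fun τ => weberTwo τ + weberOne τ + weberZero τ := by
    refine fun τ hτ => ⟨?_, ?_⟩
    · simp only [weberTwo_add_one, weberOne_add_one, weberZero_add_one]; ring
    · simp only [weberTwo_neg_one_div hτ, weberOne_neg_one_div hτ, weberZero_neg_one_div hτ]; ring
  have hmem : (2 ^ 12 : ℤ) • levelTwo + K ∈ intSeriesRing :=
    add_mem (zsmul_mem levelTwo_mem_intSeriesRing _) hK
  have hconst := hinv.eq_apply_zero hmem (fun τ hτ => by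
    rw [add_assoc, hKτ τ hτ, weberTwo_eq hτ]; norm_num) hτ
  simpa [hK0, levelTwo_zero] using hconst

/-! ### The modular invariant `j` -/

/-- Klein's modular invariant `j` as a function of the nome `z`, expressed through the function
`t = Δ(2τ) / Δ(τ)` of level two. -/
def jNome (z : ℂ) : ℂ := (1 + 256 * levelTwo z) ^ 3 / levelTwo z

/-- Klein's modular invariant `j`. -/
def kleinJ (τ : ℂ) : ℂ := jNome (𝕢 τ)

/-- `768 - j` is the second elementary symmetric function of the three Weber functions. -/
lemma kleinJ_eq_weber (hτ : 0 < τ.im) :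
    kleinJ τ = 768 - (weberTwo τ * (weberOne τ + weberZero τ) + weberOne τ * weberZero τ) := by
  have ht := levelTwo_ne_zero (nome_ne_zero τ) (norm_nome_lt_one hτ)
  have hsum : weberOne τ + weberZero τ = -48 - weberTwo τ := by
    linear_combination weberTwo_add_weberOne_add_weberZero hτ
  rw [weberOne_mul_weberZero hτ, hsum, weberTwo_eq hτ, kleinJ, jNome]
  field_simp
  ring

lemma kleinJ_isModularInvariant : IsModularInvariant kleinJ := by
  intro τ hτ
  have hτ1 : 0 < (τ + 1).im := by simpa using hτ
  constructor
  · rw [kleinJ_eq_weber hτ1, kleinJ_eq_weber hτ, weberTwo_add_one, weberOne_add_one,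
      weberZero_add_one]
    ring
  · rw [kleinJ_eq_weber (im_neg_one_div hτ), kleinJ_eq_weber hτ, weberTwo_neg_one_div hτ,
      weberOne_neg_one_div hτ, weberZero_neg_one_div hτ]
    ring

/-- The regular part `z * j` of `j` as a function of the nome `z`. -/
def jRegular (z : ℂ) : ℂ := oddProd z ^ 24 * (1 + 256 * levelTwo z) ^ 3

lemma exists_hasIntSeries_jRegular : ∃ a, HasIntSeries jRegular a := by
  obtain ⟨a, ha, -⟩ := exists_hasIntSeries_oddProd
  have hmem : oddProd ^ 24 * (1 + (256 : ℤ) • levelTwo) ^ 3 ∈ intSeriesRing :=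
    mul_mem (pow_mem ha.mem _)
      (pow_mem (add_mem (one_mem _) (zsmul_mem levelTwo_mem_intSeriesRing _)) _)
  obtain ⟨b, hb⟩ := mem_intSeriesRing.1 hmem
  exact ⟨b, hb.congr fun z _ => by simp [jRegular]⟩

lemma jRegular_mem_intSeriesRing : jRegular ∈ intSeriesRing :=
  mem_intSeriesRing.2 exists_hasIntSeries_jRegular

lemma jRegular_zero : jRegular 0 = 1 := by simp [jRegular, oddProd_zero, levelTwo_zero]

lemma mul_jNome {z : ℂ} (hz0 : z ≠ 0) (hz : ‖z‖ < 1) : z * jNome z = jRegular z := by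
  rw [jNome, jRegular, ← mul_inv_levelTwo hz0 hz]
  ring

lemma nome_mul_kleinJ (hτ : 0 < τ.im) : 𝕢 τ * kleinJ τ = jRegular (𝕢 τ) :=
  mul_jNome (nome_ne_zero τ) (norm_nome_lt_one hτ)

lemma differentiableOn_kleinJ : DifferentiableOn ℂ kleinJ {z | 0 < z.im} := by
  refine ((differentiableOn_comp_nome
    (differentiableOn_of_mem_intSeriesRing jRegular_mem_intSeriesRing)).div
    Function.Periodic.differentiable_qParam.differentiableOn
    fun τ _ => nome_ne_zero τ).congr fun τ hτ => ?_
  rw [Pi.div_apply, eq_div_iff (nome_ne_zero τ), mul_comm, nome_mul_kleinJ hτ]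

end Nome

section Klein

variable {τ : ℂ}

lemma norm_levelTwo_le {z : ℂ} {r : ℝ} (hz : ‖z‖ ≤ r) (hr : r < 1) :
    ‖levelTwo z‖ ≤ Real.exp (r / (1 - r)) ^ 24 := by
  rw [levelTwo, norm_mul, norm_pow]
  calc ‖z‖ * ‖plusProd z‖ ^ 24 ≤ 1 * Real.exp (r / (1 - r)) ^ 24 := by
        gcongr
        · exact hz.trans hr.le
        · exact norm_plusProd_le hz hr
    _ = Real.exp (r / (1 - r)) ^ 24 := one_mul _

lemma norm_nome_div_one_sub_le (hτ : 0 < τ.im) : ‖𝕢 τ‖ / (1 - ‖𝕢 τ‖) ≤ 1 / τ.im := by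
  have hpos : 0 < ‖𝕢 τ‖ := norm_pos_iff.2 (nome_ne_zero τ)
  have hmul : ‖𝕢 τ‖ * (2 * Real.pi * τ.im + 1) ≤ 1 := by
    calc ‖𝕢 τ‖ * (2 * Real.pi * τ.im + 1) ≤ ‖𝕢 τ‖ * Real.exp (2 * Real.pi * τ.im) := by
          gcongr; exact Real.add_one_le_exp _
      _ = 1 := by rw [norm_nome, ← Real.exp_add, neg_add_cancel, Real.exp_zero]
  rw [div_le_div_iff₀ (by linarith [norm_nome_lt_one hτ]) hτ]
  nlinarith [Real.pi_gt_three, mul_pos hpos hτ]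

lemma norm_jRegular_le {z : ℂ} {r : ℝ} (hz : ‖z‖ ≤ r) (hr : r < 1) :
    ‖jRegular z‖ ≤ Real.exp (18 + 96 * (r / (1 - r))) := by
  have hx : 0 ≤ r / (1 - r) := div_nonneg ((norm_nonneg z).trans hz) (by linarith)
  set E := Real.exp (r / (1 - r))
  have hE : 1 ≤ E ^ 24 := one_le_pow₀ (Real.one_le_exp hx)
  have hlevel : ‖1 + 256 * levelTwo z‖ ≤ 257 * E ^ 24 := by
    calc ‖1 + 256 * levelTwo z‖ ≤ ‖(1 : ℂ)‖ + ‖256 * levelTwo z‖ := norm_add_le _ _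
      _ = 1 + 256 * ‖levelTwo z‖ := by simp
      _ ≤ E ^ 24 + 256 * E ^ 24 := by gcongr; exact norm_levelTwo_le hz hr
      _ = 257 * E ^ 24 := by ring
  have hexp : (257 : ℝ) ≤ Real.exp 6 := by
    calc (257 : ℝ) ≤ 2.7 ^ 6 := by norm_num
      _ ≤ Real.exp 1 ^ 6 := by gcongr; linarith [Real.exp_one_gt_d9]
      _ = Real.exp 6 := by rw [← Real.exp_nat_mul]; norm_num
  calc ‖jRegular z‖ = ‖oddProd z‖ ^ 24 * ‖1 + 256 * levelTwo z‖ ^ 3 := by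
        rw [jRegular, norm_mul, norm_pow, norm_pow]
    _ ≤ E ^ 24 * (Real.exp 6 * E ^ 24) ^ 3 := by
        gcongr
        · exact norm_oddProd_le hz hr
        · exact hlevel.trans (by gcongr)
    _ = Real.exp 6 ^ 3 * E ^ 96 := by ring
    _ = Real.exp (18 + 96 * (r / (1 - r))) := by
        rw [← Real.exp_nat_mul, ← Real.exp_nat_mul, ← Real.exp_add]; norm_num

lemma norm_kleinJ_le (hτ : 0 < τ.im) :
    ‖kleinJ τ‖ ≤ Real.exp (96 * (1 + τ.im + 1 / τ.im)) := by
  have hpos : 0 < ‖𝕢 τ‖ := norm_pos_iff.2 (nome_ne_zero τ)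
  have hreg := norm_jRegular_le (z := 𝕢 τ) le_rfl (norm_nome_lt_one hτ)
  rw [← nome_mul_kleinJ hτ, norm_mul, ← le_div_iff₀' hpos] at hreg
  refine hreg.trans ?_
  rw [norm_nome τ, ← Real.exp_sub, Real.exp_le_exp, ← norm_nome τ]
  nlinarith [norm_nome_div_one_sub_le hτ, Real.pi_lt_four]

lemma tendsto_nome_atImInfty : Tendsto (fun τ : ℍ => 𝕢 τ) atImInfty (𝓝 0) :=
  qParam_tendsto_atImInfty one_pos

lemma tendsto_nome_mul_kleinJ : Tendsto (fun τ : ℍ => 𝕢 τ * kleinJ τ) atImInfty (𝓝 1) := by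
  have hlim := tendsto_comp_nome (continuousAt_zero_of_mem_intSeriesRing jRegular_mem_intSeriesRing)
  rw [jRegular_zero] at hlim
  exact hlim.congr fun τ => (nome_mul_kleinJ τ.im_pos).symm

lemma IsModularInvariant.map₂ {f g : ℂ → ℂ} (hf : IsModularInvariant f)
    (hg : IsModularInvariant g) (F : ℂ → ℂ → ℂ) : IsModularInvariant fun τ => F (f τ) (g τ) :=
  fun τ hτ => ⟨congrArg₂ F (hf τ hτ).1 (hg τ hτ).1, congrArg₂ F (hf τ hτ).2 (hg τ hτ).2⟩

/-- If `j` omitted the value `c`, then `1 / (j - c)` would be a holomorphic modular function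
vanishing at the cusp. -/
theorem exists_kleinJ_eq (c : ℂ) : ∃ τ : ℂ, 0 < τ.im ∧ kleinJ τ = c := by
  by_contra! hc
  have hne : ∀ τ : ℂ, 0 < τ.im → kleinJ τ - c ≠ 0 := fun τ hτ => sub_ne_zero.2 (hc τ hτ)
  have hinv : IsModularInvariant fun τ => (kleinJ τ - c)⁻¹ :=
    kleinJ_isModularInvariant.map₂ kleinJ_isModularInvariant fun w _ => (w - c)⁻¹
  have hlim : Tendsto (fun τ : ℍ => (kleinJ τ - c)⁻¹) atImInfty (𝓝 0) := by
    have hquot := tendsto_nome_atImInfty.div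
      (tendsto_nome_mul_kleinJ.sub (tendsto_nome_atImInfty.mul_const c)) (by simp)
    rw [zero_div] at hquot
    refine hquot.congr fun τ => ?_
    rw [Pi.div_apply, ← mul_sub, div_mul_eq_div_div, div_self (nome_ne_zero τ), one_div]
  exact inv_ne_zero (hne I I.im_pos) (hinv.eq_of_tendsto
    ((differentiableOn_kleinJ.sub_const c).inv hne) hlim I.im_pos)

/-- The ring `ℤ[j]` of functions on the upper half plane. -/
def kleinRing : Subalgebra ℤ (ℍ → ℂ) := Algebra.adjoin ℤ {fun τ : ℍ => kleinJ τ}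

lemma mem_kleinRing {f : ℍ → ℂ} :
    f ∈ kleinRing ↔ ∃ Q : Polynomial ℤ, ∀ τ : ℍ, f τ = Polynomial.aeval (kleinJ τ) Q := by
  have happly (Q : Polynomial ℤ) (τ : ℍ) : Polynomial.aeval (fun τ : ℍ => kleinJ τ) Q τ =
      Polynomial.aeval (kleinJ τ) Q :=
    (Polynomial.aeval_algHom_apply (Pi.evalAlgHom ℤ (fun _ : ℍ => ℂ) τ) _ Q).symm
  simp only [kleinRing, Algebra.adjoin_singleton_eq_range_aeval, AlgHom.mem_range, funext_iff,
    happly, eq_comm]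

lemma kleinJ_mem_kleinRing : (fun τ : ℍ => kleinJ τ) ∈ kleinRing :=
  Algebra.self_mem_adjoin_singleton ℤ _

lemma exists_sub_mul_jRegular_pow_eq {h : ℂ → ℂ} (hh : h ∈ intSeriesRing) (n : ℕ) :
    ∃ c : ℤ, ∃ k ∈ intSeriesRing, ∀ z : ℂ, ‖z‖ < 1 → h z - c * jRegular z ^ n = z * k z := by
  obtain ⟨a, ha⟩ := mem_intSeriesRing.1 hh
  obtain ⟨r, hr⟩ := exists_hasIntSeries_jRegular
  set c := PowerSeries.constantCoeff a
  have hr0 : PowerSeries.constantCoeff r = 1 := by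
    have hr0' := hr.apply_zero
    rw [jRegular_zero] at hr0'
    exact_mod_cast hr0'.symm
  obtain ⟨b, hb⟩ : PowerSeries.X ∣ a - PowerSeries.C c * r ^ n := by
    rw [PowerSeries.X_dvd_iff]
    simp [hr0, c]
  have hdiff : HasIntSeries (h + -((fun _ => (c : ℂ)) * jRegular ^ n))
      (PowerSeries.X ^ 1 * b) := by
    rw [pow_one, ← hb, sub_eq_add_neg]
    refine ha.add (HasIntSeries.neg (HasIntSeries.mul ?_ (hr.pow _)))
    simpa using hasIntSeries_monomial 0 c
  obtain ⟨k, hk, hk_eq⟩ := hdiff.exists_of_X_pow_mul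
  refine ⟨c, k, hk.mem, fun z hz => ?_⟩
  simpa [sub_eq_add_neg] using hk_eq z hz

/-- The `q`-expansion principle. -/
theorem IsModularInvariant.mem_kleinRing (m : ℕ) {f h : ℂ → ℂ} (hh : h ∈ intSeriesRing)
    (hf : IsModularInvariant f) (hfh : ∀ τ : ℂ, 0 < τ.im → 𝕢 τ ^ m * f τ = h (𝕢 τ)) :
    (fun τ : ℍ => f τ) ∈ kleinRing := by
  induction m generalizing f h with
  | zero =>
    obtain ⟨a, ha⟩ := mem_intSeriesRing.1 hh
    convert algebraMap_mem kleinRing (PowerSeries.constantCoeff a) using 1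
    funext τ
    rw [hf.eq_apply_zero hh (by simpa using hfh) τ.im_pos, ha.apply_zero]
    simp
  | succ m ih =>
    obtain ⟨c, k, hk, hck⟩ := exists_sub_mul_jRegular_pow_eq hh (m + 1)
    have hmem := ih hk (hf.map₂ kleinJ_isModularInvariant fun w j => w - c * j ^ (m + 1))
      fun τ hτ => by
        have hck' := hck _ (norm_nome_lt_one hτ)
        rw [← hfh τ hτ, ← nome_mul_kleinJ hτ] at hck'
        refine mul_left_cancel₀ (nome_ne_zero τ) ?_
        linear_combination hck'
    convert add_mem hmem (zsmul_mem (pow_mem kleinJ_mem_kleinRing (m + 1)) c) using 1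
    funext τ
    simp

lemma tendsto_nome_pow_mul_aeval_kleinJ (R : Polynomial ℤ) :
    Tendsto (fun τ : ℍ => 𝕢 τ ^ R.natDegree * Polynomial.aeval (kleinJ τ) R) atImInfty
      (𝓝 R.leadingCoeff) := by
  have hterm : ∀ i ∈ Finset.range (R.natDegree + 1), Tendsto (fun τ : ℍ => (R.coeff i : ℂ) *
      (𝕢 τ ^ (R.natDegree - i) * (𝕢 τ * kleinJ τ) ^ i)) atImInfty
      (𝓝 ((R.coeff i : ℂ) * (0 ^ (R.natDegree - i) * 1 ^ i))) := fun i _ =>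
    ((tendsto_nome_atImInfty.pow _).mul (tendsto_nome_mul_kleinJ.pow _)).const_mul _
  convert tendsto_finsetSum _ hterm using 1
  · funext τ
    rw [Polynomial.aeval_eq_sum_range, Finset.mul_sum]
    refine Finset.sum_congr rfl fun i hi => ?_
    rw [mul_pow, ← mul_assoc (𝕢 τ ^ _), ← pow_add,
      Nat.sub_add_cancel (Finset.mem_range_succ_iff.1 hi), zsmul_eq_mul, mul_left_comm]
  · congr 1
    rw [Finset.sum_range_succ, Finset.sum_eq_zero fun i hi => ?_]
    · simp
    · rw [zero_pow (Nat.sub_ne_zero_of_lt (Finset.mem_range.1 hi)), zero_mul, mul_zero]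

lemma natDegree_le_of_isBigO {R : Polynomial ℤ} {d : ℕ}
    (h : (fun τ : ℍ => 𝕢 τ ^ d * Polynomial.aeval (kleinJ τ) R) =O[atImInfty] fun _ => (1 : ℝ)) :
    R.natDegree ≤ d := by
  by_contra! hd
  have hzero : Tendsto (fun τ : ℍ => 𝕢 τ ^ (R.natDegree - d) *
      (𝕢 τ ^ d * Polynomial.aeval (kleinJ τ) R)) atImInfty (𝓝 0) := by
    have hpow := tendsto_nome_atImInfty.pow (R.natDegree - d)
    rw [zero_pow (Nat.sub_ne_zero_of_lt hd)] at hpow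
    exact hpow.zero_mul_isBoundedUnder_le (h.isBoundedUnder_le)
  have hlead := tendsto_nhds_unique (tendsto_nome_pow_mul_aeval_kleinJ R)
    (hzero.congr fun τ => by rw [← mul_assoc, ← pow_add, Nat.sub_add_cancel hd.le])
  have hR : R = 0 := Polynomial.leadingCoeff_eq_zero.1 (by exact_mod_cast hlead)
  simp [hR] at hd

end Klein

/-! ### The modular equation -/

section Newton

variable {σ R : Type*} [CommRing R] [Fintype σ]

/-- Each step of the recursion in Newton's identities divides by `k`, whence the factorial. -/
lemma factorial_mul_esymm_mem (S : Subring (MvPolynomial σ R))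
    (hS : ∀ k, MvPolynomial.psum σ R k ∈ S) (k : ℕ) :
    (k.factorial : MvPolynomial σ R) * MvPolynomial.esymm σ R k ∈ S := by
  induction k using Nat.strong_induction_on with | _ k ih =>
  rcases k with _ | k
  · simp
  · have hnewton : ((k + 1).factorial : MvPolynomial σ R) * MvPolynomial.esymm σ R (k + 1) =
        (k.factorial : MvPolynomial σ R) * ((k + 1 : ℕ) * MvPolynomial.esymm σ R (k + 1)) := by
      rw [Nat.factorial_succ]
      push_cast
      ring
    rw [hnewton, MvPolynomial.mul_esymm_eq_sum, mul_left_comm, Finset.mul_sum]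
    refine mul_mem (pow_mem (neg_mem (one_mem S)) _) (sum_mem fun a ha => ?_)
    have ha1 : a.1 < k + 1 := (Finset.mem_filter.1 ha).2
    have hdvd : k.factorial = (k.factorial / a.1.factorial) * a.1.factorial :=
      (Nat.div_mul_cancel (Nat.factorial_dvd_factorial (Nat.lt_succ_iff.1 ha1))).symm
    rw [hdvd, Nat.cast_mul, show ∀ c d e f g : MvPolynomial σ R,
      c * d * (e * f * g) = c * e * (d * f) * g from fun c d e f g => by ring]
    exact mul_mem (mul_mem (mul_mem (natCast_mem S _) (pow_mem (neg_mem (one_mem S)) _))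
      (ih _ ha1)) (hS _)

end Newton

section Hecke

variable (p : ℕ)

/-- The points `pτ` (for `none`) and `(τ + b) / p` (for `some b`) representing the sublattices of
index `p` of `ℤτ + ℤ`. -/
def heckePoint : Option (ZMod p) → ℂ → ℂ
  | none, τ => p * τ
  | some b, τ => (τ + b.val) / p

variable {p} {τ : ℂ}

lemma heckePoint_none_im : (heckePoint p none τ).im = p * τ.im := by simp [heckePoint]

lemma heckePoint_some_im (b : ZMod p) : (heckePoint p (some b) τ).im = τ.im / p := by
  simp [heckePoint]

lemma nome_natCast (n : ℕ) : 𝕢 n = 1 := by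
  rw [← mul_one (n : ℂ), nome_nat_mul, nome_one, one_pow]

lemma nome_heckePoint_none : 𝕢 (heckePoint p none τ) = 𝕢 τ ^ p := nome_nat_mul p τ

lemma nome_heckePoint_some (b : ZMod p) :
    𝕢 (heckePoint p (some b) τ) = 𝕢 (1 / p) ^ b.val * 𝕢 (τ / p) := by
  rw [← nome_nat_mul, ← nome_add, heckePoint]
  congr 1
  ring

variable [hp : Fact p.Prime]

lemma heckePoint_im_pos (i : Option (ZMod p)) (hτ : 0 < τ.im) : 0 < (heckePoint p i τ).im := by
  have hp0 : (0 : ℝ) < p := Nat.cast_pos.2 hp.out.pos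
  rcases i with _ | b
  · rw [heckePoint_none_im]; positivity
  · rw [heckePoint_some_im]; positivity

lemma nome_div_pow (τ : ℂ) : 𝕢 (τ / p) ^ p = 𝕢 τ := by
  rw [← nome_nat_mul, mul_div_cancel₀ _ (Nat.cast_ne_zero.2 hp.out.ne_zero)]

lemma isPrimitiveRoot_nome_one_div : IsPrimitiveRoot (𝕢 (1 / p)) p := by
  convert Complex.isPrimitiveRoot_exp p hp.out.ne_zero using 1
  rw [Function.Periodic.qParam]
  congr 1
  push_cast
  ring

lemma kleinJ_add_natCast_div (n : ℕ) :
    kleinJ ((τ + n) / p) = kleinJ (heckePoint p (some (n : ZMod p)) τ) := by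
  have hn : ((n : ℕ) : ℂ) = (n % p : ℕ) + p * (n / p : ℕ) := by
    exact_mod_cast (Nat.mod_add_div n p).symm
  have hsplit : (τ + n) / p = heckePoint p (some (n : ZMod p)) τ + (n / p : ℕ) := by
    have hp0 : (p : ℂ) ≠ 0 := Nat.cast_ne_zero.2 hp.out.ne_zero
    rw [heckePoint, ZMod.val_natCast, hn]
    field_simp
    ring
  rw [kleinJ, kleinJ, hsplit, nome_add, nome_natCast, mul_one]

lemma kleinJ_heckePoint_add_one (i : Option (ZMod p)) :
    kleinJ (heckePoint p i (τ + 1)) =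
      kleinJ (heckePoint p (Equiv.optionCongr (Equiv.addRight (1 : ZMod p)) i) τ) := by
  rcases i with _ | b
  · have hshift : heckePoint p none (τ + 1) = heckePoint p none τ + p := by
      rw [heckePoint, heckePoint, mul_add, mul_one]
    rw [kleinJ, hshift, nome_add, nome_natCast, mul_one]
    rfl
  · have hshift : heckePoint p (some b) (τ + 1) = (τ + (b.val + 1 : ℕ)) / p := by
      rw [heckePoint]
      push_cast
      ring
    rw [hshift, kleinJ_add_natCast_div]
    simp

variable (p) in
/-- The permutation of the index `p` sublattices induced by `τ ↦ -1 / τ`. -/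
def heckeInversion : Equiv.Perm (Option (ZMod p)) :=
  (Equiv.optionCongr ((Equiv.inv (ZMod p)).trans (Equiv.neg _))).trans (Equiv.swap none (some 0))

lemma heckeInversion_none : heckeInversion p none = some 0 := by simp [heckeInversion]

lemma heckeInversion_zero : heckeInversion p (some 0) = none := by simp [heckeInversion]

lemma heckeInversion_some {b : ZMod p} (hb : b ≠ 0) : heckeInversion p (some b) = some (-b⁻¹) := by
  simp [heckeInversion, Equiv.swap_apply_of_ne_of_ne, hb]

lemma exists_val_mul_val_add_one {b : ZMod p} (hb : b ≠ 0) :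
    ∃ c : ℤ, (b.val : ℤ) * (-b⁻¹).val + 1 = p * c := by
  refine (ZMod.intCast_zmod_eq_zero_iff_dvd _ p).1 ?_
  push_cast
  rw [ZMod.natCast_zmod_val, ZMod.natCast_zmod_val, mul_neg, mul_inv_cancel₀ hb, neg_add_cancel]

lemma kleinJ_heckePoint_neg_one_div (i : Option (ZMod p)) (hτ : 0 < τ.im) :
    kleinJ (heckePoint p i (-1 / τ)) = kleinJ (heckePoint p (heckeInversion p i) τ) := by
  have hp0 : (p : ℂ) ≠ 0 := Nat.cast_ne_zero.2 hp.out.ne_zero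
  have hτ0 := ne_zero_of_im_pos hτ
  rcases i with _ | b
  · rw [heckeInversion_none, ← (kleinJ_isModularInvariant _ (heckePoint_im_pos (some 0) hτ)).2,
      heckePoint, heckePoint, ZMod.val_zero]
    congr 1
    push_cast
    field_simp
    rw [add_zero, div_self hτ0]
  · rcases eq_or_ne b 0 with rfl | hb
    · rw [heckeInversion_zero, ← (kleinJ_isModularInvariant _ (heckePoint_im_pos none hτ)).2,
        heckePoint, heckePoint, ZMod.val_zero]
      congr 1
      field_simp
      simp
    · obtain ⟨c, hc⟩ := exists_val_mul_val_add_one hb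
      rw [heckeInversion_some hb]
      generalize -b⁻¹ = b' at hc ⊢
      rw [← kleinJ_isModularInvariant.apply_moebius (a := b.val) (b := -c) (c := p)
        (d := -b'.val) (by linarith) (heckePoint_im_pos _ hτ)]
      have hcC : (b.val : ℂ) * b'.val + 1 = p * c := by exact_mod_cast hc
      have hden : (p : ℂ) * heckePoint p (some b') τ + -b'.val = τ := by
        rw [heckePoint]
        field_simp
        ring
      congr 1
      push_cast
      rw [hden, heckePoint, heckePoint]
      field_simp
      linear_combination -hcC

lemma kleinJ_heckePoint_powerSum_isModularInvariant (k : ℕ) :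
    IsModularInvariant fun τ => ∑ i, kleinJ (heckePoint p i τ) ^ k := by
  refine fun τ hτ => ⟨?_, ?_⟩
  · simp only [kleinJ_heckePoint_add_one]
    exact Equiv.sum_comp _ fun i => kleinJ (heckePoint p i τ) ^ k
  · simp only [kleinJ_heckePoint_neg_one_div _ hτ]
    exact Equiv.sum_comp _ fun i => kleinJ (heckePoint p i τ) ^ k

lemma exists_nome_pow_mul_sum_kleinJ_pow_eq (k : ℕ) :
    ∃ h ∈ intSeriesRing, ∀ τ : ℂ, 0 < τ.im →
      𝕢 τ ^ k * ∑ b : ZMod p, kleinJ (heckePoint p (some b) τ) ^ k = h (𝕢 τ) := by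
  obtain ⟨r, hr⟩ := exists_hasIntSeries_jRegular
  obtain ⟨h, hh, hsum⟩ := ((hasIntSeries_monomial (p * k - k) 1).mul (hr.pow k)).exists_sum_roots
    hp.out.ne_zero (isPrimitiveRoot_nome_one_div (p := p))
  refine ⟨h, hh, fun τ hτ => ?_⟩
  have hτp : 0 < (τ / p).im := by simpa using div_pos hτ (Nat.cast_pos.2 hp.out.pos)
  rw [← nome_div_pow (p := p) τ, ← hsum _ (norm_nome_lt_one hτp), Finset.mul_sum]
  have hsum_range (g : ℕ → ℂ) : ∑ b ∈ Finset.range p, g b = ∑ b : ZMod p, g b.val :=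
    Finset.sum_nbij' (fun b => (b : ZMod p)) ZMod.val (fun _ _ => Finset.mem_univ _)
      (fun b _ => Finset.mem_range.2 b.val_lt)
      (fun b hb => ZMod.val_cast_of_lt (Finset.mem_range.1 hb)) (fun b _ => ZMod.natCast_zmod_val b)
      fun b hb => by rw [ZMod.val_cast_of_lt (Finset.mem_range.1 hb)]
  rw [hsum_range]
  refine Finset.sum_congr rfl fun b _ => ?_
  rw [← nome_heckePoint_some]
  have hpow : 𝕢 (heckePoint p (some b) τ) ^ p = 𝕢 (τ / p) ^ p := by
    rw [nome_heckePoint_some, mul_pow, pow_right_comm,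
      isPrimitiveRoot_nome_one_div.pow_eq_one, one_pow, one_mul]
  have hk : k ≤ p * k := Nat.le_mul_of_pos_left k hp.out.pos
  rw [Pi.mul_apply, Pi.pow_apply, ← nome_mul_kleinJ (heckePoint_im_pos _ hτ), Int.cast_one, one_mul,
    mul_pow, ← mul_assoc, ← pow_add, Nat.sub_add_cancel hk, pow_mul, hpow]

lemma kleinJ_heckePoint_powerSum_mem_kleinRing (k : ℕ) :
    (fun τ : ℍ => ∑ i, kleinJ (heckePoint p i τ) ^ k) ∈ kleinRing := by
  obtain ⟨r, hr⟩ := exists_hasIntSeries_jRegular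
  obtain ⟨h, hh, hsum⟩ := exists_nome_pow_mul_sum_kleinJ_pow_eq (p := p) k
  refine (kleinJ_heckePoint_powerSum_isModularInvariant k).mem_kleinRing (p * k) (add_mem
    ((hr.comp_pow hp.out.ne_zero).pow k).mem
    (mul_mem (hasIntSeries_monomial (p * k - k) 1).mem hh)) fun τ hτ => ?_
  have hk : k ≤ p * k := Nat.le_mul_of_pos_left k hp.out.pos
  rw [Pi.add_apply, Pi.mul_apply, Pi.pow_apply, ← hsum τ hτ,
    ← nome_heckePoint_none (p := p), ← nome_mul_kleinJ (heckePoint_im_pos none hτ),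
    Fintype.sum_option, mul_add, mul_pow, nome_heckePoint_none, Int.cast_one, one_mul,
    ← mul_assoc, ← pow_mul, ← pow_add, Nat.sub_add_cancel hk]

lemma exists_aeval_kleinJ_eq_factorial_mul_esymm (k : ℕ) : ∃ S : Polynomial ℤ, ∀ τ : ℍ,
    Polynomial.aeval (kleinJ τ) S = (k.factorial : ℂ) *
      (Finset.univ.val.map fun i => kleinJ (heckePoint p i τ)).esymm k := by
  let conj := fun (i : Option (ZMod p)) (τ : ℍ) => kleinJ (heckePoint p i τ)
  have hpsum (k : ℕ) : MvPolynomial.psum (Option (ZMod p)) ℤ k ∈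
      kleinRing.toSubring.comap (MvPolynomial.aeval conj).toRingHom := by
    change MvPolynomial.aeval conj _ ∈ kleinRing
    convert kleinJ_heckePoint_powerSum_mem_kleinRing (p := p) k using 1
    funext τ
    simp [MvPolynomial.psum, conj]
  have hesymm : MvPolynomial.aeval conj _ ∈ kleinRing := factorial_mul_esymm_mem _ hpsum k
  obtain ⟨S, hS⟩ := mem_kleinRing.1 hesymm
  refine ⟨S, fun τ => ?_⟩
  rw [← hS τ, map_mul, MvPolynomial.aeval_esymm_eq_multiset_esymm, map_natCast]
  simp [conj, Finset.esymm_map_val]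

lemma norm_prod_nome_heckePoint (τ : ℂ) : ‖∏ i, 𝕢 (heckePoint p i τ)‖ = ‖𝕢 τ ^ (p + 1)‖ := by
  have hp0 : (p : ℝ) ≠ 0 := Nat.cast_ne_zero.2 hp.out.ne_zero
  rw [norm_prod, norm_pow, Fintype.prod_option]
  simp only [norm_nome, heckePoint_none_im, heckePoint_some_im, Finset.prod_const, Finset.card_univ,
    ZMod.card, ← Real.exp_nat_mul, ← Real.exp_add]
  congr 1
  push_cast
  field_simp
  ring

lemma tendsto_nome_heckePoint (i : Option (ZMod p)) :
    Tendsto (fun τ : ℍ => 𝕢 (heckePoint p i τ)) atImInfty (𝓝 0) := by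
  have hp0 : (0 : ℝ) < p := Nat.cast_pos.2 hp.out.pos
  have him : Tendsto (fun τ : ℍ => (heckePoint p i τ).im) atImInfty atTop := by
    rcases i with _ | b
    · simp only [heckePoint_none_im]
      exact tendsto_comap.const_mul_atTop hp0
    · simp only [heckePoint_some_im]
      exact tendsto_comap.atTop_div_const hp0
  exact ((Function.Periodic.qParam_tendsto one_pos).mono_right nhdsWithin_le_nhds).comp
    (tendsto_comap_iff.2 him)

lemma tendsto_nome_mul_kleinJ_heckePoint (i : Option (ZMod p)) :
    Tendsto (fun τ : ℍ => 𝕢 (heckePoint p i τ) * kleinJ (heckePoint p i τ)) atImInfty (𝓝 1) := by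
  have hlim := (continuousAt_zero_of_mem_intSeriesRing jRegular_mem_intSeriesRing).tendsto.comp
    (tendsto_nome_heckePoint i)
  rw [jRegular_zero] at hlim
  exact hlim.congr fun τ => (nome_mul_kleinJ (heckePoint_im_pos i τ.im_pos)).symm

lemma nome_pow_mul_esymm_isBigO (k : ℕ) : (fun τ : ℍ => 𝕢 τ ^ (p + 1) *
    (Finset.univ.val.map fun i => kleinJ (heckePoint p i τ)).esymm k) =O[atImInfty]
      fun _ => (1 : ℝ) := by
  simp only [Finset.esymm_map_val, Finset.mul_sum]
  refine Asymptotics.IsBigO.fun_sum fun t _ => ?_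
  have hlim : Tendsto
      (fun τ : ℍ => (∏ i, 𝕢 (heckePoint p i τ)) * ∏ i ∈ t, kleinJ (heckePoint p i τ)) atImInfty
      (𝓝 ((∏ i ∈ t, 1) * ∏ i ∈ tᶜ, 0)) := by
    refine ((tendsto_finsetProd t fun i _ => tendsto_nome_mul_kleinJ_heckePoint i).mul
      (tendsto_finsetProd tᶜ fun i _ => tendsto_nome_heckePoint i)).congr fun τ => ?_
    rw [Finset.prod_mul_distrib, ← Finset.prod_mul_prod_compl t, mul_right_comm]
  have hO := (hlim.isBigO_one ℝ).norm_left
  refine (hO.congr_left fun τ => ?_).of_norm_left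
  rw [norm_mul, norm_mul, norm_prod_nome_heckePoint]

lemma natDegree_prod_X_sub_C_kleinJ (τ : ℂ) :
    (∏ i, (Polynomial.X - Polynomial.C (kleinJ (heckePoint p i τ)))).natDegree = p + 1 := by
  rw [Polynomial.natDegree_finsetProd_X_sub_C_eq_card]
  simp

lemma exists_aeval_kleinJ_eq_factorial_mul_coeff (k : ℕ) : ∃ S : Polynomial ℤ,
    S.natDegree ≤ p + 1 ∧ ∀ τ : ℍ, Polynomial.aeval (kleinJ τ) S = ((p + 1).factorial : ℂ) *
      (∏ i, (Polynomial.X - Polynomial.C (kleinJ (heckePoint p i τ)))).coeff k := by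
  rcases le_or_gt k (p + 1) with hk | hk
  · obtain ⟨S, hS⟩ := exists_aeval_kleinJ_eq_factorial_mul_esymm (p := p) (p + 1 - k)
    have hcoeff (τ : ℍ) : (∏ i, (Polynomial.X - Polynomial.C (kleinJ (heckePoint p i τ)))).coeff k =
        (-1) ^ (p + 1 - k) *
          (Finset.univ.val.map fun i => kleinJ (heckePoint p i τ)).esymm (p + 1 - k) := by
      have hcard : (Finset.univ.val.map fun i => kleinJ (heckePoint p i τ)).card = p + 1 := by simp
      have hvieta := Multiset.prod_X_sub_C_coeff _ (hcard ▸ hk)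
      rwa [hcard, Multiset.map_map] at hvieta
    have hdeg : S.natDegree ≤ p + 1 := natDegree_le_of_isBigO <| by
      simp only [hS, mul_left_comm (_ ^ (p + 1))]
      exact (nome_pow_mul_esymm_isBigO _).const_mul_left _
    obtain ⟨m, hm⟩ := Nat.factorial_dvd_factorial (Nat.sub_le (p + 1) k)
    refine ⟨Polynomial.C ((-1) ^ (p + 1 - k) * (m : ℤ)) * S,
      (Polynomial.natDegree_C_mul_le _ _).trans hdeg, fun τ => ?_⟩
    rw [map_mul, Polynomial.aeval_C, hS, hcoeff, hm]
    push_cast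
    ring
  · refine ⟨0, by simp, fun τ => ?_⟩
    rw [Polynomial.coeff_eq_zero_of_natDegree_lt (by rwa [natDegree_prod_X_sub_C_kleinJ]),
      map_zero, mul_zero]

variable (p) in
/-- The modular equation of level `p`, multiplied by `(p + 1)!` to clear the denominators coming
from Newton's identities. -/
theorem exists_modular_equation : ∃ Φ : Polynomial (Polynomial ℤ),
    (∀ k, (Φ.coeff k).natDegree ≤ p + 1) ∧ ∀ τ : ℂ, 0 < τ.im →
      Φ.map (Polynomial.aeval (kleinJ τ) : Polynomial ℤ →ₐ[ℤ] ℂ).toRingHom =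
        Polynomial.C ((p + 1).factorial : ℂ) *
          ∏ i, (Polynomial.X - Polynomial.C (kleinJ (heckePoint p i τ))) := by
  choose S hdeg hS using exists_aeval_kleinJ_eq_factorial_mul_coeff (p := p)
  have hcoeff (k : ℕ) : (∑ i ∈ Finset.range (p + 2), Polynomial.monomial i (S i)).coeff k =
      if k < p + 2 then S k else 0 := by
    simp [Polynomial.coeff_monomial]
  refine ⟨∑ i ∈ Finset.range (p + 2), Polynomial.monomial i (S i), fun k => ?_, fun τ hτ => ?_⟩
  · rw [hcoeff]
    split_ifs
    exacts [hdeg k, by simp]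
  · ext k
    rw [Polynomial.coeff_map, Polynomial.coeff_C_mul, hcoeff]
    split_ifs with hk
    · exact hS k ⟨τ, hτ⟩
    · rw [Polynomial.coeff_eq_zero_of_natDegree_lt
        (by rw [natDegree_prod_X_sub_C_kleinJ]; lia), map_zero, mul_zero]

end Hecke

/-! ### Liouville's inequality -/

local notation "ℚbar" => algebraicClosure ℚ ℂ

lemma finite_range_embedding (x : ℚbar) : (Set.range fun σ : ℚbar →ₐ[ℚ] ℂ => σ x).Finite := by
  have : Algebra.IsAlgebraic ℚ ℚbar := algebraicClosure.isAlgebraic ℚ ℂ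
  rw [Algebra.IsAlgebraic.range_eval_eq_rootSet_minpoly ℂ x]
  exact Polynomial.rootSet_finite _ _

lemma one_le_norm_prod_aroots {α : ℂ} (hα : IsIntegral ℤ α) (h0 : α ≠ 0) :
    1 ≤ ‖((minpoly ℚ α).aroots ℂ).prod‖ := by
  have hmonic : ((minpoly ℚ α).map (algebraMap ℚ ℂ)).Monic :=
    (minpoly.monic hα.tower_top).map _
  have hcoeff : ((minpoly ℚ α).map (algebraMap ℚ ℂ)).coeff 0 = ((minpoly ℤ α).coeff 0 : ℂ) := by
    rw [minpoly.isIntegrallyClosed_eq_field_fractions' ℚ hα, Polynomial.map_map,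
      Polynomial.coeff_map, eq_intCast]
  have hne : (minpoly ℤ α).coeff 0 ≠ 0 := by
    intro h
    rw [h, Int.cast_zero, Polynomial.coeff_map, _root_.map_eq_zero] at hcoeff
    exact minpoly.coeff_zero_ne_zero hα.tower_top h0 hcoeff
  rw [(IsAlgClosed.splits _).coeff_zero_eq_prod_roots_of_monic hmonic] at hcoeff
  have hnorm := congrArg norm hcoeff
  rw [norm_mul, norm_pow, norm_neg, norm_one, one_pow, one_mul, Complex.norm_intCast] at hnorm
  rw [Polynomial.aroots, hnorm]
  exact_mod_cast Int.one_le_abs hne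

lemma one_le_norm_mul_pow_card {α : ℚbar} (hα : IsIntegral ℤ (α : ℂ)) (h0 : α ≠ 0)
    {S : Finset ℂ} {M : ℝ} (hM : 1 ≤ M) (hS : ∀ σ : ℚbar →ₐ[ℚ] ℂ, σ α ∈ S)
    (hSM : ∀ s ∈ S, ‖s‖ ≤ M) : 1 ≤ ‖(α : ℂ)‖ * M ^ S.card := by
  classical
  have : Algebra.IsAlgebraic ℚ ℚbar := algebraicClosure.isAlgebraic ℚ ℂ
  have hminpoly : minpoly ℚ α = minpoly ℚ (α : ℂ) :=
    (minpoly.algebraMap_eq (algebraMap ℚbar ℂ).injective α).symm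
  have hint : IsIntegral ℚ (α : ℂ) := hα.tower_top
  have hnodup : ((minpoly ℚ (α : ℂ)).aroots ℂ).Nodup :=
    Polynomial.nodup_aroots_iff_of_splits (minpoly.ne_zero hint) (IsAlgClosed.splits _) |>.2
      (minpoly.irreducible hint).separable
  have hsub : ((minpoly ℚ (α : ℂ)).aroots ℂ).toFinset ⊆ S := by
    intro r hr
    have hr' : r ∈ (minpoly ℚ α).rootSet ℂ := by
      rw [hminpoly]
      exact hr
    rw [← Algebra.IsAlgebraic.range_eval_eq_rootSet_minpoly ℂ α] at hr'
    obtain ⟨σ, rfl⟩ := hr'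
    exact hS σ
  have hmem : (α : ℂ) ∈ ((minpoly ℚ (α : ℂ)).aroots ℂ).toFinset := by
    rw [Multiset.mem_toFinset, Polynomial.mem_aroots]
    exact ⟨minpoly.ne_zero hint, minpoly.aeval _ _⟩
  calc (1 : ℝ) ≤ ‖((minpoly ℚ (α : ℂ)).aroots ℂ).prod‖ :=
        one_le_norm_prod_aroots hα (by exact_mod_cast h0)
    _ = ‖(α : ℂ)‖ * ∏ r ∈ ((minpoly ℚ (α : ℂ)).aroots ℂ).toFinset.erase α, ‖r‖ := by
        rw [Finset.mul_prod_erase _ norm hmem, ← norm_prod, Finset.prod_eq_multiset_prod,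
          Multiset.toFinset_val, hnodup.dedup, Multiset.map_id']
    _ ≤ ‖(α : ℂ)‖ * M ^ (((minpoly ℚ (α : ℂ)).aroots ℂ).toFinset.erase α).card := by
        rw [← Finset.prod_const]
        gcongr with r hr
        exact hSM r (hsub (Finset.mem_of_mem_erase hr))
    _ ≤ ‖(α : ℂ)‖ * M ^ S.card := by
        gcongr
        exact (Finset.erase_subset _ _).trans hsub

lemma exists_natCast_mul_isIntegral {x : ℂ} (hx : IsAlgebraic ℚ x) :
    ∃ d : ℕ, d ≠ 0 ∧ IsIntegral ℤ ((d : ℂ) * x) := by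
  obtain ⟨y, hy, h⟩ := ((IsFractionRing.isAlgebraic_iff ℤ ℚ ℂ).2 hx).exists_integral_multiple
  refine ⟨y.natAbs, Int.natAbs_ne_zero.2 hy, ?_⟩
  rw [zsmul_eq_mul] at h
  rcases Int.natAbs_eq y with hnat | hnat
  · rwa [hnat, Int.cast_natCast] at h
  · rw [hnat, Int.cast_neg, neg_mul, Int.cast_natCast] at h
    exact IsIntegral.neg_iff.1 h

lemma isIntegral_leadingCoeff_mul {R A : Type*} [CommRing R] [CommRing A] [Algebra R A]
    {P : Polynomial A} (hP : ∀ k, IsIntegral R (P.coeff k)) {y : A} (hy : P.eval y = 0) :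
    IsIntegral R (P.leadingCoeff * y) := by
  have hlift : P ∈ Polynomial.lifts (algebraMap (integralClosure R A) A) :=
    (Polynomial.lifts_iff_coeff_lifts P).2 fun k => ⟨⟨P.coeff k, hP k⟩, rfl⟩
  obtain ⟨Q, hQ, hdeg⟩ := Polynomial.exists_degree_eq_of_mem_lifts hlift
  have hlead : P.leadingCoeff = algebraMap (integralClosure R A) A Q.leadingCoeff := by
    rw [Polynomial.leadingCoeff, Polynomial.leadingCoeff, ← hQ, Polynomial.coeff_map, hQ,
      Polynomial.natDegree_eq_of_degree_eq hdeg]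
  rw [← hQ, Polynomial.eval_map_algebraMap] at hy
  rw [hlead, ← Algebra.smul_def]
  exact isIntegral_trans (A := integralClosure R A) _ (isIntegral_leadingCoeff_smul Q y hy)

/-- The value at `(x, y)` of the integer polynomial with coefficient `c (i, j)` at `Xⁱ Yʲ`, whose
partial degrees are less than `n`. -/
def bivEval {n : ℕ} {A : Type*} [CommRing A] (c : Fin n × Fin n → ℤ) (x y : A) : A :=
  ∑ k, (c k : A) * (x ^ (k.1 : ℕ) * y ^ (k.2 : ℕ))

lemma map_bivEval {n : ℕ} {A B F : Type*} [CommRing A] [CommRing B] [FunLike F A B]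
    [RingHomClass F A B] (σ : F) (c : Fin n × Fin n → ℤ) (x y : A) :
    σ (bivEval c x y) = bivEval c (σ x) (σ y) := by
  simp only [bivEval, map_sum, map_mul, map_pow, map_intCast]

lemma norm_bivEval_le {n : ℕ} {c : Fin n × Fin n → ℤ} {H A B : ℝ} (hc : ∀ k, |(c k : ℝ)| ≤ H)
    (hA : 1 ≤ A) (hB : 1 ≤ B) {x y : ℂ} (hx : ‖x‖ ≤ A) (hy : ‖y‖ ≤ B) :
    ‖bivEval c x y‖ ≤ n ^ 2 * (H * (A * B) ^ n) := by
  have hterm (k : Fin n × Fin n) :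
      ‖(c k : ℂ) * (x ^ (k.1 : ℕ) * y ^ (k.2 : ℕ))‖ ≤ H * (A * B) ^ n := by
    have hH : 0 ≤ H := (abs_nonneg _).trans (hc k)
    have hpow {z : ℂ} {r : ℝ} (hr : 1 ≤ r) (hz : ‖z‖ ≤ r) (i : Fin n) : ‖z‖ ^ (i : ℕ) ≤ r ^ n :=
      (pow_le_pow_left₀ (norm_nonneg _) hz _).trans (pow_le_pow_right₀ hr i.2.le)
    rw [norm_mul, norm_mul, norm_pow, norm_pow, Complex.norm_intCast, mul_pow]
    gcongr
    exacts [hc k, hpow hA hx _, hpow hB hy _]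
  refine (norm_sum_le_of_le _ fun k _ => hterm k).trans_eq ?_
  rw [Finset.sum_const, Finset.card_univ, Fintype.card_prod, Fintype.card_fin, nsmul_eq_mul,
    Nat.cast_mul, sq]

lemma isIntegral_pow_mul_bivEval {n : ℕ} {R A : Type*} [CommRing R] [CommRing A] [Algebra R A]
    (c : Fin n × Fin n → ℤ) {a b x y : A} (ha : IsIntegral R a) (hb : IsIntegral R b)
    (hx : IsIntegral R (a * x)) (hy : IsIntegral R (b * y)) :
    IsIntegral R ((a * b) ^ n * bivEval c x y) := by
  rw [bivEval, Finset.mul_sum]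
  refine IsIntegral.sum _ fun k _ => ?_
  have hsplit : (a * b) ^ n * ((c k : A) * (x ^ (k.1 : ℕ) * y ^ (k.2 : ℕ))) =
      c k * (a ^ (n - k.1) * (a * x) ^ (k.1 : ℕ) * (b ^ (n - k.2) * (b * y) ^ (k.2 : ℕ))) := by
    rw [mul_pow, ← pow_sub_mul_pow a k.1.2.le, ← pow_sub_mul_pow b k.2.2.le]
    ring
  rw [hsplit]
  exact .mul (isIntegral_intCast _)
    (((ha.pow _).mul (hx.pow _)).mul ((hb.pow _).mul (hy.pow _)))

lemma one_le_norm_bivEval_mul_pow {n : ℕ} {c : Fin n × Fin n → ℤ} {H A B : ℝ} {ξ η : ℚbar}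
    {a b : ℕ} (ha : a ≠ 0) (hb : b ≠ 0) (hξ : IsIntegral ℤ ((a : ℂ) * ξ))
    (hη : IsIntegral ℤ ((b : ℂ) * η)) (hH : 1 ≤ H) (hc : ∀ k, |(c k : ℝ)| ≤ H) (hA : 1 ≤ A)
    (hB : 1 ≤ B) {T : Finset (ℂ × ℂ)} (hT : ∀ σ : ℚbar →ₐ[ℚ] ℂ, (σ ξ, σ η) ∈ T)
    (hTA : ∀ t ∈ T, ‖t.1‖ ≤ A) (hTB : ∀ t ∈ T, ‖t.2‖ ≤ B)
    (hne : bivEval c (ξ : ℂ) (η : ℂ) ≠ 0) :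
    1 ≤ ‖bivEval c (ξ : ℂ) (η : ℂ)‖ *
      ((a * b) ^ n * (n ^ 2 * (H * (A * B) ^ n))) ^ (T.card + 1) := by
  classical
  set M : ℝ := (a * b) ^ n * (n ^ 2 * (H * (A * B) ^ n)) with hM
  have hn : n ≠ 0 := by
    rintro rfl
    exact hne (Finset.sum_of_isEmpty _)
  have hn1 : (1 : ℝ) ≤ n := by exact_mod_cast Nat.one_le_iff_ne_zero.2 hn
  have hab1 : (1 : ℝ) ≤ a * b := by exact_mod_cast Nat.one_le_iff_ne_zero.2 (mul_ne_zero ha hb)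
  have habM : ((a : ℝ) * b) ^ n ≤ M :=
    le_mul_of_one_le_right (by positivity) <| one_le_mul_of_one_le_of_one_le (one_le_pow₀ hn1) <|
      one_le_mul_of_one_le_of_one_le hH (one_le_pow₀ (one_le_mul_of_one_le_of_one_le hA hB))
  set α : ℚbar := ((a : ℚbar) * b) ^ n * bivEval c ξ η with hα
  have hcoe : (α : ℂ) = ((a : ℂ) * b) ^ n * bivEval c (ξ : ℂ) (η : ℂ) := by
    change algebraMap ℚbar ℂ α = _
    rw [hα, map_mul, map_pow, map_mul, map_natCast, map_natCast, map_bivEval]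
    rfl
  have hint : IsIntegral ℤ (α : ℂ) :=
    hcoe ▸ isIntegral_pow_mul_bivEval c (isIntegral_natCast a) (isIntegral_natCast b) hξ hη
  have hα0 : α ≠ 0 := by
    have h : (α : ℂ) ≠ 0 := by
      rw [hcoe]
      exact mul_ne_zero (pow_ne_zero _ (by exact_mod_cast mul_ne_zero ha hb)) hne
    exact_mod_cast h
  have hmem (σ : ℚbar →ₐ[ℚ] ℂ) :
      σ α ∈ T.image fun t => ((a : ℂ) * b) ^ n * bivEval c t.1 t.2 := by
    refine Finset.mem_image.2 ⟨_, hT σ, ?_⟩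
    simp only [hα, map_mul, map_pow, map_natCast, map_bivEval]
  have hbound : ∀ s ∈ T.image fun t => ((a : ℂ) * b) ^ n * bivEval c t.1 t.2, ‖s‖ ≤ M := by
    simp only [Finset.mem_image]
    rintro s ⟨t, ht, rfl⟩
    rw [norm_mul, norm_pow, norm_mul, Complex.norm_natCast, Complex.norm_natCast]
    rw [hM]
    gcongr
    exact norm_bivEval_le hc hA hB (hTA t ht) (hTB t ht)
  have hM1 : 1 ≤ M := (one_le_pow₀ hab1).trans habM
  calc (1 : ℝ) ≤ ‖(α : ℂ)‖ * M ^ _ := one_le_norm_mul_pow_card hint hα0 hM1 hmem hbound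
    _ ≤ M * ‖bivEval c (ξ : ℂ) (η : ℂ)‖ * M ^ T.card := by
        rw [hcoe, norm_mul, norm_pow, norm_mul, Complex.norm_natCast, Complex.norm_natCast]
        gcongr
        exact Finset.card_image_le
    _ = ‖bivEval c (ξ : ℂ) (η : ℂ)‖ * M ^ (T.card + 1) := by ring

/-! ### A lower bound for polynomials in `q ^ p` and `j (p τ)` -/

lemma isIntegral_pow_mul_aeval {A : Type*} [CommRing A] {P : Polynomial ℤ} {n : ℕ}
    (hP : P.natDegree ≤ n) {d x : A} (hd : IsIntegral ℤ d) (hx : IsIntegral ℤ (d * x)) :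
    IsIntegral ℤ (d ^ n * Polynomial.aeval x P) := by
  rw [Polynomial.aeval_eq_sum_range' (Nat.lt_succ_of_le hP), Finset.mul_sum]
  refine IsIntegral.sum _ fun i hi => ?_
  have hsplit : d ^ n * P.coeff i • x ^ i = P.coeff i • (d ^ (n - i) * (d * x) ^ i) := by
    rw [mul_pow, ← mul_assoc, pow_sub_mul_pow d (Finset.mem_range_succ_iff.1 hi), mul_smul_comm]
  rw [hsplit]
  exact ((hd.pow _).mul (hx.pow _)).smul _

lemma map_eval₂_aeval {A B : Type*} [CommRing A] [CommRing B] (σ : A →+* B) (x y : A)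
    (Φ : Polynomial (Polynomial ℤ)) :
    σ (Φ.eval₂ (Polynomial.aeval x : Polynomial ℤ →ₐ[ℤ] A).toRingHom y) =
      Φ.eval₂ (Polynomial.aeval (σ x) : Polynomial ℤ →ₐ[ℤ] B).toRingHom (σ y) := by
  rw [Polynomial.hom_eval₂]
  congr 1
  ext <;> simp

section Hecke

variable {p : ℕ} [hp : Fact p.Prime] {τ : ℂ}

lemma isIntegral_mul_kleinJ_nat_mul (hτ : 0 < τ.im) {d : ℕ}
    (hd : IsIntegral ℤ ((d : ℂ) * kleinJ τ)) :
    IsIntegral ℤ (((d ^ (p + 1) * (p + 1).factorial : ℕ) : ℂ) * kleinJ (p * τ)) := by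
  obtain ⟨Φ, hdeg, hΦ⟩ := exists_modular_equation p
  set P := Polynomial.C ((d : ℂ) ^ (p + 1)) *
    Φ.map (Polynomial.aeval (kleinJ τ) : Polynomial ℤ →ₐ[ℤ] ℂ).toRingHom with hP
  have hcoeff (k : ℕ) : IsIntegral ℤ (P.coeff k) := by
    rw [hP, Polynomial.coeff_C_mul, Polynomial.coeff_map]
    exact isIntegral_pow_mul_aeval (hdeg k) (isIntegral_natCast d) hd
  have hroot : P.eval (kleinJ (p * τ)) = 0 := by
    rw [hP, hΦ τ hτ, Polynomial.eval_mul, Polynomial.eval_mul, Polynomial.eval_prod,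
      Finset.prod_eq_zero (Finset.mem_univ none), mul_zero, mul_zero]
    simp [heckePoint]
  have hlead : P.leadingCoeff = ((d ^ (p + 1) * (p + 1).factorial : ℕ) : ℂ) := by
    rw [hP, hΦ τ hτ, ← mul_assoc, ← Polynomial.C_mul, Polynomial.leadingCoeff_mul_monic
      (Polynomial.monic_prod_X_sub_C _ _), Polynomial.leadingCoeff_C]
    push_cast
    rfl
  exact hlead ▸ isIntegral_leadingCoeff_mul hcoeff hroot

lemma isAlgebraic_kleinJ_nat_mul (hτ : 0 < τ.im) (hj : IsAlgebraic ℚ (kleinJ τ)) :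
    IsAlgebraic ℚ (kleinJ (p * τ)) := by
  obtain ⟨d, hd0, hd⟩ := exists_natCast_mul_isIntegral hj
  have hint := isIntegral_mul_kleinJ_nat_mul (p := p) hτ hd
  rw [← inv_mul_cancel_left₀ (a := ((d ^ (p + 1) * (p + 1).factorial : ℕ) : ℂ))
    (by exact_mod_cast mul_ne_zero (pow_ne_zero _ hd0) (Nat.factorial_ne_zero _))
    (kleinJ (p * τ))]
  exact (isAlgebraic_natCast _).inv.mul (hint.tower_top (A := ℚ)).isAlgebraic

lemma exists_embedding_eq_kleinJ_heckePoint (hτ : 0 < τ.im) (σ : ℚbar →ₐ[ℚ] ℂ) {x y : ℚbar}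
    (hx : (x : ℂ) = kleinJ τ) (hy : (y : ℂ) = kleinJ (p * τ)) {τ' : ℂ} (hτ' : 0 < τ'.im)
    (hxτ' : kleinJ τ' = σ x) : ∃ i, σ y = kleinJ (heckePoint p i τ') := by
  obtain ⟨Φ, -, hΦ⟩ := exists_modular_equation p
  have heval {τ : ℂ} (hτ : 0 < τ.im) (z : ℂ) :
      Φ.eval₂ (Polynomial.aeval (kleinJ τ) : Polynomial ℤ →ₐ[ℤ] ℂ).toRingHom z =
        ((p + 1).factorial : ℂ) * ∏ i, (z - kleinJ (heckePoint p i τ)) := by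
    rw [← Polynomial.eval_map, hΦ τ hτ]
    simp [Polynomial.eval_prod]
  have hzero : Φ.eval₂ (Polynomial.aeval x : Polynomial ℤ →ₐ[ℤ] ℚbar).toRingHom y = 0 := by
    refine (algebraMap ℚbar ℂ).injective ?_
    rw [map_eval₂_aeval, map_zero]
    change Φ.eval₂ (Polynomial.aeval (x : ℂ) : Polynomial ℤ →ₐ[ℤ] ℂ).toRingHom (y : ℂ) = 0
    rw [hx, hy, heval hτ, Finset.prod_eq_zero (Finset.mem_univ none) (by simp [heckePoint]),
      mul_zero]
  have hσ := map_eval₂_aeval σ.toRingHom x y Φ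
  rw [hzero, map_zero] at hσ
  change 0 = Φ.eval₂ (Polynomial.aeval (σ x) : Polynomial ℤ →ₐ[ℤ] ℂ).toRingHom (σ y) at hσ
  rw [← hxτ', heval hτ', zero_eq_mul, Finset.prod_eq_zero_iff] at hσ
  obtain ⟨i, -, hi⟩ := hσ.resolve_left (by exact_mod_cast Nat.factorial_ne_zero _)
  exact ⟨i, sub_eq_zero.1 hi⟩

lemma norm_kleinJ_heckePoint_le (i : Option (ZMod p)) (hτ : 0 < τ.im) :
    ‖kleinJ (heckePoint p i τ)‖ ≤ Real.exp (p * (96 * (1 + τ.im + 1 / τ.im))) := by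
  have hp1 : (1 : ℝ) ≤ p := by exact_mod_cast hp.out.one_le
  have himp : τ.im ≤ p * τ.im := le_mul_of_one_le_left hτ.le hp1
  have hinv : 1 / τ.im ≤ p * (1 / τ.im) := le_mul_of_one_le_left (by positivity) hp1
  refine (norm_kleinJ_le (heckePoint_im_pos i hτ)).trans (Real.exp_le_exp.2 ?_)
  rw [mul_left_comm]
  refine mul_le_mul_of_nonneg_left ?_ (by norm_num)
  rcases i with _ | b
  · have hle : 1 / (p * τ.im) ≤ 1 / τ.im := one_div_le_one_div_of_le hτ himp
    rw [heckePoint_none_im]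
    linarith
  · have hle : τ.im / p ≤ τ.im := div_le_self hτ.le hp1
    rw [heckePoint_some_im, one_div_div, div_eq_mul_one_div (p : ℝ)]
    linarith

end Hecke

lemma exists_conjugates {τ : ℂ} (hτ : 0 < τ.im) (ξ : ℚbar) {x : ℚbar} (hx : (x : ℂ) = kleinJ τ) :
    ∃ (d : ℕ) (K : ℝ), 0 ≤ K ∧ ∀ (p : ℕ) [Fact p.Prime] (y : ℚbar), (y : ℂ) = kleinJ (p * τ) →
      ∃ T : Finset (ℂ × ℂ), T.card ≤ d * (p + 1) ∧
        (∀ σ : ℚbar →ₐ[ℚ] ℂ, (σ (ξ ^ p), σ y) ∈ T) ∧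
        ∀ t ∈ T, ‖t.1‖ ≤ Real.exp (K * p) ∧ ‖t.2‖ ≤ Real.exp (K * p) := by
  classical
  choose lift hlift hkleinJ using exists_kleinJ_eq
  have hfin : (Set.range fun σ : ℚbar →ₐ[ℚ] ℂ => (σ ξ, σ x)).Finite :=
    ((finite_range_embedding ξ).prod (finite_range_embedding x)).subset <| by
      rintro _ ⟨σ, rfl⟩
      exact ⟨⟨σ, rfl⟩, ⟨σ, rfl⟩⟩
  obtain ⟨K, hK⟩ := (hfin.image fun s =>
    max ‖s.1‖ (96 * (1 + (lift s.2).im + 1 / (lift s.2).im))).bddAbove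
  refine ⟨hfin.toFinset.card, max K 0, le_max_right _ _, fun p hp y hy => ?_⟩
  refine ⟨(hfin.toFinset ×ˢ Finset.univ).image fun s =>
    (s.1.1 ^ p, kleinJ (heckePoint p s.2 (lift s.1.2))), ?_, fun σ => ?_, ?_⟩
  · refine Finset.card_image_le.trans_eq ?_
    rw [Finset.card_product, Finset.card_univ, Fintype.card_option, ZMod.card]
  · obtain ⟨i, hi⟩ :=
      exists_embedding_eq_kleinJ_heckePoint hτ σ hx hy (hlift (σ x)) (hkleinJ (σ x))
    refine Finset.mem_image.2 ⟨((σ ξ, σ x), i), ?_, by rw [hi, map_pow]⟩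
    exact Finset.mem_product.2 ⟨hfin.mem_toFinset.2 ⟨σ, rfl⟩, Finset.mem_univ i⟩
  · simp only [Finset.mem_image, Finset.mem_product, Set.Finite.mem_toFinset]
    rintro _ ⟨⟨s, i⟩, ⟨hs, -⟩, rfl⟩
    have hmax := (hK (Set.mem_image_of_mem _ hs)).trans (le_max_left K 0)
    have hnorm : ‖s.1‖ ≤ Real.exp (max K 0) := by
      linarith [(le_max_left _ _).trans hmax, Real.add_one_le_exp (max K 0)]
    constructor
    · rw [norm_pow, mul_comm, Real.exp_nat_mul]
      exact pow_le_pow_left₀ (norm_nonneg _) hnorm p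
    · refine (norm_kleinJ_heckePoint_le i (hlift s.2)).trans (Real.exp_le_exp.2 ?_)
      rw [mul_comm]
      exact mul_le_mul_of_nonneg_right ((le_max_right _ _).trans hmax) p.cast_nonneg

lemma factorial_succ_le_exp {p : ℕ} (hp : 2 ≤ p) :
    ((p + 1).factorial : ℝ) ≤ Real.exp (4 * (p * Real.log p)) := by
  have hp0 : (0 : ℝ) < p := by exact_mod_cast hp.trans_lt' two_pos
  calc ((p + 1).factorial : ℝ) ≤ ((p + 1 : ℕ) : ℝ) ^ (p + 1) := by
        exact_mod_cast Nat.factorial_le_pow (p + 1)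
    _ ≤ ((p : ℝ) ^ 2) ^ (p + 1) := by
        gcongr
        exact_mod_cast (by nlinarith : p + 1 ≤ p ^ 2)
    _ ≤ (p : ℝ) ^ (4 * p) := by
        rw [← pow_mul]
        exact pow_le_pow_right₀ (by exact_mod_cast hp.trans' one_le_two) (by lia)
    _ = Real.exp (4 * (p * Real.log p)) := by
        rw [← Real.exp_log (pow_pos hp0 _), Real.log_pow]
        congr 1
        push_cast
        ring

lemma le_two_mul_mul_log {p : ℕ} (hp : 2 ≤ p) : (p : ℝ) ≤ 2 * (p * Real.log p) := by
  have hlog : Real.log 2 ≤ Real.log p := Real.log_le_log two_pos (by exact_mod_cast hp)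
  nlinarith [Real.log_two_gt_d9, p.cast_nonneg (α := ℝ)]

lemma liouville_base_le_mul_exp {p n a b : ℕ} {H K : ℝ} (hp : 2 ≤ p) (hH : 0 ≤ H) (hK : 0 ≤ K)
    (ha : (a : ℝ) ≤ Real.exp (K * p)) (hb : (b : ℝ) ≤ Real.exp (K * p) * (p + 1).factorial) :
    ((a : ℝ) * b) ^ n * (n ^ 2 * (H * (Real.exp (K * p) * Real.exp (K * p)) ^ n)) ≤
      H * Real.exp ((8 * K + 6) * (n * (p * Real.log p))) := by
  have hlog := le_two_mul_mul_log hp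
  have hp2 : (2 : ℝ) ≤ p := by exact_mod_cast hp
  have hn : (n : ℝ) ≤ Real.exp (n * (p * Real.log p)) := by
    have hle : (n : ℝ) * 1 ≤ n * (p * Real.log p) := by
      gcongr
      linarith
    linarith [Real.add_one_le_exp ((n : ℝ) * (p * Real.log p))]
  have hKp : Real.exp (K * p) ≤ Real.exp (K * (2 * (p * Real.log p))) := by gcongr
  have hfac := factorial_succ_le_exp hp
  have hbase : (a : ℝ) * b * (Real.exp (K * p) * Real.exp (K * p)) ≤
      Real.exp ((8 * K + 4) * (p * Real.log p)) :=
    calc (a : ℝ) * b * (Real.exp (K * p) * Real.exp (K * p))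
        ≤ Real.exp (K * (2 * (p * Real.log p))) * (Real.exp (K * (2 * (p * Real.log p))) *
          Real.exp (4 * (p * Real.log p))) * (Real.exp (K * (2 * (p * Real.log p))) *
          Real.exp (K * (2 * (p * Real.log p)))) := by
          have ha' := ha.trans hKp
          have hb' := hb.trans (mul_le_mul hKp hfac (by positivity) (by positivity))
          gcongr
      _ = Real.exp ((8 * K + 4) * (p * Real.log p)) := by
          simp only [← Real.exp_add]
          ring_nf
  calc ((a : ℝ) * b) ^ n * (n ^ 2 * (H * (Real.exp (K * p) * Real.exp (K * p)) ^ n))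
      = H * ((n : ℝ) ^ 2 * (a * b * (Real.exp (K * p) * Real.exp (K * p))) ^ n) := by ring
    _ ≤ H * (Real.exp (n * (p * Real.log p)) ^ 2 *
          Real.exp ((8 * K + 4) * (p * Real.log p)) ^ n) := by gcongr
    _ = H * Real.exp ((8 * K + 6) * (n * (p * Real.log p))) := by
        rw [← Real.exp_nat_mul, ← Real.exp_nat_mul, ← Real.exp_add]
        ring_nf

lemma exists_denominators {τ : ℂ} (hτ : 0 < τ.im) {ξ : ℂ} (hξ : IsAlgebraic ℚ ξ)
    (hj : IsAlgebraic ℚ (kleinJ τ)) : ∃ K : ℝ, ∀ (p : ℕ) [Fact p.Prime], ∃ a b : ℕ, a ≠ 0 ∧ b ≠ 0 ∧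
      IsIntegral ℤ ((a : ℂ) * ξ ^ p) ∧ IsIntegral ℤ ((b : ℂ) * kleinJ (p * τ)) ∧
      (a : ℝ) ≤ Real.exp (K * p) ∧ (b : ℝ) ≤ Real.exp (K * p) * (p + 1).factorial := by
  obtain ⟨a, ha0, ha⟩ := exists_natCast_mul_isIntegral hξ
  obtain ⟨b, hb0, hb⟩ := exists_natCast_mul_isIntegral hj
  have hexp (m : ℕ) : (m : ℝ) ≤ Real.exp m := by linarith [Real.add_one_le_exp (m : ℝ)]
  refine ⟨a + 2 * b, fun p hp => ⟨a ^ p, b ^ (p + 1) * (p + 1).factorial, pow_ne_zero _ ha0,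
    mul_ne_zero (pow_ne_zero _ hb0) (Nat.factorial_ne_zero _), ?_,
    isIntegral_mul_kleinJ_nat_mul hτ hb, ?_, ?_⟩⟩
  · rw [Nat.cast_pow, ← mul_pow]
    exact ha.pow p
  · calc ((a ^ p : ℕ) : ℝ) ≤ Real.exp a ^ p := by
          rw [Nat.cast_pow]
          gcongr
          exact hexp a
      _ = Real.exp (a * p) := by rw [← Real.exp_nat_mul, mul_comm]
      _ ≤ Real.exp ((a + 2 * b) * p) := by
          gcongr
          exact le_add_of_nonneg_right (by positivity)
  · rw [Nat.cast_mul, Nat.cast_pow]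
    gcongr
    calc (b : ℝ) ^ (p + 1) ≤ Real.exp b ^ (p + 1) := by
          gcongr
          exact hexp b
      _ = Real.exp (b * (p + 1)) := by rw [← Real.exp_nat_mul, mul_comm, Nat.cast_succ]
      _ ≤ Real.exp ((a + 2 * b) * p) := by
          have hp1 : (1 : ℝ) ≤ p := by exact_mod_cast hp.out.one_le
          exact Real.exp_le_exp.2 (by
            nlinarith [a.cast_nonneg (α := ℝ), b.cast_nonneg (α := ℝ)])

theorem exists_one_le_norm_bivEval_mul_exp {τ : ℂ} (hτ : 0 < τ.im) {ξ : ℂ} (hξ : IsAlgebraic ℚ ξ)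
    (hj : IsAlgebraic ℚ (kleinJ τ)) : ∃ C : ℝ, 0 ≤ C ∧ ∀ (p : ℕ) [Fact p.Prime] {n : ℕ}
      {c : Fin n × Fin n → ℤ} {H : ℝ}, 1 ≤ H → (∀ k, |(c k : ℝ)| ≤ H) →
        bivEval c (ξ ^ p) (kleinJ (p * τ)) ≠ 0 →
          1 ≤ ‖bivEval c (ξ ^ p) (kleinJ (p * τ))‖ *
            Real.exp (C * p * (Real.log H + n * (p * Real.log p))) := by
  lift ξ to ℚbar using mem_algebraicClosure_iff.2 hξ with ξ'
  obtain ⟨d, K₁, hK₁, hconj⟩ :=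
    exists_conjugates hτ ξ' (x := ⟨kleinJ τ, mem_algebraicClosure_iff.2 hj⟩) rfl
  obtain ⟨K₂, hden⟩ := exists_denominators hτ hξ hj
  set K := max K₁ K₂
  have hK : 0 ≤ K := hK₁.trans (le_max_left _ _)
  refine ⟨(2 * d + 1) * (8 * K + 6), by positivity, fun p hp n c H hH hc hne => ?_⟩
  have hmono {K' : ℝ} (h : K' ≤ K) : Real.exp (K' * p) ≤ Real.exp (K * p) := by gcongr
  obtain ⟨T, hcard, hT, hTK⟩ := hconj p
    ⟨kleinJ (p * τ), mem_algebraicClosure_iff.2 (isAlgebraic_kleinJ_nat_mul hτ hj)⟩ rfl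
  obtain ⟨a, b, ha0, hb0, ha, hb, haK, hbK⟩ := hden p
  have hp2 := hp.out.two_le
  set M := H * Real.exp ((8 * K + 6) * (n * (p * Real.log p))) with hM
  have hM1 : 1 ≤ M := one_le_mul_of_one_le_of_one_le hH (Real.one_le_exp (by positivity))
  have hexp1 : 1 ≤ Real.exp (K * p) := Real.one_le_exp (by positivity)
  have hliouville := one_le_norm_bivEval_mul_pow (ξ := ξ' ^ p) (η := ⟨kleinJ (p * τ), _⟩) ha0 hb0
    ha hb hH hc hexp1 hexp1 hT
    (fun t ht => (hTK t ht).1.trans (hmono (le_max_left _ _)))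
    (fun t ht => (hTK t ht).2.trans (hmono (le_max_left _ _))) hne
  refine hliouville.trans (mul_le_mul_of_nonneg_left ?_ (norm_nonneg _))
  calc _ ≤ M ^ (T.card + 1) := by
        gcongr
        exact liouville_base_le_mul_exp hp2 (by linarith) hK (haK.trans (hmono (le_max_right _ _)))
          (hbK.trans (by gcongr; exact le_max_right _ _))
    _ ≤ M ^ ((2 * d + 1) * p) := pow_le_pow_right₀ hM1 (by nlinarith)
    _ = Real.exp ((2 * d + 1) * p * (Real.log H + (8 * K + 6) * (n * (p * Real.log p)))) := by
        rw [hM, ← Real.exp_log (zero_lt_one.trans_le hH), ← Real.exp_add, ← Real.exp_nat_mul,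
          Real.log_exp]
        push_cast
        rfl
    _ ≤ Real.exp ((2 * d + 1) * (8 * K + 6) * p * (Real.log H + n * (p * Real.log p))) := by
        have hle : Real.log H + (8 * K + 6) * (n * (p * Real.log p)) ≤
            (8 * K + 6) * (Real.log H + n * (p * Real.log p)) := by
          nlinarith [Real.log_nonneg hH]
        refine Real.exp_le_exp.2 ((mul_le_mul_of_nonneg_left hle (by positivity)).trans_eq ?_)
        ring

/-! ### The algebraic independence of `q` and `j` -/

lemma coeff_eq_zero_of_infinite_zeros {R : Type*} [CommRing R] [IsDomain R] {n : ℕ} {a : Fin n → R}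
    {S : Set R} (hS : S.Infinite) (h : ∀ x ∈ S, ∑ i, a i * x ^ (i : ℕ) = 0) (i : Fin n) :
    a i = 0 := by
  have hzero : ∑ i, Polynomial.C (a i) * Polynomial.X ^ (i : ℕ) = 0 :=
    Polynomial.eq_zero_of_infinite_isRoot _ <| hS.mono fun x hx => by
      simpa [Polynomial.eval_finsetSum] using h x hx
  simpa [Polynomial.coeff_X_pow, Fin.val_inj] using congrArg (Polynomial.coeff · i) hzero

lemma infinite_range_nome_orbit {τ : ℂ} (hτ : 0 < τ.im) (hre : 0 ≤ τ.re) :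
    (Set.range fun n : ℕ => 𝕢 (τ / (n * τ + 1))).Infinite := by
  have hnormSq (n : ℕ) : Complex.normSq (n * τ + 1) =
      (n : ℝ) ^ 2 * (τ.re ^ 2 + τ.im ^ 2) + 2 * n * τ.re + 1 := by
    simp only [Complex.normSq_apply, Complex.add_re, Complex.mul_re, Complex.natCast_re,
      Complex.natCast_im, zero_mul, sub_zero, Complex.one_re, Complex.add_im, Complex.mul_im,
      add_zero, Complex.one_im]
    ring
  have him (n : ℕ) : (τ / (n * τ + 1)).im = τ.im / Complex.normSq (n * τ + 1) := by
    simp only [Complex.div_im, Complex.add_re, Complex.mul_re, Complex.natCast_re,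
      Complex.natCast_im, zero_mul, sub_zero, Complex.one_re, Complex.add_im, Complex.mul_im,
      add_zero, Complex.one_im]
    ring
  have hmono : StrictMono fun n : ℕ => Complex.normSq (n * τ + 1) := by
    refine strictMono_nat_of_lt_succ fun n => ?_
    have hn : (0 : ℝ) ≤ n := n.cast_nonneg
    have hsq : 0 < τ.re ^ 2 + τ.im ^ 2 := by positivity
    rw [hnormSq, hnormSq]
    push_cast
    nlinarith [mul_nonneg hn hsq.le]
  refine Set.infinite_range_of_injective fun m n hmn => hmono.injective ?_
  have hnorm := congrArg norm hmn
  simp only [norm_nome, Real.exp_eq_exp, neg_inj, him] at hnorm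
  have hdiv := mul_left_cancel₀ (by positivity) hnorm
  rw [div_eq_mul_inv, div_eq_mul_inv] at hdiv
  exact inv_injective (mul_left_cancel₀ hτ.ne' hdiv)

lemma eq_zero_of_forall_bivEval_nome_kleinJ_eq_zero {n : ℕ} {c : Fin n × Fin n → ℤ}
    (h : ∀ τ : ℂ, 0 < τ.im → bivEval c (𝕢 τ) (kleinJ τ) = 0) : c = 0 := by
  have hrow (w : ℂ) (i : Fin n) : ∑ j : Fin n, (c (i, j) : ℂ) * w ^ (j : ℕ) = 0 := by
    obtain ⟨τ, hτ, hre, rfl⟩ : ∃ τ : ℂ, 0 < τ.im ∧ 0 ≤ τ.re ∧ kleinJ τ = w := by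
      obtain ⟨τ, hτ, rfl⟩ := exists_kleinJ_eq w
      have htranslate := kleinJ_isModularInvariant.apply_moebius (a := 1) (b := ⌈|τ.re|⌉) (c := 0)
        (d := 1) (by norm_num) hτ
      refine ⟨τ + ⌈|τ.re|⌉, by simpa using hτ, ?_, by simpa using htranslate⟩
      rw [Complex.add_re, Complex.intCast_re]
      linarith [Int.le_ceil |τ.re|, neg_abs_le τ.re]
    refine coeff_eq_zero_of_infinite_zeros
      (a := fun i => ∑ j : Fin n, (c (i, j) : ℂ) * kleinJ τ ^ (j : ℕ))
      (infinite_range_nome_orbit hτ hre) ?_ i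
    rintro _ ⟨m, rfl⟩
    have hinv := kleinJ_isModularInvariant.apply_moebius (a := 1) (b := 0) (c := m) (d := 1)
      (by norm_num) hτ
    have him := im_moebius_pos (a := 1) (b := 0) (c := m) (d := 1) (by norm_num) hτ
    simp only [Int.cast_one, one_mul, Int.cast_zero, add_zero, Int.cast_natCast] at hinv him
    rw [← h _ him, hinv, bivEval, Fintype.sum_prod_type]
    refine Finset.sum_congr rfl fun i _ => ?_
    rw [Finset.sum_mul]
    exact Finset.sum_congr rfl fun j _ => by ring
  funext k
  exact_mod_cast coeff_eq_zero_of_infinite_zeros Set.infinite_univ (fun w _ => hrow w k.1) k.2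

/-! ### The auxiliary function -/

lemma norm_le_of_forall_norm_eq {f : ℂ → ℂ} {r B : ℝ} (hr0 : 0 < r) (hr1 : r < 1)
    (hf : DifferentiableOn ℂ f (ball 0 1)) (hB : ∀ z, ‖z‖ = r → ‖f z‖ ≤ B) {z : ℂ}
    (hz : ‖z‖ ≤ r) : ‖f z‖ ≤ B := by
  refine Complex.norm_le_of_forall_mem_frontier_norm_le (U := ball 0 r) isBounded_ball
    (DifferentiableOn.diffContOnCl <|
      hf.mono (closure_ball_subset_closedBall.trans (closedBall_subset_ball hr1)))
    (fun z hz => hB z ?_) (by simpa [closure_ball _ hr0.ne'] using hz)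
  simpa [frontier_ball _ hr0.ne'] using hz

/-- Each zero is divided out in turn: the factor `z - x` is at least `r - ‖x‖` on the circle. -/
lemma norm_apply_zero_mul_prod_le {r : ℝ} (hr0 : 0 < r) (hr1 : r < 1) (X : Finset ℂ)
    {f : ℂ → ℂ} {B : ℝ} (hf : DifferentiableOn ℂ f (ball 0 1)) (hB : ∀ z, ‖z‖ = r → ‖f z‖ ≤ B)
    (hX : ∀ x ∈ X, x ≠ 0 ∧ ‖x‖ < r ∧ f x = 0) : ‖f 0‖ * ∏ x ∈ X, (r - ‖x‖) / ‖x‖ ≤ B := by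
  induction X using Finset.induction_on generalizing f B with
  | empty => simpa using norm_le_of_forall_norm_eq hr0 hr1 hf hB (z := 0) (by simpa using hr0.le)
  | insert x X hx ih =>
    obtain ⟨hx0, hxr, hfx⟩ := hX x (Finset.mem_insert_self _ _)
    have hx0' : ‖x‖ ≠ 0 := norm_ne_zero_iff.2 hx0
    have hrx : 0 < r - ‖x‖ := by linarith
    have hmem : ball (0 : ℂ) 1 ∈ 𝓝 x :=
      isOpen_ball.mem_nhds (by rw [mem_ball_zero_iff]; linarith)
    have hquot (z : ℂ) : f z = (z - x) * dslope f x z := by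
      rw [← smul_eq_mul, sub_smul_dslope, hfx, sub_zero]
    have hcircle (z : ℂ) (hz : ‖z‖ = r) : ‖dslope f x z‖ ≤ B / (r - ‖x‖) := by
      rw [le_div_iff₀' hrx]
      calc (r - ‖x‖) * ‖dslope f x z‖ ≤ ‖z - x‖ * ‖dslope f x z‖ := by
            gcongr
            exact hz ▸ norm_sub_norm_le z x
        _ = ‖f z‖ := by rw [hquot z, norm_mul]
        _ ≤ B := hB z hz
    have hind := ih ((Complex.differentiableOn_dslope hmem).2 hf) hcircle fun y hy => by
      obtain ⟨hy0, hyr, hfy⟩ := hX y (Finset.mem_insert_of_mem hy)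
      have hyx : y ≠ x := ne_of_mem_of_not_mem hy hx
      exact ⟨hy0, hyr, (mul_eq_zero.1 ((hquot y).symm.trans hfy)).resolve_left (sub_ne_zero.2 hyx)⟩
    rw [le_div_iff₀ hrx] at hind
    rw [Finset.prod_insert hx, hquot 0, norm_mul, zero_sub, norm_neg]
    calc _ = ‖dslope f x 0‖ * (∏ x ∈ X, (r - ‖x‖) / ‖x‖) * (r - ‖x‖) := by field_simp
      _ ≤ B := hind

lemma HasIntSeries.abs_coeff_le {h : ℂ → ℂ} {a : ℤ⟦X⟧} (ha : HasIntSeries h a) {r B : ℝ}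
    (hr0 : 0 < r) (hr1 : r < 1) (hB : ∀ z, ‖z‖ = r → ‖h z‖ ≤ B) (m : ℕ) :
    |((coeff m a : ℤ) : ℝ)| ≤ B / r ^ m := by
  have hcauchy := Complex.norm_iteratedDeriv_le_of_forall_mem_sphere_norm_le m hr0
    ((differentiableOn_of_mem_intSeriesRing ha.mem).mono
      (closure_ball_subset_closedBall.trans (closedBall_subset_ball hr1))).diffContOnCl
    (fun z hz => hB z (by simpa using hz))
  have hseries := ha.hasFPowerSeriesOnBall.hasFPowerSeriesAt
  have hcoeff := congrArg (FormalMultilinearSeries.coeff · m)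
    (hseries.eq_formalMultilinearSeries hseries.analyticAt.hasFPowerSeriesAt)
  simp only [FormalMultilinearSeries.coeff_ofScalars] at hcoeff
  rw [← Complex.norm_intCast, hcoeff, norm_div, Complex.norm_natCast,
    div_le_iff₀ (by exact_mod_cast m.factorial_pos)]
  exact hcauchy.trans_eq (by ring)

attribute [local instance] Matrix.seminormedAddCommGroup in
/-- Siegel's lemma for power series: with twice as many series as conditions, the exponent in
Siegel's lemma is `1`. -/
lemma exists_X_pow_dvd_sum_zsmul {ι : Type*} [Fintype ι] {a : ι → ℤ⟦X⟧} {m : ℕ} {U : ℝ}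
    (hm : 0 < m) (hcard : Fintype.card ι = 2 * m) (hU : 1 ≤ U)
    (ha : ∀ k, ∀ i < m, |((coeff i (a k) : ℤ) : ℝ)| ≤ U) :
    ∃ c : ι → ℤ, c ≠ 0 ∧ (∀ k, |(c k : ℝ)| ≤ 2 * m * U) ∧ X ^ m ∣ ∑ k, c k • a k := by
  classical
  let A : Matrix (Fin m) ι ℤ := Matrix.of fun i k => coeff i (a k)
  obtain ⟨c, hc0, hAc, hcn⟩ := Int.Matrix.exists_ne_zero_int_vec_norm_le A
    (by rw [hcard, Fintype.card_fin]; omega) (by rwa [Fintype.card_fin])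
  refine ⟨c, hc0, fun k => ?_, X_pow_dvd_iff.2 fun i hi => ?_⟩
  · have hA : ‖A‖ ≤ U := (Matrix.norm_le_iff (by linarith)).2 fun i k => by
      rw [Int.norm_eq_abs]
      exact ha k i i.2
    have hm' : (m : ℝ) ≠ 0 := by exact_mod_cast hm.ne'
    have hexponent : ((Fintype.card (Fin m) : ℕ) : ℝ) /
        ((Fintype.card ι : ℕ) - (Fintype.card (Fin m) : ℕ)) = 1 := by
      rw [hcard, Fintype.card_fin, div_eq_one_iff_eq (by push_cast; ring_nf; exact hm')]
      push_cast
      ring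
    rw [hexponent, Real.rpow_one, hcard] at hcn
    calc |(c k : ℝ)| ≤ ‖c‖ := by rw [← Int.norm_eq_abs]; exact norm_le_pi_norm c k
      _ ≤ ((2 * m : ℕ) : ℝ) * max 1 ‖A‖ := hcn
      _ ≤ 2 * m * U := by
          push_cast
          gcongr
          exact max_le hU hA
  · have hrow := congrFun hAc ⟨i, hi⟩
    refine Eq.trans ?_ hrow
    rw [map_sum]
    exact Finset.sum_congr rfl fun k _ => by rw [map_zsmul, smul_eq_mul, mul_comm]; rfl

lemma HasIntSeries.exists_eq_pow_mul {h : ℂ → ℂ} {a : ℤ⟦X⟧} (ha : HasIntSeries h a) (ha0 : a ≠ 0)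
    {m : ℕ} (hm : X ^ m ∣ a) : ∃ M ≥ m, ∃ k ∈ intSeriesRing, 1 ≤ ‖k 0‖ ∧
      ∀ z : ℂ, ‖z‖ < 1 → h z = z ^ M * k z := by
  rw [← X_pow_order_mul_divXPowOrder (f := a)] at ha
  obtain ⟨k, hk, hhk⟩ := ha.exists_of_X_pow_mul
  refine ⟨a.order.toNat, ?_, k, hk.mem, ?_, hhk⟩
  · by_contra! hlt
    exact coeff_order ha0 (X_pow_dvd_iff.1 hm _ hlt)
  · have hne : constantCoeff a.divXPowOrder ≠ 0 :=
      constantCoeff_divXPowOrder_eq_zero_iff.not.2 ha0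
    rw [hk.apply_zero, Complex.norm_intCast]
    exact_mod_cast Int.one_le_abs hne

section AuxMonomial

variable {n : ℕ}

/-- The monomial `z ^ n * (z ^ k.1 * j ^ k.2)`, in which the factor `z ^ n` has cancelled the pole
of the `j`-invariant at `z = 0`. -/
def auxMonomial (k : Fin n × Fin n) : ℂ → ℂ :=
  (fun z => z ^ (k.1 + (n - k.2) : ℕ)) * jRegular ^ (k.2 : ℕ)

lemma exists_hasIntSeries_auxMonomial (k : Fin n × Fin n) :
    ∃ a, HasIntSeries (auxMonomial k) a :=
  mem_intSeriesRing.1 <| mul_mem (pow_mem id_mem_intSeriesRing _)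
    (pow_mem jRegular_mem_intSeriesRing _)

lemma norm_auxMonomial_le {δ : ℝ} (hδ0 : 0 < δ) (k : Fin n × Fin n) {z : ℂ}
    (hz : ‖z‖ ≤ 1 - δ) : ‖auxMonomial k z‖ ≤ Real.exp (96 * n / δ) := by
  have hj : ‖jRegular z‖ ≤ Real.exp (96 / δ) := by
    refine (norm_jRegular_le hz (by linarith)).trans (Real.exp_le_exp.2 ?_)
    have hfrac : 96 * ((1 - δ) / (1 - (1 - δ))) = 96 / δ - 96 := by
      rw [sub_sub_cancel, sub_div, div_self hδ0.ne']
      ring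
    linarith
  have hjk : ‖jRegular z‖ ^ (k.2 : ℕ) ≤ Real.exp (96 / δ) ^ n :=
    (pow_le_pow_left₀ (norm_nonneg _) hj _).trans <|
      pow_le_pow_right₀ (Real.one_le_exp (by positivity)) k.2.is_lt.le
  have hzk : ‖z‖ ^ (k.1 + (n - k.2) : ℕ) ≤ 1 := pow_le_one₀ (norm_nonneg z) (by linarith)
  calc ‖auxMonomial k z‖ = ‖z‖ ^ (k.1 + (n - k.2) : ℕ) * ‖jRegular z‖ ^ (k.2 : ℕ) := by
        simp only [auxMonomial, Pi.mul_apply, Pi.pow_apply, norm_mul, norm_pow]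
    _ ≤ 1 * Real.exp (96 / δ) ^ n := by gcongr
    _ = Real.exp (96 * n / δ) := by rw [one_mul, ← Real.exp_nat_mul]; ring_nf

lemma sum_zsmul_auxMonomial (c : Fin n × Fin n → ℤ) {z : ℂ} (hz0 : z ≠ 0) (hz : ‖z‖ < 1) :
    (∑ k, c k • auxMonomial k) z = z ^ n * bivEval c z (jNome z) := by
  simp only [bivEval, Finset.mul_sum, Finset.sum_apply, auxMonomial, Pi.mul_apply,
    Pi.pow_apply, zsmul_eq_mul, ← mul_jNome hz0 hz, mul_pow]
  refine Finset.sum_congr rfl fun k _ => ?_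
  rw [pow_add, ← pow_sub_mul_pow z k.2.is_lt.le, Pi.intCast_apply]
  ring

lemma norm_sum_zsmul_auxMonomial_le {c : Fin n × Fin n → ℤ} {H δ : ℝ}
    (hc : ∀ k, |(c k : ℝ)| ≤ H) (hδ0 : 0 < δ) {z : ℂ} (hz : ‖z‖ ≤ 1 - δ) :
    ‖(∑ k, c k • auxMonomial k) z‖ ≤ n ^ 2 * (H * Real.exp (96 * n / δ)) := by
  rw [Finset.sum_apply]
  refine (norm_sum_le_of_le _ fun k _ => ?_).trans_eq
    (b := ∑ _k : Fin n × Fin n, H * Real.exp (96 * n / δ)) ?_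
  · rw [Pi.smul_apply, zsmul_eq_mul, norm_mul, Complex.norm_intCast]
    exact mul_le_mul (hc k) (norm_auxMonomial_le hδ0 k hz) (norm_nonneg _)
      ((abs_nonneg _).trans (hc k))
  · rw [Finset.sum_const, Finset.card_univ, Fintype.card_prod, Fintype.card_fin, nsmul_eq_mul]
    push_cast
    ring

lemma sum_zsmul_ne_zero {c : Fin n × Fin n → ℤ} (hc : c ≠ 0) {a : Fin n × Fin n → ℤ⟦X⟧}
    (ha : ∀ k, HasIntSeries (auxMonomial k) (a k)) : ∑ k, c k • a k ≠ 0 := by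
  refine fun hzero => hc (eq_zero_of_forall_bivEval_nome_kleinJ_eq_zero fun τ hτ => ?_)
  have hsum := HasIntSeries.sum_zsmul Finset.univ ha c (𝕢 τ) (norm_nome_lt_one hτ)
  rw [hzero, sum_zsmul_auxMonomial c (nome_ne_zero τ) (norm_nome_lt_one hτ)] at hsum
  exact (mul_eq_zero.1 (hsum.unique (by simp))).resolve_left (pow_ne_zero n (nome_ne_zero τ))

end AuxMonomial

lemma one_div_one_sub_pow_le {δ : ℝ} (hδ0 : 0 ≤ δ) (hδ : δ ≤ 1 / 2) (m : ℕ) :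
    1 / (1 - δ) ^ m ≤ Real.exp (2 * δ * m) := by
  have hone : 1 / (1 - δ) ≤ Real.exp (2 * δ) := by
    refine le_trans ?_ (Real.add_one_le_exp (2 * δ))
    rw [div_le_iff₀ (by linarith)]
    nlinarith
  calc 1 / (1 - δ) ^ m = (1 / (1 - δ)) ^ m := by rw [one_div_pow]
    _ ≤ Real.exp (2 * δ) ^ m := by
        have : 0 ≤ 1 - δ := by linarith
        gcongr
    _ = Real.exp (2 * δ * m) := by rw [← Real.exp_nat_mul]; ring_nf

lemma four_mul_pow_four_le_exp {s : ℝ} (hs : 2 ≤ s) : 4 * s ^ 4 ≤ Real.exp (6 * s ^ 3) := by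
  have hs1 : s ≤ Real.exp s := by linarith [Real.add_one_le_exp s]
  have hs2 : 4 ≤ s ^ 2 := by nlinarith
  calc 4 * s ^ 4 ≤ s ^ 2 * s ^ 4 := by gcongr
    _ = s ^ 6 := by ring
    _ ≤ Real.exp s ^ 6 := by gcongr
    _ = Real.exp (6 * s) := by rw [← Real.exp_nat_mul]; norm_num
    _ ≤ Real.exp (6 * s ^ 3) := by
        gcongr
        exact le_self_pow₀ (by linarith) three_ne_zero

/-- The auxiliary function of the transcendence argument: a polynomial in `z` and the `j`-invariant
with small coefficients and of degree less than `2 * s ^ 2` in each variable, whose order of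
vanishing at the cusp is large. -/
structure AuxiliaryFunction (s : ℕ) where
  coeff : Fin (2 * s ^ 2) × Fin (2 * s ^ 2) → ℤ
  order : ℕ
  /-- What is left after dividing out the zero at the cusp. -/
  quotient : ℂ → ℂ
  abs_coeff_le : ∀ k, |(coeff k : ℝ)| ≤ Real.exp (202 * s ^ 3)
  le_order : 2 * s ^ 4 ≤ order
  differentiableOn : DifferentiableOn ℂ quotient (ball 0 1)
  one_le_norm : 1 ≤ ‖quotient 0‖
  eq_mul : ∀ z : ℂ, z ≠ 0 → ‖z‖ < 1 →
    z ^ (2 * s ^ 2) * bivEval coeff z (jNome z) = z ^ order * quotient z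
  norm_le : ∀ z : ℂ, ‖z‖ ≤ 1 - s / √order → ‖quotient z‖ ≤ Real.exp (402 * (s * √order))

lemma abs_coeff_auxMonomial_le {s : ℕ} (hs : 2 ≤ s) {k : Fin (2 * s ^ 2) × Fin (2 * s ^ 2)}
    {a : ℤ⟦X⟧} (ha : HasIntSeries (auxMonomial k) a) {i : ℕ} (hi : i < 2 * s ^ 4) :
    |((coeff i a : ℤ) : ℝ)| ≤ Real.exp (196 * s ^ 3) := by
  have hs' : (2 : ℝ) ≤ s := by exact_mod_cast hs
  have hi' : (i : ℝ) ≤ 2 * s ^ 4 := by exact_mod_cast hi.le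
  have hinv : 1 / (s : ℝ) ≤ 1 / 2 := one_div_le_one_div_of_le two_pos hs'
  have hpos : 0 < 1 / (s : ℝ) := by positivity
  have hcauchy := ha.abs_coeff_le (r := 1 - 1 / s) (by linarith) (by linarith)
    (fun z hz => norm_auxMonomial_le hpos k hz.le) i
  calc _ ≤ Real.exp (96 * (2 * s ^ 2 : ℕ) / (1 / s)) * (1 / (1 - 1 / s) ^ i) := by
        rwa [mul_one_div]
    _ ≤ Real.exp (96 * (2 * s ^ 2 : ℕ) / (1 / s)) * Real.exp (2 * (1 / s) * (2 * s ^ 4)) := by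
        gcongr
        exact (one_div_one_sub_pow_le hpos.le hinv i).trans (Real.exp_le_exp.2 (by gcongr))
    _ = Real.exp (196 * s ^ 3) := by
        rw [← Real.exp_add]
        push_cast
        congr 1
        field_simp
        ring

lemma exists_small_coeff {s : ℕ} (hs : 2 ≤ s)
    {a : Fin (2 * s ^ 2) × Fin (2 * s ^ 2) → ℤ⟦X⟧} (ha : ∀ k, HasIntSeries (auxMonomial k) (a k)) :
    ∃ c : Fin (2 * s ^ 2) × Fin (2 * s ^ 2) → ℤ, c ≠ 0 ∧
      (∀ k, |(c k : ℝ)| ≤ Real.exp (202 * s ^ 3)) ∧ X ^ (2 * s ^ 4) ∣ ∑ k, c k • a k := by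
  obtain ⟨c, hc0, hc, hdvd⟩ := exists_X_pow_dvd_sum_zsmul (m := 2 * s ^ 4) (by positivity)
    (by rw [Fintype.card_prod, Fintype.card_fin]; ring) (Real.one_le_exp (by positivity))
    fun k i hi => abs_coeff_auxMonomial_le hs (ha k) hi
  refine ⟨c, hc0, fun k => (hc k).trans ?_, hdvd⟩
  calc 2 * ((2 * s ^ 4 : ℕ) : ℝ) * Real.exp (196 * s ^ 3)
      = 4 * (s : ℝ) ^ 4 * Real.exp (196 * s ^ 3) := by push_cast; ring
    _ ≤ Real.exp (6 * s ^ 3) * Real.exp (196 * s ^ 3) := by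
        gcongr
        exact four_mul_pow_four_le_exp (by exact_mod_cast hs)
    _ = Real.exp (202 * s ^ 3) := by rw [← Real.exp_add]; ring_nf

lemma sq_le_sqrt_of_two_mul_pow_four_le {s M : ℕ} (hM : 2 * s ^ 4 ≤ M) : (s : ℝ) ^ 2 ≤ √M := by
  have hM' : 2 * (s : ℝ) ^ 4 ≤ M := by exact_mod_cast hM
  exact Real.le_sqrt_of_sq_le (by nlinarith [pow_nonneg (s.cast_nonneg (α := ℝ)) 4])

lemma div_sqrt_le_half {s M : ℕ} (hs : 2 ≤ s) (hM : 2 * s ^ 4 ≤ M) : (s : ℝ) / √M ≤ 1 / 2 := by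
  have hs' : (2 : ℝ) ≤ s := by exact_mod_cast hs
  have hu := sq_le_sqrt_of_two_mul_pow_four_le hM
  rw [div_le_iff₀ (by nlinarith)]
  nlinarith

lemma norm_quotient_le {s : ℕ} (hs : 2 ≤ s) {c : Fin (2 * s ^ 2) × Fin (2 * s ^ 2) → ℤ}
    (hc : ∀ k, |(c k : ℝ)| ≤ Real.exp (202 * s ^ 3)) {M : ℕ} (hM : 2 * s ^ 4 ≤ M) {Ψ : ℂ → ℂ}
    (hΨ : DifferentiableOn ℂ Ψ (ball 0 1))
    (hΨ_eq : ∀ z : ℂ, ‖z‖ < 1 → (∑ k, c k • auxMonomial k) z = z ^ M * Ψ z) {z : ℂ}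
    (hz : ‖z‖ ≤ 1 - s / √M) : ‖Ψ z‖ ≤ Real.exp (402 * (s * √M)) := by
  have hs' : (2 : ℝ) ≤ s := by exact_mod_cast hs
  have hu := sq_le_sqrt_of_two_mul_pow_four_le hM
  have hu0 : 0 < √(M : ℝ) := by nlinarith
  have hδ := div_sqrt_le_half hs hM
  have hδ0 : 0 < s / √(M : ℝ) := by positivity
  refine norm_le_of_forall_norm_eq (by linarith) (by linarith) hΨ (fun w hw => ?_) hz
  have hsum := norm_sum_zsmul_auxMonomial_le hc hδ0 hw.le
  rw [hΨ_eq w (by linarith), norm_mul, norm_pow, hw, ← le_div_iff₀' (pow_pos (by linarith) M)]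
    at hsum
  calc ‖Ψ w‖ ≤ 4 * (s : ℝ) ^ 4 * (Real.exp (202 * s ^ 3) *
        Real.exp (96 * (2 * s ^ 2 : ℕ) / (s / √M))) * (1 / (1 - s / √M) ^ M) := by
        refine hsum.trans_eq ?_
        push_cast
        ring
    _ ≤ Real.exp (6 * s ^ 3) * (Real.exp (202 * s ^ 3) *
        Real.exp (96 * (2 * s ^ 2 : ℕ) / (s / √M))) * Real.exp (2 * (s / √M) * M) := by
        have : 0 ≤ 1 / (1 - s / √(M : ℝ)) ^ M := by
          have : 0 ≤ 1 - s / √(M : ℝ) := by linarith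
          positivity
        gcongr
        · exact four_mul_pow_four_le_exp hs'
        · exact one_div_one_sub_pow_le hδ0.le hδ M
    _ = Real.exp (208 * s ^ 3 + 194 * (s * √M)) := by
        rw [← Real.exp_add, ← Real.exp_add, ← Real.exp_add]
        push_cast
        congr 1
        nth_rw 3 [← Real.mul_self_sqrt M.cast_nonneg]
        field_simp
        ring
    _ ≤ Real.exp (402 * (s * √M)) := by
        gcongr
        nlinarith [mul_le_mul_of_nonneg_left hu (by linarith : (0 : ℝ) ≤ s)]

lemma nonempty_auxiliaryFunction {s : ℕ} (hs : 2 ≤ s) : Nonempty (AuxiliaryFunction s) := by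
  choose a ha using exists_hasIntSeries_auxMonomial (n := 2 * s ^ 2)
  obtain ⟨c, hc0, hc, hdvd⟩ := exists_small_coeff hs ha
  obtain ⟨M, hM, Ψ, hΨ, hΨ0, hΨ_eq⟩ := (HasIntSeries.sum_zsmul Finset.univ ha c).exists_eq_pow_mul
    (sum_zsmul_ne_zero hc0 ha) hdvd
  have hdiff := differentiableOn_of_mem_intSeriesRing hΨ
  exact ⟨{
    coeff := c
    order := M
    quotient := Ψ
    abs_coeff_le := hc
    le_order := hM
    differentiableOn := hdiff
    one_le_norm := hΨ0
    eq_mul := fun z hz0 hz => by rw [← hΨ_eq z hz, sum_zsmul_auxMonomial c hz0 hz]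
    norm_le := fun z hz => norm_quotient_le hs hc hM hdiff hΨ_eq hz }⟩

/-! ### Growth of the primes -/

lemma le_ten_mul_primeCounting_mul_log {p : ℕ} (hp : 2 ≤ p) :
    (p : ℝ) ≤ 10 * (Nat.primeCounting p * Real.log p) := by
  have hp' : (2 : ℝ) ≤ p := by exact_mod_cast hp
  have hpi := Chebyshev.pi_ge p
  rw [div_le_iff₀ (Real.log_pos (by linarith))] at hpi
  have hlog : Real.log (p + 1) ≤ 2 * Real.log 2 + ((p + 1) / 4 - 1) := by
    have htangent := Real.log_le_sub_one_of_pos (show (0 : ℝ) < (p + 1) / 4 by positivity)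
    rw [Real.log_div (by positivity) (by norm_num),
      show (4 : ℝ) = 2 ^ 2 by norm_num, Real.log_pow] at htangent
    push_cast at htangent
    linarith
  nlinarith [Real.log_two_gt_d9, Real.log_two_lt_d9]

lemma card_mul_card_sub_one_le_two_mul_sum (S : Finset ℕ) :
    (S.card : ℝ) * (S.card - 1) ≤ 2 * ∑ n ∈ S, (n : ℝ) := by
  induction S using Finset.induction_on_max with
  | empty => simp
  | insert a S ha ih =>
    have hcard : (S.card : ℝ) ≤ a := by
      exact_mod_cast (Finset.card_le_card fun x hx => Finset.mem_range.2 (ha x hx)).trans_eq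
        (Finset.card_range a)
    rw [Finset.card_insert_of_notMem fun h => lt_irrefl _ (ha a h),
      Finset.sum_insert fun h => lt_irrefl _ (ha a h)]
    push_cast
    nlinarith

lemma sq_le_sum_primes {p : ℕ} (hp : p.Prime) :
    (p : ℝ) ^ 2 ≤ 1600 * Real.log p ^ 2 * (1 + ∑ n ∈ Finset.range p with n.Prime, (n : ℝ)) := by
  have hpi := le_ten_mul_primeCounting_mul_log hp.two_le
  have hsum := card_mul_card_sub_one_le_two_mul_sum {n ∈ Finset.range p | n.Prime}
  rw [Nat.primeCounting, Nat.primeCounting', Nat.count_succ, if_pos hp,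
    Nat.count_eq_card_filter_range] at hpi
  push_cast at hpi
  set k := ({n ∈ Finset.range p | n.Prime}).card
  set W := ∑ n ∈ Finset.range p with n.Prime, (n : ℝ)
  have hk : ((k : ℝ) + 1) ^ 2 ≤ 16 * (1 + W) := by nlinarith [sq_nonneg ((k : ℝ) - 1)]
  calc (p : ℝ) ^ 2 ≤ (10 * ((k + 1) * Real.log p)) ^ 2 := by gcongr
    _ = 100 * Real.log p ^ 2 * (k + 1) ^ 2 := by ring
    _ ≤ 100 * Real.log p ^ 2 * (16 * (1 + W)) := by gcongr
    _ = _ := by ring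

lemma le_of_growth {D s u l p : ℝ} (hu : 0 < u) (hsu : s ^ 2 ≤ u)
    (hpu : p ^ 2 ≤ D * l ^ 2 * (s * u)) (hup : u ^ 2 ≤ D * (s ^ 2 * (p * l))) :
    u ≤ D ^ 6 * l ^ 8 := by
  have hcube : u ^ 3 ≤ D ^ 3 * s ^ 5 * l ^ 4 := by
    refine le_of_mul_le_mul_right ?_ hu
    calc u ^ 3 * u = (u ^ 2) ^ 2 := by ring
      _ ≤ (D * (s ^ 2 * (p * l))) ^ 2 := by gcongr
      _ = D ^ 2 * s ^ 4 * l ^ 2 * p ^ 2 := by ring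
      _ ≤ D ^ 2 * s ^ 4 * l ^ 2 * (D * l ^ 2 * (s * u)) := by gcongr
      _ = _ := by ring
  refine le_of_mul_le_mul_right ?_ (pow_pos hu 5)
  calc u * u ^ 5 = (u ^ 3) ^ 2 := by ring
    _ ≤ (D ^ 3 * s ^ 5 * l ^ 4) ^ 2 := by gcongr
    _ = D ^ 6 * l ^ 8 * (s ^ 2) ^ 5 := by ring
    _ ≤ D ^ 6 * l ^ 8 * u ^ 5 := by gcongr

lemma exists_forall_le_of_growth {D : ℝ} (hD : 1 ≤ D) : ∃ B : ℝ, ∀ (s u : ℝ) (p : ℕ),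
    1 ≤ s → s ^ 2 ≤ u → 2 ≤ p → (p : ℝ) ^ 2 ≤ D * Real.log p ^ 2 * (s * u) →
    u ^ 2 ≤ D * (s ^ 2 * (p * Real.log p)) → s ≤ B := by
  have hlittle := (Real.isLittleO_pow_log_id_atTop (n := 9)).bound
    (show (0 : ℝ) < 1 / (2 * D ^ 7) by positivity)
  obtain ⟨P, hP⟩ := eventually_atTop.1 hlittle
  refine ⟨D ^ 6 * Real.log P ^ 8, fun s u p hs hsu hp hpu hup => ?_⟩
  have hp' : (2 : ℝ) ≤ p := by exact_mod_cast hp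
  have hlog : 0 < Real.log p := Real.log_pos (by linarith)
  have hsu' : s ≤ u := (le_self_pow₀ hs two_ne_zero).trans hsu
  have hu0 : 0 < u := by linarith
  have hu := le_of_growth hu0 hsu hpu hup
  have hpl : (p : ℝ) ≤ D ^ 7 * Real.log p ^ 9 := by
    refine le_of_sq_le_sq ?_ (by positivity)
    calc (p : ℝ) ^ 2 ≤ D * Real.log p ^ 2 * (s * u) := hpu
      _ ≤ D * Real.log p ^ 2 * (D ^ 6 * Real.log p ^ 8 * (D ^ 6 * Real.log p ^ 8)) := by
          gcongr
          exact hsu'.trans hu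
      _ = D ^ 13 * Real.log p ^ 18 := by ring
      _ ≤ D ^ 14 * Real.log p ^ 18 := by gcongr; norm_num
      _ = _ := by ring
  have hpP : (p : ℝ) ≤ P := by
    by_contra! hlt
    have hsmall := hP p hlt.le
    rw [Real.norm_of_nonneg (by positivity), id, Real.norm_of_nonneg (by positivity), one_div,
      ← div_eq_inv_mul, le_div_iff₀ (by positivity)] at hsmall
    linarith
  calc s ≤ u := hsu'
    _ ≤ D ^ 6 * Real.log p ^ 8 := hu
    _ ≤ _ := by gcongr

/-! ### The theorem of Mahler and Manin -/

lemma norm_nome_pow_le {τ : ℂ} (hτ : 1 ≤ τ.im) (n : ℕ) : ‖𝕢 τ ^ n‖ ≤ Real.exp (-(2 * n)) := by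
  rw [norm_pow, norm_nome, ← Real.exp_nat_mul]
  gcongr
  nlinarith [Real.pi_gt_three, n.cast_nonneg (α := ℝ),
    mul_nonneg (n.cast_nonneg (α := ℝ)) (sub_nonneg.2 hτ)]

lemma norm_nome_pow_le_quarter {τ : ℂ} (hτ : 1 ≤ τ.im) {n : ℕ} (hn : 2 ≤ n) :
    ‖𝕢 τ ^ n‖ ≤ 1 / 4 := by
  have hn' : (2 : ℝ) ≤ n := by exact_mod_cast hn
  refine (norm_nome_pow_le hτ n).trans ?_
  rw [Real.exp_neg, one_div]
  gcongr
  linarith [Real.add_one_le_exp (2 * n : ℝ)]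

lemma exp_le_sub_norm_nome_pow_div {τ : ℂ} (hτ : 1 ≤ τ.im) {n : ℕ} (hn : 2 ≤ n) {r : ℝ}
    (hr : 1 / 2 ≤ r) : Real.exp n ≤ (r - ‖𝕢 τ ^ n‖) / ‖𝕢 τ ^ n‖ := by
  have hx0 : 0 < ‖𝕢 τ ^ n‖ := norm_pos_iff.2 (pow_ne_zero _ (nome_ne_zero τ))
  have hn' : (2 : ℝ) ≤ n := by exact_mod_cast hn
  have hexp : Real.exp n * Real.exp (-(2 * n)) ≤ 1 / 4 := by
    rw [← Real.exp_add, show (n : ℝ) + -(2 * n) = -n by ring, Real.exp_neg, one_div]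
    gcongr
    nlinarith [Real.quadratic_le_exp_of_nonneg n.cast_nonneg]
  rw [le_div_iff₀ hx0]
  calc Real.exp n * ‖𝕢 τ ^ n‖ ≤ Real.exp n * Real.exp (-(2 * n)) := by
        gcongr
        exact norm_nome_pow_le hτ n
    _ ≤ r - ‖𝕢 τ ^ n‖ := by linarith [norm_nome_pow_le_quarter hτ hn]

lemma nome_pow_injective {τ : ℂ} (hτ : 0 < τ.im) : Function.Injective fun n : ℕ => 𝕢 τ ^ n := by
  intro m n hmn
  have hnorm := congrArg norm hmn
  simp only [norm_pow] at hnorm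
  exact pow_right_injective₀ (norm_pos_iff.2 (nome_ne_zero τ)) (norm_nome_lt_one hτ).ne hnorm

namespace AuxiliaryFunction

variable {s : ℕ} (A : AuxiliaryFunction s) {τ : ℂ}

lemma sq_le_sqrt_order : (s : ℝ) ^ 2 ≤ √A.order :=
  sq_le_sqrt_of_two_mul_pow_four_le A.le_order

lemma exists_prime_quotient_ne_zero (hτ : 0 < τ.im) :
    ∃ p : ℕ, p.Prime ∧ A.quotient (𝕢 τ ^ p) ≠ 0 := by
  have hzero : A.quotient 0 ≠ 0 := norm_pos_iff.1 (zero_lt_one.trans_le A.one_le_norm)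
  have hcont : ContinuousAt A.quotient 0 :=
    (A.differentiableOn.differentiableAt (isOpen_ball.mem_nhds (by simp))).continuousAt
  have hlim : Tendsto (fun n : ℕ => 𝕢 τ ^ n) atTop (𝓝 0) :=
    tendsto_pow_atTop_nhds_zero_of_norm_lt_one (norm_nome_lt_one hτ)
  obtain ⟨N, hN⟩ := eventually_atTop.1 ((hcont.tendsto.comp hlim).eventually_ne hzero)
  obtain ⟨p, hpN, hp⟩ := Nat.exists_infinite_primes N
  exact ⟨p, hp, hN p hpN⟩

lemma sum_primes_le (hs : 2 ≤ s) (hτ : 1 ≤ τ.im) {p : ℕ}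
    (hzero : ∀ n < p, n.Prime → A.quotient (𝕢 τ ^ n) = 0) :
    ∑ n ∈ Finset.range p with n.Prime, (n : ℝ) ≤ 402 * (s * √A.order) := by
  classical
  have hδ := div_sqrt_le_half hs A.le_order
  have hδ0 : 0 < s / √(A.order : ℝ) := by
    have hs' : (2 : ℝ) ≤ s := by exact_mod_cast hs
    exact div_pos (by linarith) (by nlinarith [A.sq_le_sqrt_order])
  have hschwarz := norm_apply_zero_mul_prod_le (r := 1 - s / √A.order) (by linarith) (by linarith)
    (({n ∈ Finset.range p | n.Prime}).image fun n => 𝕢 τ ^ n) A.differentiableOn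
    (fun z hz => A.norm_le z hz.le) fun x hx => by
      obtain ⟨n, hn, rfl⟩ := Finset.mem_image.1 hx
      obtain ⟨hnp, hn⟩ := Finset.mem_filter.1 hn
      exact ⟨pow_ne_zero _ (nome_ne_zero τ),
        by linarith [norm_nome_pow_le_quarter hτ hn.two_le],
        hzero n (Finset.mem_range.1 hnp) hn⟩
  rw [Finset.prod_image (nome_pow_injective (by linarith)).injOn] at hschwarz
  refine Real.exp_le_exp.1 ?_
  calc Real.exp (∑ n ∈ Finset.range p with n.Prime, (n : ℝ))
      ≤ ∏ n ∈ Finset.range p with n.Prime,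
          (1 - s / √A.order - ‖𝕢 τ ^ n‖) / ‖𝕢 τ ^ n‖ := by
        rw [Real.exp_sum]
        exact Finset.prod_le_prod (fun _ _ => Real.exp_nonneg _) fun n hn =>
          exp_le_sub_norm_nome_pow_div hτ (Finset.mem_filter.1 hn).2.two_le (by linarith)
    _ ≤ _ := (le_mul_of_one_le_left ?_ A.one_le_norm).trans hschwarz
  exact Finset.prod_nonneg fun n hn => (Real.exp_nonneg _).trans <|
    exp_le_sub_norm_nome_pow_div hτ (Finset.mem_filter.1 hn).2.two_le (by linarith)

lemma norm_bivEval_le (hs : 2 ≤ s) (hτ : 1 ≤ τ.im) {p : ℕ} (hp : 2 ≤ p) :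
    ‖bivEval A.coeff (𝕢 τ ^ p) (kleinJ (p * τ))‖ ≤
      Real.exp (402 * (s * √A.order) - p * A.order) := by
  have hz0 : 𝕢 τ ^ p ≠ 0 := pow_ne_zero _ (nome_ne_zero τ)
  have hquarter := norm_nome_pow_le_quarter hτ hp
  have hsq : 4 ≤ s ^ 2 := by nlinarith
  have hdeg : 4 * s ^ 2 ≤ A.order := by nlinarith [A.le_order]
  have hexponent : A.order ≤ 2 * (A.order - 2 * s ^ 2) := by omega
  have heq : bivEval A.coeff (𝕢 τ ^ p) (kleinJ (p * τ)) =
      (𝕢 τ ^ p) ^ (A.order - 2 * s ^ 2) * A.quotient (𝕢 τ ^ p) := by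
    rw [kleinJ, nome_nat_mul]
    refine mul_left_cancel₀ (pow_ne_zero (2 * s ^ 2) hz0) ?_
    rw [A.eq_mul _ hz0 (by linarith), ← mul_assoc, pow_mul_pow_sub _ (by omega)]
  have hbound := A.norm_le (𝕢 τ ^ p) (by linarith [div_sqrt_le_half hs A.le_order])
  calc _ = ‖𝕢 τ ^ p‖ ^ (A.order - 2 * s ^ 2) * ‖A.quotient (𝕢 τ ^ p)‖ := by
        rw [heq, norm_mul, norm_pow]
    _ ≤ Real.exp (-(2 * p)) ^ (A.order - 2 * s ^ 2) * Real.exp (402 * (s * √A.order)) := by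
        gcongr
        exact norm_nome_pow_le hτ p
    _ = Real.exp (402 * (s * √A.order) - p * (2 * (A.order - 2 * s ^ 2) : ℕ)) := by
        rw [← Real.exp_nat_mul, ← Real.exp_add]
        push_cast
        ring_nf
    _ ≤ _ := by gcongr

end AuxiliaryFunction

/-- The two growth conditions on the first prime `p` for which the auxiliary function does not
vanish at `𝕢 τ ^ p`. -/
lemma exists_prime_growth {τ : ℂ} (hτ : 1 ≤ τ.im) (hq : IsAlgebraic ℚ (𝕢 τ))
    (hj : IsAlgebraic ℚ (kleinJ τ)) : ∃ C : ℝ, 0 ≤ C ∧ ∀ s : ℕ, 2 ≤ s → ∃ (p : ℕ) (u : ℝ),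
      p.Prime ∧ (s : ℝ) ^ 2 ≤ u ∧ ∑ n ∈ Finset.range p with n.Prime, (n : ℝ) ≤ 402 * (s * u) ∧
      p * u ^ 2 ≤ 402 * (s * u) + C * p * (202 * s ^ 3 + 2 * s ^ 2 * (p * Real.log p)) := by
  classical
  obtain ⟨C, hC0, hC⟩ := exists_one_le_norm_bivEval_mul_exp (by linarith) hq hj
  refine ⟨C, hC0, fun s hs => ?_⟩
  obtain ⟨A⟩ := nonempty_auxiliaryFunction hs
  have hex := A.exists_prime_quotient_ne_zero (τ := τ) (by linarith)
  set p := Nat.find hex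
  obtain ⟨hp, hne⟩ : p.Prime ∧ A.quotient (𝕢 τ ^ p) ≠ 0 := Nat.find_spec hex
  refine ⟨p, √A.order, hp, A.sq_le_sqrt_order, A.sum_primes_le hs hτ fun n hn hnp => ?_, ?_⟩
  · by_contra h
    exact Nat.find_min hex hn ⟨hnp, h⟩
  · have : Fact p.Prime := ⟨hp⟩
    have hz0 : 𝕢 τ ^ p ≠ 0 := pow_ne_zero _ (nome_ne_zero τ)
    have hbiv : bivEval A.coeff (𝕢 τ ^ p) (kleinJ (p * τ)) ≠ 0 := fun h => by
      have heq := A.eq_mul _ hz0 ((norm_nome_pow_le_quarter hτ hp.two_le).trans_lt (by norm_num))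
      rw [← nome_nat_mul, ← kleinJ, nome_nat_mul, h, mul_zero] at heq
      exact mul_ne_zero (pow_ne_zero _ hz0) hne heq.symm
    have hone := (hC p (Real.one_le_exp (by positivity)) A.abs_coeff_le hbiv).trans
      (mul_le_mul_of_nonneg_right (A.norm_bivEval_le hs hτ hp.two_le) (Real.exp_nonneg _))
    rw [Real.log_exp, ← Real.exp_add, Real.one_le_exp_iff] at hone
    push_cast at hone
    rw [Real.sq_sqrt (Nat.cast_nonneg _)]
    linarith

lemma sq_le_of_prime_growth {C s u p L : ℝ} (hC : 0 ≤ C) (hs : 0 < s)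
    (hsC : 2 * (402 + 202 * C) ≤ s) (hsu : s ^ 2 ≤ u) (hp : 1 ≤ p)
    (h : p * u ^ 2 ≤ 402 * (s * u) + C * p * (202 * s ^ 3 + 2 * s ^ 2 * L)) :
    u ^ 2 ≤ 4 * C * (s ^ 2 * L) := by
  have hu : 0 ≤ u := (sq_nonneg s).trans hsu
  have hsu_le : s * u ≤ u ^ 2 / s := by
    rw [le_div_iff₀ hs]
    nlinarith
  have hcube_le : s ^ 3 ≤ u ^ 2 / s := by
    rw [le_div_iff₀ hs]
    calc s ^ 3 * s = (s ^ 2) ^ 2 := by ring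
      _ ≤ u ^ 2 := by gcongr
  have habsorb : (402 + 202 * C) * (u ^ 2 / s) ≤ u ^ 2 / 2 := by
    rw [mul_div_assoc', div_le_iff₀ hs]
    nlinarith [sq_nonneg u]
  have hdiv : u ^ 2 ≤ 402 * (s * u) + C * (202 * s ^ 3 + 2 * s ^ 2 * L) := by
    refine le_of_mul_le_mul_left ?_ (zero_lt_one.trans_le hp)
    nlinarith [mul_nonneg (sub_nonneg.2 hp) (mul_nonneg hs.le hu)]
  nlinarith [mul_le_mul_of_nonneg_left hcube_le hC]

lemma not_isAlgebraic_kleinJ_of_one_le_im {τ : ℂ} (hτ : 1 ≤ τ.im) (hq : IsAlgebraic ℚ (𝕢 τ)) :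
    ¬ IsAlgebraic ℚ (kleinJ τ) := by
  intro hj
  obtain ⟨C, hC0, hC⟩ := exists_prime_growth hτ hq hj
  obtain ⟨B, hB⟩ := exists_forall_le_of_growth (D := 1600 * 403 + 4 * C) (by linarith)
  obtain ⟨s, hs⟩ := exists_nat_gt (max B (2 * (402 + 202 * C)))
  obtain ⟨hsB, hsC⟩ := max_lt_iff.1 hs
  have hs2 : (2 : ℝ) ≤ s := by linarith
  obtain ⟨p, u, hp, hsu, hsum, hup⟩ := hC s (by exact_mod_cast hs2)
  have hp' : (2 : ℝ) ≤ p := by exact_mod_cast hp.two_le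
  have hlog : 0 < Real.log p := Real.log_pos (by linarith)
  have hsu1 : 1 ≤ (s : ℝ) * u := by nlinarith
  refine hsB.not_ge (hB s u p (by linarith) hsu hp.two_le ?_ ?_)
  · calc (p : ℝ) ^ 2 ≤ 1600 * Real.log p ^ 2 *
          (1 + ∑ n ∈ Finset.range p with n.Prime, (n : ℝ)) := sq_le_sum_primes hp
      _ ≤ 1600 * Real.log p ^ 2 * (403 * (s * u)) := by
          gcongr
          linarith
      _ = 1600 * 403 * Real.log p ^ 2 * (s * u) := by ring
      _ ≤ (1600 * 403 + 4 * C) * Real.log p ^ 2 * (s * u) := by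
          gcongr
          linarith
  · refine (sq_le_of_prime_growth hC0 (by linarith) hsC.le hsu (by linarith) hup).trans ?_
    gcongr
    linarith

/-- Replacing `τ` by `p * τ` for a large prime `p` makes the nome as small as desired and, by the
modular equation, preserves the algebraicity of both values. -/
theorem transcendental_kleinJ {τ : ℂ} (hτ : 0 < τ.im) (hq : IsAlgebraic ℚ (𝕢 τ)) :
    Transcendental ℚ (kleinJ τ) := by
  intro hj
  obtain ⟨p, hp, hprime⟩ := Nat.exists_infinite_primes ⌈1 / τ.im⌉₊
  have : Fact p.Prime := ⟨hprime⟩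
  refine not_isAlgebraic_kleinJ_of_one_le_im (τ := p * τ) ?_ ?_ (isAlgebraic_kleinJ_nat_mul hτ hj)
  · have hp' : 1 / τ.im ≤ p := Nat.ceil_le.1 hp
    rw [div_le_iff₀ hτ] at hp'
    simpa using hp'
  · rw [nome_nat_mul]
    exact hq.pow p

/-! ### Transcendence of an eta quotient -/

section EtaQuotient

lemma isAlgebraic_of_cubic {a b d v : ℂ} (ha : IsAlgebraic ℚ a) (hb : IsAlgebraic ℚ b)
    (hd : IsAlgebraic ℚ d) (hd0 : d ≠ 0) (h : a * v ^ 3 + b * v ^ 2 + d = 0) :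
    IsAlgebraic ℚ v := by
  lift a to algebraicClosure ℚ ℂ using mem_algebraicClosure_iff.2 ha
  lift b to algebraicClosure ℚ ℂ using mem_algebraicClosure_iff.2 hb
  lift d to algebraicClosure ℚ ℂ using mem_algebraicClosure_iff.2 hd
  have : Algebra.IsAlgebraic ℚ (algebraicClosure ℚ ℂ) := algebraicClosure.isAlgebraic ℚ ℂ
  refine IsAlgebraic.restrictScalars ℚ (S := algebraicClosure ℚ ℂ)
    ⟨.C a * .X ^ 3 + .C b * .X ^ 2 + .C d, fun h0 => hd0 ?_, by simpa using h⟩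
  have hcoeff := congrArg (Polynomial.coeff · 0) h0
  exact congrArg Subtype.val (by simpa using hcoeff)

lemma isAlgebraic_jNome {z : ℂ} (h : IsAlgebraic ℚ (levelTwo z)) : IsAlgebraic ℚ (jNome z) := by
  have h256 : IsAlgebraic ℚ (256 : ℂ) := isAlgebraic_natCast 256
  exact ((isAlgebraic_one.add (h256.mul h)).pow 3).mul h.inv

/-- The product `∏ (1 + q ^ (2 n + 1)) (1 + q ^ (2 n + 2)) ^ 2` over `n ≥ 0`, an eta quotient up to
a power of `q`. -/
def etaQuotient (q : ℂ) : ℂ := oddProd (-q) * plusProd (q ^ 2) ^ 2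

variable {q : ℂ}

lemma oddProd_neg_mul_oddProd_mul_plusProd (hq : ‖q‖ < 1) :
    oddProd (-q) * oddProd q * plusProd (q ^ 2) = 1 := by
  rw [mul_comm (oddProd (-q)), oddProd_mul_oddProd_neg hq, mul_comm]
  exact plusProd_mul_oddProd (norm_sq_lt_one hq)

lemma etaQuotient_ne_zero (hq : ‖q‖ < 1) : etaQuotient q ≠ 0 :=
  mul_ne_zero (oddProd_ne_zero (by simpa using hq))
    (pow_ne_zero _ (plusProd_ne_zero (norm_sq_lt_one hq)))

lemma plusProd_sq_eq_etaQuotient_mul (hq : ‖q‖ < 1) :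
    plusProd (q ^ 2) = etaQuotient q * oddProd q := by
  rw [etaQuotient]
  linear_combination -plusProd (q ^ 2) * oddProd_neg_mul_oddProd_mul_plusProd hq

lemma oddProd_neg_eq_inv (hq : ‖q‖ < 1) :
    oddProd (-q) = (etaQuotient q * oddProd q ^ 2)⁻¹ := by
  refine eq_inv_of_mul_eq_one_left ?_
  rw [pow_two, ← mul_assoc (etaQuotient q), ← plusProd_sq_eq_etaQuotient_mul hq,
    ← oddProd_neg_mul_oddProd_mul_plusProd hq]
  ring

lemma oddProd_pow_sub_oddProd_neg_pow (hq0 : q ≠ 0) (hq : ‖q‖ < 1) :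
    2 ^ 12 * q ^ 3 * plusProd (q ^ 2) ^ 24 + oddProd q ^ 24 - oddProd (-q) ^ 24 = -48 * q := by
  obtain ⟨σ, hσ, rfl⟩ := exists_nome_eq hq0 hq
  have hτ : 0 < (2 * σ).im := by simpa using hσ
  have hhalf : 2 * σ / 2 = σ := by ring
  have hsum := weberTwo_add_weberOne_add_weberZero hτ
  rw [weberTwo_eq hτ, weberOne_eq hτ, weberZero_eq hτ, nome_eq_nome_half_sq, hhalf,
    levelTwo] at hsum
  rw [← hsum]
  field_simp
  ring

/-- The other two products are monomials in `oddProd q` and `etaQuotient q`, which turns the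
relation between the three into a cubic equation for `oddProd q ^ 24`. -/
lemma oddProd_pow_cubic (hq0 : q ≠ 0) (hq : ‖q‖ < 1) :
    (2 ^ 12 * q ^ 3 * etaQuotient q ^ 24 + 1) * (oddProd q ^ 24) ^ 3
      + 48 * q * (oddProd q ^ 24) ^ 2 + -(etaQuotient q ^ 24)⁻¹ = 0 := by
  have hf := etaQuotient_ne_zero hq
  have hβ := oddProd_ne_zero hq
  have h := oddProd_pow_sub_oddProd_neg_pow hq0 hq
  rw [plusProd_sq_eq_etaQuotient_mul hq, oddProd_neg_eq_inv hq] at h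
  field_simp at h ⊢
  linear_combination h

lemma isAlgebraic_levelTwo_sq (hq0 : q ≠ 0) (hq : ‖q‖ < 1) (hqalg : IsAlgebraic ℚ q)
    (hf : IsAlgebraic ℚ (etaQuotient q)) : IsAlgebraic ℚ (levelTwo (q ^ 2)) := by
  have h2 : IsAlgebraic ℚ (2 : ℂ) := isAlgebraic_natCast 2
  have h48 : IsAlgebraic ℚ (48 : ℂ) := isAlgebraic_natCast 48
  have hβ : IsAlgebraic ℚ (oddProd q ^ 24) :=
    isAlgebraic_of_cubic ((((h2.pow 12).mul (hqalg.pow 3)).mul (hf.pow 24)).add isAlgebraic_one)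
      (h48.mul hqalg) (hf.pow 24).inv.neg
      (neg_ne_zero.2 (inv_ne_zero (pow_ne_zero _ (etaQuotient_ne_zero hq))))
      (oddProd_pow_cubic hq0 hq)
  rw [levelTwo, plusProd_sq_eq_etaQuotient_mul hq, mul_pow]
  exact (hqalg.pow 2).mul ((hf.pow 24).mul hβ)

theorem transcendental_etaQuotient (hq0 : q ≠ 0) (hq : ‖q‖ < 1) (hqalg : IsAlgebraic ℚ q) :
    Transcendental ℚ (etaQuotient q) := by
  intro hf
  obtain ⟨τ, hτ, hτq⟩ := exists_nome_eq (pow_ne_zero 2 hq0) (norm_sq_lt_one hq)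
  refine transcendental_kleinJ hτ (hτq ▸ hqalg.pow 2) ?_
  rw [kleinJ, hτq]
  exact isAlgebraic_jNome (isAlgebraic_levelTwo_sq hq0 hq hqalg hf)

end EtaQuotient

/-! ### The Fibonacci product as an eta quotient -/

section Fibonacci

/-- The square `φ⁻² = (3 - √5) / 2` of the inverse golden ratio, the value of the nome that gives
the Fibonacci product. -/
def goldenNome : ℝ := (Real.goldenRatio ^ 2)⁻¹

local notation "Q" => goldenNome

lemma goldenNome_pos : 0 < Q := inv_pos.2 (pow_pos Real.goldenRatio_pos 2)

lemma goldenNome_lt_one : Q < 1 :=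
  inv_lt_one_of_one_lt₀ (one_lt_pow₀ Real.one_lt_goldenRatio two_ne_zero)

lemma one_sub_goldenNome_pow_pos {n : ℕ} (hn : n ≠ 0) : 0 < 1 - Q ^ n :=
  sub_pos.2 (pow_lt_one₀ goldenNome_pos.le goldenNome_lt_one hn)

lemma norm_goldenNome_lt_one : ‖(Q : ℂ)‖ < 1 := by
  rw [Complex.norm_real, Real.norm_of_nonneg goldenNome_pos.le]
  exact goldenNome_lt_one

lemma isAlgebraic_goldenRatio : IsAlgebraic ℚ Real.goldenRatio := by
  refine ⟨.X ^ 2 - .X - 1, fun h0 => ?_, by simp [Real.goldenRatio_sq]⟩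
  simpa using congrArg (Polynomial.coeff · 0) h0

lemma isAlgebraic_goldenNome : IsAlgebraic ℚ Q := (isAlgebraic_goldenRatio.pow 2).inv

lemma goldenRatio_pow_mul_goldenNome_pow (n : ℕ) :
    Real.goldenRatio ^ n * Q ^ n = Real.goldenRatio⁻¹ ^ n := by
  rw [← mul_pow, goldenNome, pow_two, mul_inv, mul_inv_cancel_left₀ Real.goldenRatio_ne_zero]

lemma fib_eq_of_even {n : ℕ} (hn : Even n) :
    (Nat.fib n : ℝ) = Real.goldenRatio ^ n * (1 - Q ^ n) / √5 := by
  rw [Real.coe_fib_eq, mul_sub, goldenRatio_pow_mul_goldenNome_pow, mul_one, Real.inv_goldenRatio,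
    hn.neg_pow]

lemma fib_eq_of_odd {n : ℕ} (hn : Odd n) :
    (Nat.fib n : ℝ) = Real.goldenRatio ^ n * (1 + Q ^ n) / √5 := by
  rw [Real.coe_fib_eq, mul_add, goldenRatio_pow_mul_goldenNome_pow, mul_one, Real.inv_goldenRatio,
    hn.neg_pow, sub_eq_add_neg]

/-- The left side is the `n`-th Lucas number. -/
lemma two_mul_fib_succ_sub_fib_of_even {n : ℕ} (hn : Even n) :
    2 * (Nat.fib (n + 1) : ℝ) - Nat.fib n = Real.goldenRatio ^ n * (1 + Q ^ n) := by
  have h5 : √(5 : ℝ) ≠ 0 := by positivity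
  have hφ : 2 * Real.goldenRatio = 1 + √5 := by rw [Real.goldenRatio]; ring
  have hψ : 2 * Real.goldenConj = 1 - √5 := by rw [Real.goldenConj]; ring
  rw [mul_add, goldenRatio_pow_mul_goldenNome_pow, mul_one, Real.inv_goldenRatio, hn.neg_pow,
    Real.coe_fib_eq, Real.coe_fib_eq, pow_succ, pow_succ, mul_div_assoc', ← sub_div,
    div_eq_iff h5]
  linear_combination Real.goldenRatio ^ n * hφ - Real.goldenConj ^ n * hψ

lemma cassini_of_even {n : ℕ} (hn : Even n) :
    (Nat.fib (n + 1) : ℝ) ^ 2 - Nat.fib n * Nat.fib (n + 1) - Nat.fib n ^ 2 = 1 := by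
  obtain ⟨j, rfl⟩ := hn.two_dvd
  induction j with
  | zero => simp
  | succ j ih =>
    have h1 : Nat.fib (2 * (j + 1)) = Nat.fib (2 * j) + Nat.fib (2 * j + 1) := Nat.fib_add_two
    have h2 : Nat.fib (2 * (j + 1) + 1) = Nat.fib (2 * j + 1) + Nat.fib (2 * (j + 1)) :=
      Nat.fib_add_two
    rw [h2, h1]
    push_cast
    linear_combination ih (even_two_mul j)

lemma F_eq_fib (n : ℕ) : F n = Nat.fib (n + 1) := by
  induction n using Nat.twoStepInduction with
  | zero => rfl
  | one => rfl
  | more n h1 h2 => rw [F, h1, h2, Nat.fib_add_two (n := n + 1), add_comm]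

/-- By Cassini's identity, adding `1` to each of the four denominators gives a product of two linear
forms. -/
lemma prod_four_factors_eq {a b : ℝ} (ha : 0 < a) (hab : a ≤ b) (h : b ^ 2 - a * b - a ^ 2 = 1) :
    (1 + 1 / (a * (2 * b - a))) * (1 + 1 / (a ^ 2 + b ^ 2)) * (1 + 1 / (2 * a * b + b ^ 2)) *
      (1 + 1 / (a ^ 2 + 2 * a * b + 2 * b ^ 2)) =
    (b - a) * b * (a + b) * (2 * b - a) * (a + 3 * b) /
      (a * (a ^ 2 + b ^ 2) * (a ^ 2 + 2 * a * b + 2 * b ^ 2)) := by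
  have hb : 0 < b := by linarith
  have h2 : 0 < 2 * b - a := by linarith
  have add_one_div {x y : ℝ} (hx : 0 < x) (hxy : x + 1 = y) : 1 + 1 / x = y / x := by
    rw [← hxy, add_div, div_self hx.ne']
  rw [add_one_div (y := (b - a) * (b + 2 * a)) (by positivity) (by linear_combination -h),
    add_one_div (y := b * (2 * b - a)) (by positivity) (by linear_combination -h),
    add_one_div (y := (a + b) * (2 * b - a)) (by positivity) (by linear_combination -h),
    add_one_div (y := b * (a + 3 * b)) (by positivity) (by linear_combination -h)]
  field_simp
  ring

lemma prod_four_fib_factors_eq {n : ℕ} (hn : Even n) (hn0 : n ≠ 0) :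
    (1 + 1 / (Nat.fib (2 * n) : ℝ)) * (1 + 1 / (Nat.fib (2 * n + 1) : ℝ)) *
      (1 + 1 / (Nat.fib (2 * n + 2) : ℝ)) * (1 + 1 / (Nat.fib (2 * n + 3) : ℝ)) =
    (Nat.fib (n + 1) - Nat.fib n : ℝ) * Nat.fib (n + 1) * Nat.fib (n + 2) *
      (2 * Nat.fib (n + 1) - Nat.fib n) * (2 * Nat.fib (n + 3) - Nat.fib (n + 2)) /
      (Nat.fib n * Nat.fib (2 * n + 1) * Nat.fib (2 * n + 3)) := by
  have ha : (0 : ℝ) < Nat.fib n := by exact_mod_cast Nat.fib_pos.2 (Nat.pos_of_ne_zero hn0)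
  have hab : (Nat.fib n : ℝ) ≤ Nat.fib (n + 1) := by exact_mod_cast Nat.fib_le_fib_succ
  have h2n : (Nat.fib (2 * n) : ℝ) = Nat.fib n * (2 * Nat.fib (n + 1) - Nat.fib n) := by
    rw [Nat.fib_two_mul, Nat.cast_mul, Nat.cast_sub (Nat.fib_le_fib_succ.trans (by omega))]
    push_cast
    rfl
  have h2n1 : (Nat.fib (2 * n + 1) : ℝ) = Nat.fib n ^ 2 + Nat.fib (n + 1) ^ 2 := by
    rw [Nat.fib_two_mul_add_one]; push_cast; ring
  have hkey := prod_four_factors_eq ha hab (cassini_of_even hn)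
  simp only [Nat.fib_add_two (n := 2 * n), Nat.fib_add_two (n := 2 * n + 1),
    Nat.fib_add_two (n := n), Nat.fib_add_two (n := n + 1), Nat.cast_add, h2n, h2n1]
  convert hkey using 2 <;> ring

lemma prod_four_fib_factors_eq_goldenNome {n : ℕ} (hn : Even n) (hn0 : n ≠ 0) :
    (1 + 1 / (Nat.fib (2 * n) : ℝ)) * (1 + 1 / (Nat.fib (2 * n + 1) : ℝ)) *
      (1 + 1 / (Nat.fib (2 * n + 2) : ℝ)) * (1 + 1 / (Nat.fib (2 * n + 3) : ℝ)) =
    (1 + Q ^ (n - 1)) * (1 + Q ^ (n + 1)) * (1 - Q ^ (n + 2)) * (1 + Q ^ n) * (1 + Q ^ (n + 2)) /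
      ((1 - Q ^ n) * (1 + Q ^ (2 * n + 1)) * (1 + Q ^ (2 * n + 3))) := by
  obtain ⟨m, rfl⟩ := Nat.exists_eq_add_one_of_ne_zero hn0
  have hm : Odd m := by simpa [parity_simps] using hn
  have hQ := goldenNome_pos
  have := Real.goldenRatio_pos
  have hden := one_sub_goldenNome_pow_pos hn0
  have : (0 : ℝ) < √5 := by positivity
  have hsub : (Nat.fib (m + 2) - Nat.fib (m + 1) : ℝ) = Nat.fib m := by
    rw [Nat.fib_add_two]; push_cast; ring
  have hlucas : 2 * (Nat.fib (m + 1 + 3) : ℝ) - Nat.fib (m + 1 + 2) =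
      Real.goldenRatio ^ (m + 1 + 2) * (1 + Q ^ (m + 1 + 2)) :=
    two_mul_fib_succ_sub_fib_of_even (hn.add even_two)
  rw [prod_four_fib_factors_eq hn hn0, hsub, two_mul_fib_succ_sub_fib_of_even hn,
    hlucas, fib_eq_of_even hn, fib_eq_of_even (hn.add even_two), fib_eq_of_odd hm,
    fib_eq_of_odd hn.add_one, fib_eq_of_odd (n := 2 * (m + 1) + 1) ⟨m + 1, rfl⟩,
    fib_eq_of_odd (n := 2 * (m + 1) + 3) ⟨m + 2, by ring⟩,
    div_eq_div_iff (by positivity) (by positivity), Nat.add_sub_cancel]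
  field_simp
  ring

/-- The partial products of `oddProd (-Q)`. -/
def oddPartial (K : ℕ) : ℝ := ∏ n ∈ Finset.range K, (1 + Q ^ (2 * n + 1))

/-- The partial products of `plusProd (Q ^ 2)`. -/
def evenPartial (K : ℕ) : ℝ := ∏ n ∈ Finset.range K, (1 + Q ^ (2 * n + 2))

lemma oddPartial_succ (K : ℕ) : oddPartial (K + 1) = oddPartial K * (1 + Q ^ (2 * K + 1)) :=
  Finset.prod_range_succ _ _

lemma evenPartial_succ (K : ℕ) : evenPartial (K + 1) = evenPartial K * (1 + Q ^ (2 * K + 2)) :=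
  Finset.prod_range_succ _ _

lemma oddPartial_pos (K : ℕ) : 0 < oddPartial K := by
  have := goldenNome_pos
  exact Finset.prod_pos fun n _ => by positivity

/-- The algebraic factor between the Fibonacci product and the eta quotient at `Q`. -/
def etaFactor : ℝ := 3 * (1 + Q ^ 3) / ((1 - Q ^ 2) * (1 + Q ^ 2))

lemma etaFactor_ne_zero : etaFactor ≠ 0 := by
  have hQ := goldenNome_pos
  have hQ2 := one_sub_goldenNome_pow_pos two_ne_zero
  rw [etaFactor]
  positivity

lemma isAlgebraic_etaFactor : IsAlgebraic ℚ etaFactor := by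
  have hQ := isAlgebraic_goldenNome
  have h3 : IsAlgebraic ℚ (3 : ℝ) := isAlgebraic_natCast 3
  exact (h3.mul (isAlgebraic_one.add (hQ.pow 3))).mul
    ((isAlgebraic_one.sub (hQ.pow 2)).mul (isAlgebraic_one.add (hQ.pow 2))).inv

lemma prod_Icc_one_add_one_div_F (K : ℕ) :
    ∏ n ∈ Finset.Icc 1 (4 * K + 2), (1 + 1 / (F n : ℝ)) =
      etaFactor * (oddPartial K * oddPartial (K + 1) * (evenPartial K * evenPartial (K + 1)) *
        (1 - Q ^ (2 * K + 2)) / oddPartial (2 * K + 2)) := by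
  have hQ := goldenNome_pos
  induction K with
  | zero =>
    have hQ2 := one_sub_goldenNome_pow_pos two_ne_zero
    simp only [mul_zero, zero_add, one_div, Nat.reduceAdd, Nat.one_le_ofNat,
      Finset.prod_Icc_succ_top, Finset.Icc_self, Finset.prod_singleton, F, Nat.cast_one, inv_one,
      Nat.cast_ofNat, etaFactor, oddPartial, evenPartial, Finset.prod_range_succ,
      Finset.prod_range_zero, pow_one, one_mul, mul_one]
    field_simp
    norm_num
  | succ K ih =>
    have hQK := one_sub_goldenNome_pow_pos (n := 2 * K + 2) (by omega)
    have := oddPartial_pos (2 * K + 2)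
    have hstep : ∏ n ∈ Finset.Icc 1 (4 * (K + 1) + 2), (1 + 1 / (F n : ℝ)) =
        (∏ n ∈ Finset.Icc 1 (4 * K + 2), (1 + 1 / (F n : ℝ))) *
        ((1 + 1 / (F (4 * K + 3) : ℝ)) * (1 + 1 / (F (4 * K + 4) : ℝ)) *
        (1 + 1 / (F (4 * K + 5) : ℝ)) * (1 + 1 / (F (4 * K + 6) : ℝ))) := by
      simp only [show 4 * (K + 1) + 2 = 4 * K + 2 + 1 + 1 + 1 + 1 by ring,
        Finset.prod_Icc_succ_top (Nat.le_add_left 1 _)]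
      ring
    have hfour := prod_four_fib_factors_eq_goldenNome (n := 2 * K + 2) ⟨K + 1, by ring⟩ (by omega)
    rw [show 2 * (2 * K + 2) = 4 * K + 4 by ring] at hfour
    rw [hstep, ih]
    simp only [F_eq_fib]
    rw [hfour, show 2 * (K + 1) + 2 = 2 * K + 2 + 1 + 1 by ring]
    simp only [oddPartial_succ, evenPartial_succ, show 2 * K + 2 - 1 = 2 * K + 1 by omega]
    field_simp
    ring

lemma tendsto_oddPartial : Tendsto (fun K => (oddPartial K : ℂ)) atTop (𝓝 (oddProd (-Q))) := by
  refine (multipliable_intProd (ε := -1) (by simp) (e := fun n => 2 * n + 1)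
    (fun _ => by omega) (z := -(Q : ℂ)) (by simpa using norm_goldenNome_lt_one)
    ).hasProd.tendsto_prod_nat.congr fun K => ?_
  rw [oddPartial, Complex.ofReal_prod]
  refine Finset.prod_congr rfl fun n _ => ?_
  rw [Odd.neg_pow ⟨n, rfl⟩]
  push_cast
  ring

lemma tendsto_evenPartial :
    Tendsto (fun K => (evenPartial K : ℂ)) atTop (𝓝 (plusProd ((Q : ℂ) ^ 2))) := by
  refine (multipliable_intProd (ε := 1) (by simp) (e := fun n => n + 1) (fun _ => le_rfl)
    (norm_sq_lt_one norm_goldenNome_lt_one)).hasProd.tendsto_prod_nat.congr fun K => ?_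
  rw [evenPartial, Complex.ofReal_prod]
  refine Finset.prod_congr rfl fun n _ => ?_
  rw [← pow_mul]
  push_cast
  ring

theorem tendsto_prod_one_add_one_div_F :
    Tendsto (fun K => ((∏ n ∈ Finset.Icc 1 (4 * K + 2), (1 + 1 / (F n : ℝ)) : ℝ) : ℂ)) atTop
      (𝓝 (etaFactor * etaQuotient Q)) := by
  have hα : oddProd (-(Q : ℂ)) ≠ 0 := oddProd_ne_zero (by simpa using norm_goldenNome_lt_one)
  have hsub : Tendsto (fun K : ℕ => 2 * K + 2) atTop atTop :=
    tendsto_atTop_mono (fun K => by simp only [id]; omega) tendsto_id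
  have hpow : Tendsto (fun K : ℕ => (Q : ℂ) ^ (2 * K + 2)) atTop (𝓝 0) :=
    (tendsto_pow_atTop_nhds_zero_of_norm_lt_one norm_goldenNome_lt_one).comp hsub
  have hodd := tendsto_oddPartial
  have heven := tendsto_evenPartial
  have hlim := ((((hodd.mul ((tendsto_add_atTop_iff_nat 1).2 hodd)).mul
    (heven.mul ((tendsto_add_atTop_iff_nat 1).2 heven))).mul (hpow.const_sub 1)).div
    (hodd.comp hsub) hα).const_mul (etaFactor : ℂ)
  have hval : oddProd (-(Q : ℂ)) * oddProd (-Q) *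
      (plusProd ((Q : ℂ) ^ 2) * plusProd ((Q : ℂ) ^ 2)) * (1 - 0) / oddProd (-Q) =
      etaQuotient Q := by
    rw [etaQuotient]; field_simp; ring
  rw [hval] at hlim
  refine hlim.congr fun K => ?_
  rw [prod_Icc_one_add_one_div_F]
  push_cast
  rfl

end Fibonacci

end FibonacciProduct

open FibonacciProduct in
theorem xi1_transcendental (ξ1 : ℝ)
    (h1 : Filter.Tendsto (fun N : ℕ => ∏ n ∈ Finset.Icc 1 N, (1 + 1 / (F n : ℝ)))
      Filter.atTop (nhds ξ1)) :
    Transcendental ℚ ξ1 := by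
  have hsub : Filter.Tendsto (fun K : ℕ => 4 * K + 2) Filter.atTop Filter.atTop :=
    Filter.tendsto_atTop_mono (fun K => by simp only [id]; omega) Filter.tendsto_id
  have hξ : (ξ1 : ℂ) = etaFactor * etaQuotient goldenNome :=
    tendsto_nhds_unique ((Complex.continuous_ofReal.tendsto ξ1).comp (h1.comp hsub))
      tendsto_prod_one_add_one_div_F
  intro halg
  have heta : etaQuotient goldenNome = ((ξ1 * etaFactor⁻¹ : ℝ) : ℂ) := by
    push_cast
    rw [hξ, mul_right_comm, mul_inv_cancel₀ (by exact_mod_cast etaFactor_ne_zero), one_mul]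
  refine transcendental_etaQuotient (by exact_mod_cast goldenNome_pos.ne') norm_goldenNome_lt_one
    (isAlgebraic_goldenNome.algebraMap (A := ℂ)) ?_
  rw [heta]
  exact (halg.mul isAlgebraic_etaFactor.inv).algebraMap (A := ℂ)
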